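/- arXiv:2011.12324 — 2 statements merged into one kernel-verified Lean document; each statement's English description precedes it below -/
import Mathlib

section
/- Let (R, 𝔪, k) be a regular local ring of dimension 3, I = (φ_1, …, φ_n) with pd_R(R/I) = 3 of Tor-algebra class H(p,q), and F_• a minimal DG-algebra free resolution of R/I in standard form with f_1^i ·_F f_1^j ∈ 𝔪² F_2 for all i, j ≠ p+1. If moreover d_2(F_2) ⊆ 𝔪² F_1, then for every index set σ = (σ_1 < ⋯ < σ_t) with p+1 ∉ σ, the trimmed ideal tm_σ(I) is either Golod or defines a ring of Tor-algebra class H(p − |σ ∩ [p]|, q). -/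
open IsLocalRing

section TorAlgebraClasses

open IsLocalRing

variable (R : Type) [CommRing R] [IsLocalRing R]

/-- The trimming operation on ideals: for `I = (φ 0, …, φ (n-1))` and an index set
`σ`, `tm_σ(I) = (φ i : i ∉ σ) + 𝔪·(φ j : j ∈ σ)`. -/
def trimIdeal {n : ℕ} (φ : Fin n → R) (σ : Finset (Fin n)) : Ideal R :=
  Ideal.span (φ '' {i | i ∉ σ}) ⊔ maximalIdeal R * Ideal.span (φ '' {i | i ∈ σ})

/-- `R/J` has projective dimension `3` and Tor-algebra class `G(r)`
(Avramov–Kustin–Miller normal form): encoded by the existence of a minimal free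
resolution `0 → R^{n3} → R^{n2} → R^{n1} → R` of `R/J` carrying an associative
DG-algebra structure whose induced multiplication on `Tor^R_•(R/J, k) = F̄_•`
is, with respect to the standard bases, in the `G(r)` normal form:
`f̄₁ⁱ f̄₂ⁱ = f̄₃¹` for `1 ≤ i ≤ r` and all other products of basis elements vanish. -/
def HasTorClassG (J : Ideal R) (r : ℕ) : Prop :=
  ∃ (n1 n2 n3 : ℕ) (h3 : 0 < n3), r ≤ n1 ∧ r ≤ n2 ∧
  ∃ (d1 : (Fin n1 → R) →ₗ[R] R) (d2 : (Fin n2 → R) →ₗ[R] (Fin n1 → R))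
    (d3 : (Fin n3 → R) →ₗ[R] (Fin n2 → R))
    (m11 : (Fin n1 → R) →ₗ[R] (Fin n1 → R) →ₗ[R] (Fin n2 → R))
    (m12 : (Fin n1 → R) →ₗ[R] (Fin n2 → R) →ₗ[R] (Fin n3 → R)),
    -- minimal free resolution of R/J
    LinearMap.range d1 = J ∧
    LinearMap.ker d1 = LinearMap.range d2 ∧
    LinearMap.ker d2 = LinearMap.range d3 ∧
    LinearMap.ker d3 = ⊥ ∧
    (∀ v, d1 v ∈ maximalIdeal R) ∧
    (∀ v, d2 v ∈ maximalIdeal R • (⊤ : Submodule R (Fin n1 → R))) ∧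
    (∀ v, d3 v ∈ maximalIdeal R • (⊤ : Submodule R (Fin n2 → R))) ∧
    -- DG-algebra axioms
    (∀ a b, d2 (m11 a b) = d1 a • b - d1 b • a) ∧
    (∀ a, m11 a a = 0) ∧ (∀ a b, m11 a b = - m11 b a) ∧
    (∀ a z, d3 (m12 a z) = d1 a • z - m11 a (d2 z)) ∧
    (∀ a b c, m12 c (m11 a b) = m12 a (m11 b c)) ∧
    -- G(r) normal form for the induced products on `F ⊗ k`
    (∀ a b : Fin n1, m11 (Pi.single a 1) (Pi.single b 1) ∈
      maximalIdeal R • (⊤ : Submodule R (Fin n2 → R))) ∧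
    (∀ (a : Fin n1) (b : Fin n2),
      m12 (Pi.single a 1) (Pi.single b 1) -
        (if (a : ℕ) = (b : ℕ) ∧ (a : ℕ) < r then Pi.single (⟨0, h3⟩ : Fin n3) 1 else 0) ∈
      maximalIdeal R • (⊤ : Submodule R (Fin n3 → R)))

/-- `R/J` has projective dimension `3` and Tor-algebra class `H(p,q)`:
`f̄₁^{p+1} f̄₁ⁱ = f̄₂ⁱ` for `1 ≤ i ≤ p`, `f̄₁^{p+1} f̄₂^{p+i} = f̄₃ⁱ` for `1 ≤ i ≤ q`,
and all other products of basis elements vanish (0-based indices below). -/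
def HasTorClassH (J : Ideal R) (p q : ℕ) : Prop :=
  ∃ (n1 n2 n3 : ℕ) (hp : p < n1) (hpq : p + q ≤ n2) (hq3 : q ≤ n3),
  ∃ (d1 : (Fin n1 → R) →ₗ[R] R) (d2 : (Fin n2 → R) →ₗ[R] (Fin n1 → R))
    (d3 : (Fin n3 → R) →ₗ[R] (Fin n2 → R))
    (m11 : (Fin n1 → R) →ₗ[R] (Fin n1 → R) →ₗ[R] (Fin n2 → R))
    (m12 : (Fin n1 → R) →ₗ[R] (Fin n2 → R) →ₗ[R] (Fin n3 → R)),
    LinearMap.range d1 = J ∧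
    LinearMap.ker d1 = LinearMap.range d2 ∧
    LinearMap.ker d2 = LinearMap.range d3 ∧
    LinearMap.ker d3 = ⊥ ∧
    (∀ v, d1 v ∈ maximalIdeal R) ∧
    (∀ v, d2 v ∈ maximalIdeal R • (⊤ : Submodule R (Fin n1 → R))) ∧
    (∀ v, d3 v ∈ maximalIdeal R • (⊤ : Submodule R (Fin n2 → R))) ∧
    (∀ a b, d2 (m11 a b) = d1 a • b - d1 b • a) ∧
    (∀ a, m11 a a = 0) ∧ (∀ a b, m11 a b = - m11 b a) ∧
    (∀ a z, d3 (m12 a z) = d1 a • z - m11 a (d2 z)) ∧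
    (∀ a b c, m12 c (m11 a b) = m12 a (m11 b c)) ∧
    -- H(p,q) normal form for the induced products on `F ⊗ k`
    (∀ b : Fin n1, ∀ hb : (b : ℕ) < p,
      m11 (Pi.single (⟨p, hp⟩ : Fin n1) 1) (Pi.single b 1) -
        Pi.single (⟨(b : ℕ), by omega⟩ : Fin n2) 1 ∈
      maximalIdeal R • (⊤ : Submodule R (Fin n2 → R))) ∧
    (∀ a b : Fin n1, ¬((a : ℕ) = p ∧ (b : ℕ) < p) → ¬((b : ℕ) = p ∧ (a : ℕ) < p) →
      m11 (Pi.single a 1) (Pi.single b 1) ∈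
        maximalIdeal R • (⊤ : Submodule R (Fin n2 → R))) ∧
    (∀ b : Fin n2, ∀ hb1 : p ≤ (b : ℕ), ∀ hb2 : (b : ℕ) < p + q,
      m12 (Pi.single (⟨p, hp⟩ : Fin n1) 1) (Pi.single b 1) -
        Pi.single (⟨(b : ℕ) - p, by omega⟩ : Fin n3) 1 ∈
      maximalIdeal R • (⊤ : Submodule R (Fin n3 → R))) ∧
    (∀ (a : Fin n1) (b : Fin n2), ¬((a : ℕ) = p ∧ p ≤ (b : ℕ) ∧ (b : ℕ) < p + q) →
      m12 (Pi.single a 1) (Pi.single b 1) ∈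
        maximalIdeal R • (⊤ : Submodule R (Fin n3 → R)))

/-- `R/J` is a Golod ring: in the grade-3 setting of the paper this is equivalent
(Avramov–Kustin–Miller) to the multiplication on `Tor_+^R(R/J,k)` being trivial,
which is how it is encoded here: some minimal free resolution of `R/J` of length `≤ 3`
carries a DG-algebra structure all of whose products lie in `𝔪 • F`. -/
def IsGolodQuotient (J : Ideal R) : Prop :=
  ∃ (n1 n2 n3 : ℕ)
    (d1 : (Fin n1 → R) →ₗ[R] R) (d2 : (Fin n2 → R) →ₗ[R] (Fin n1 → R))
    (d3 : (Fin n3 → R) →ₗ[R] (Fin n2 → R))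
    (m11 : (Fin n1 → R) →ₗ[R] (Fin n1 → R) →ₗ[R] (Fin n2 → R))
    (m12 : (Fin n1 → R) →ₗ[R] (Fin n2 → R) →ₗ[R] (Fin n3 → R)),
    LinearMap.range d1 = J ∧
    LinearMap.ker d1 = LinearMap.range d2 ∧
    LinearMap.ker d2 = LinearMap.range d3 ∧
    LinearMap.ker d3 = ⊥ ∧
    (∀ v, d1 v ∈ maximalIdeal R) ∧
    (∀ v, d2 v ∈ maximalIdeal R • (⊤ : Submodule R (Fin n1 → R))) ∧
    (∀ v, d3 v ∈ maximalIdeal R • (⊤ : Submodule R (Fin n2 → R))) ∧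
    (∀ a b, d2 (m11 a b) = d1 a • b - d1 b • a) ∧
    (∀ a, m11 a a = 0) ∧ (∀ a b, m11 a b = - m11 b a) ∧
    (∀ a z, d3 (m12 a z) = d1 a • z - m11 a (d2 z)) ∧
    (∀ a b c, m12 c (m11 a b) = m12 a (m11 b c)) ∧
    -- trivial Tor multiplication
    (∀ a b, m11 a b ∈ maximalIdeal R • (⊤ : Submodule R (Fin n2 → R))) ∧
    (∀ a z, m12 a z ∈ maximalIdeal R • (⊤ : Submodule R (Fin n3 → R)))

end TorAlgebraClasses


section TrimHelpers

/-- Linear maps preserve `I • ⊤`. -/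
lemma th_map_mem {R M N : Type*} [CommRing R] [AddCommGroup M] [AddCommGroup N] [Module R M]
    [Module R N] (I : Ideal R) (f : M →ₗ[R] N) {v : M} (hv : v ∈ I • (⊤ : Submodule R M)) :
    f v ∈ I • (⊤ : Submodule R N) := by
  have h := Submodule.mem_map_of_mem (f := f) hv
  rw [Submodule.map_smul''] at h
  exact Submodule.smul_mono le_rfl le_top h

/-- A map with values in `J • ⊤` sends `I • ⊤` to `(I * J) • ⊤`. -/
lemma th_map_mem_mul {R M N : Type*} [CommRing R] [AddCommGroup M] [AddCommGroup N] [Module R M]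
    [Module R N] (I J : Ideal R) (f : M →ₗ[R] N) (hf : ∀ v, f v ∈ J • (⊤ : Submodule R N))
    {v : M} (hv : v ∈ I • (⊤ : Submodule R M)) :
    f v ∈ (I * J) • (⊤ : Submodule R N) := by
  have h := Submodule.mem_map_of_mem (f := f) hv
  rw [Submodule.map_smul''] at h
  rw [Submodule.mul_smul]
  refine Submodule.smul_mono le_rfl ?_ h
  rintro _ ⟨w, -, rfl⟩
  exact hf w

lemma th_prod_mem {R M N : Type*} [CommRing R] [AddCommGroup M] [AddCommGroup N] [Module R M]
    [Module R N] (I : Ideal R) {v : M} {w : N} (hv : v ∈ I • (⊤ : Submodule R M))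
    (hw : w ∈ I • (⊤ : Submodule R N)) : (v, w) ∈ I • (⊤ : Submodule R (M × N)) := by
  have h1 := th_map_mem I (LinearMap.inl R M N) hv
  have h2 := th_map_mem I (LinearMap.inr R M N) hw
  simpa using add_mem h1 h2

lemma th_pi_mem {R ι : Type*} [CommRing R] [Fintype ι] (I : Ideal R) (v : ι → R) :
    v ∈ I • (⊤ : Submodule R (ι → R)) ↔ ∀ i, v i ∈ I := by
  classical
  constructor
  · intro h i
    simpa using th_map_mem I (LinearMap.proj i : (ι → R) →ₗ[R] R) h
  · intro h
    rw [pi_eq_sum_univ v]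
    exact sum_mem fun i _ => Submodule.smul_mem_smul (h i) trivial

lemma th_smul_mem {R M : Type*} [CommRing R] [AddCommGroup M] [Module R M] (I : Ideal R) {r : R}
    (hr : r ∈ I) (v : M) : r • v ∈ I • (⊤ : Submodule R M) :=
  Submodule.smul_mem_smul hr trivial

lemma th_lift {R P M N ι : Type*} [CommRing R] [AddCommGroup M] [AddCommGroup N] [Module R M]
    [Module R N] [AddCommGroup P] [Module R P] (b : Module.Basis ι R P) (f : M →ₗ[R] N)
    (g : P →ₗ[R] N) (S : Submodule R M) (h : ∀ y, ∃ m ∈ S, f m = g y) :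
    ∃ l : P →ₗ[R] M, (∀ y, f (l y) = g y) ∧ ∀ y, l y ∈ S := by
  choose m hm hfm using h
  refine ⟨b.constr R (fun i => m (b i)), fun y => ?_, fun y => ?_⟩
  · have : f ∘ₗ b.constr R (fun i => m (b i)) = g := b.ext fun i => by simp [hfm]
    exact LinearMap.congr_fun this y
  · have : (b.constr R (fun i => m (b i))).range ≤ S := by
      rw [Module.Basis.constr_range, Submodule.span_le]
      rintro _ ⟨i, rfl⟩
      exact hm _
    exact this ⟨y, rfl⟩

lemma th_bilin_lift {R A B M N : Type*} [CommRing R] [AddCommGroup M] [AddCommGroup N] [Module R M]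
    [Module R N] [AddCommGroup A] [Module R A] [AddCommGroup B] [Module R B]
    (f : M →ₗ[R] N) (hf : ∀ m, f m = 0 → m = 0) (g : A →ₗ[R] B →ₗ[R] N)
    (h : ∀ a b, ∃ m, f m = g a b) :
    ∃ l : A →ₗ[R] B →ₗ[R] M, ∀ a b, f (l a b) = g a b := by
  have hinj : Function.Injective f := (injective_iff_map_eq_zero f).2 hf
  choose m hm using h
  exact ⟨LinearMap.mk₂ R m (fun _ _ _ => hinj (by simp [hm])) (fun _ _ _ => hinj (by simp [hm]))
    (fun _ _ _ => hinj (by simp [hm])) (fun _ _ _ => hinj (by simp [hm])), fun a b => by simp [hm]⟩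

lemma th_alt_lift {R A M N ι : Type*} [CommRing R] [AddCommGroup M] [AddCommGroup N] [Module R M]
    [Module R N] [AddCommGroup A] [Module R A] [Fintype ι] (b₀ : Module.Basis ι R A)
    (f : M →ₗ[R] N) (g : A →ₗ[R] A →ₗ[R] N) (halt : ∀ a, g a a = 0)
    (h : ∀ a b, ∃ m, f m = g a b) :
    ∃ l : A →ₗ[R] A →ₗ[R] M, (∀ a b, f (l a b) = g a b) ∧ ∀ a, l a a = 0 := by
  let b := b₀.reindex (Fintype.equivFin ι)
  choose m hm using h
  let U : A →ₗ[R] A →ₗ[R] M := b.constr R (fun i => b.constr R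
    (fun j => if i < j then m (b i) (b j) else 0))
  have hU : ∀ i j, U (b i) (b j) = if i < j then m (b i) (b j) else 0 := fun i j => by
    simp only [U, Module.Basis.constr_basis]
  have hskew : ∀ x y, g x y = - g y x := fun x y => by
    have := halt (x + y)
    simp only [map_add, LinearMap.add_apply, halt, zero_add, add_zero] at this
    exact eq_neg_of_add_eq_zero_right this
  refine ⟨U - U.flip, fun x y => ?_, fun x => by simp⟩
  have : (U - U.flip).compr₂ f = g := by
    refine LinearMap.ext_basis b b fun i j => ?_
    simp only [LinearMap.compr₂_apply, LinearMap.sub_apply, LinearMap.flip_apply, hU]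
    rcases lt_trichotomy i j with hij | rfl | hij
    · simp [hij, hij.not_gt, hm]
    · simp [halt]
    · simp [hij, hij.not_gt, hm, hskew (b i) (b j)]
  exact LinearMap.congr_fun₂ this x y

lemma th_extend {κ ι : Type*} [Fintype κ] [Fintype ι] (s : κ → ι) (hs : Function.Injective s)
    (k n : ℕ) (ek : κ ≃ Fin k) (hn : Fintype.card ι = n) :
    ∃ hk : k ≤ n, ∃ e : Fin n ≃ ι, ∀ i : κ, e (Fin.castLE hk (ek i)) = s i := by
  classical
  have hk : k ≤ n := by
    have := Fintype.card_le_of_injective s hs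
    rw [Fintype.card_congr ek, Fintype.card_fin, hn] at this
    exact this
  refine ⟨hk, ?_⟩
  let e0 : Fin n ≃ ι := (Fintype.equivFinOfCardEq hn).symm
  let f1 : κ → ι := fun i => e0 (Fin.castLE hk (ek i))
  have hf1 : Function.Injective f1 :=
    e0.injective.comp ((Fin.castLE_injective hk).comp ek.injective)
  let π : Equiv.Perm ι := ((Equiv.ofInjective f1 hf1).symm.trans
    (Equiv.ofInjective s hs)).extendSubtype
  refine ⟨e0.trans π, fun i => ?_⟩
  have h1 : f1 i ∈ Set.range f1 := ⟨i, rfl⟩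
  change π (f1 i) = s i
  rw [Equiv.extendSubtype_apply_of_mem _ _ h1]
  have : (⟨f1 i, h1⟩ : Set.range f1) = Equiv.ofInjective f1 hf1 i := rfl
  rw [this, Equiv.trans_apply, Equiv.symm_apply_apply, Equiv.ofInjective_apply]

end TrimHelpers

section TrimPackaging

open IsLocalRing

lemma th_pack0 {R : Type} [CommRing R] [IsLocalRing R]
    {M1 M2 M3 : Type*} [AddCommGroup M1] [Module R M1] [AddCommGroup M2] [Module R M2]
    [AddCommGroup M3] [Module R M3]
    (n1 n2 n3 p q : ℕ) (hp : p < n1) (hpq : p + q ≤ n2) (hq3 : q ≤ n3)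
    (b1 : Module.Basis (Fin n1) R M1) (b2 : Module.Basis (Fin n2) R M2)
    (b3 : Module.Basis (Fin n3) R M3)
    (d1 : M1 →ₗ[R] R) (d2 : M2 →ₗ[R] M1) (d3 : M3 →ₗ[R] M2)
    (m11 : M1 →ₗ[R] M1 →ₗ[R] M2) (m12 : M1 →ₗ[R] M2 →ₗ[R] M3)
    (hex1 : ∀ v, d1 v = 0 ↔ ∃ w, d2 w = v)
    (hex2 : ∀ v, d2 v = 0 ↔ ∃ w, d3 w = v)
    (hex3 : ∀ v, d3 v = 0 → v = 0)
    (hmin1 : ∀ v, d1 v ∈ maximalIdeal R)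
    (hmin2 : ∀ v, d2 v ∈ maximalIdeal R • (⊤ : Submodule R M1))
    (hmin3 : ∀ v, d3 v ∈ maximalIdeal R • (⊤ : Submodule R M2))
    (hleib1 : ∀ a b, d2 (m11 a b) = d1 a • b - d1 b • a)
    (halt : ∀ a, m11 a a = 0)
    (hleib2 : ∀ a z, d3 (m12 a z) = d1 a • z - m11 a (d2 z))
    (T1 : ∀ b : Fin n1, ∀ hb : (b : ℕ) < p,
      m11 (b1 ⟨p, hp⟩) (b1 b) - b2 ⟨(b : ℕ), by omega⟩ ∈ maximalIdeal R • (⊤ : Submodule R M2))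
    (T2 : ∀ a b : Fin n1, ¬((a : ℕ) = p ∧ (b : ℕ) < p) → ¬((b : ℕ) = p ∧ (a : ℕ) < p) →
      m11 (b1 a) (b1 b) ∈ maximalIdeal R • (⊤ : Submodule R M2))
    (T3 : ∀ b : Fin n2, ∀ hb1 : p ≤ (b : ℕ), ∀ hb2 : (b : ℕ) < p + q,
      m12 (b1 ⟨p, hp⟩) (b2 b) - b3 ⟨(b : ℕ) - p, by omega⟩ ∈
        maximalIdeal R • (⊤ : Submodule R M3))
    (T4 : ∀ (a : Fin n1) (b : Fin n2), ¬((a : ℕ) = p ∧ p ≤ (b : ℕ) ∧ (b : ℕ) < p + q) →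
      m12 (b1 a) (b2 b) ∈ maximalIdeal R • (⊤ : Submodule R M3)) :
    HasTorClassH R (LinearMap.range d1) p q := by
  have hskew : ∀ x y, m11 x y = - m11 y x := fun x y => by
    have := halt (x + y)
    simp only [map_add, LinearMap.add_apply, halt, zero_add, add_zero] at this
    exact eq_neg_of_add_eq_zero_right this
  have hinj : Function.Injective d3 := (injective_iff_map_eq_zero d3).2 hex3
  have hassoc : ∀ a b c, m12 c (m11 a b) = m12 a (m11 b c) := fun a b c => by
    apply hinj
    rw [hleib2, hleib2, hleib1, hleib1]
    simp only [map_sub, map_smul]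
    rw [hskew c b, hskew c a]
    module
  let e1 := b1.equivFun
  let e2 := b2.equivFun
  let e3 := b3.equivFun
  have s1 : ∀ i, e1.symm (Pi.single i 1) = b1 i := fun i => by simp [e1]
  have s2 : ∀ i, e2.symm (Pi.single i 1) = b2 i := fun i => by simp [e2]
  have t2 : ∀ i, e2 (b2 i) = Pi.single i 1 := fun i => by rw [← s2, e2.apply_symm_apply]
  have t3 : ∀ i, e3 (b3 i) = Pi.single i 1 := fun i => by
    rw [LinearEquiv.eq_symm_apply .. |>.symm]; simp [e3]
  refine ⟨n1, n2, n3, hp, hpq, hq3, d1 ∘ₗ e1.symm.toLinearMap,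
    e1.toLinearMap ∘ₗ d2 ∘ₗ e2.symm.toLinearMap,
    e2.toLinearMap ∘ₗ d3 ∘ₗ e3.symm.toLinearMap,
    (m11.compl₁₂ e1.symm.toLinearMap e1.symm.toLinearMap).compr₂ e2.toLinearMap,
    (m12.compl₁₂ e1.symm.toLinearMap e2.symm.toLinearMap).compr₂ e3.toLinearMap,
    ?_, ?_, ?_, ?_, ?_, ?_, ?_, ?_, ?_, ?_, ?_, ?_, ?_, ?_, ?_, ?_⟩
  · exact LinearEquiv.range_comp _ _
  · ext v
    simp only [LinearMap.mem_ker, LinearMap.comp_apply, LinearEquiv.coe_coe, hex1,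
      LinearMap.mem_range]
    constructor
    · rintro ⟨w, hw⟩
      exact ⟨e2 w, by simp [hw]⟩
    · rintro ⟨w, hw⟩
      exact ⟨e2.symm w, by simp [← hw]⟩
  · ext v
    simp only [LinearMap.mem_ker, LinearMap.comp_apply, LinearEquiv.coe_coe,
      LinearMap.mem_range, LinearEquiv.map_eq_zero_iff, hex2]
    constructor
    · rintro ⟨w, hw⟩
      exact ⟨e3 w, by simp [hw]⟩
    · rintro ⟨w, hw⟩
      exact ⟨e3.symm w, by simp [← hw]⟩
  · rw [LinearMap.ker_eq_bot']
    intro v hv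
    simp only [LinearMap.comp_apply, LinearEquiv.coe_coe, LinearEquiv.map_eq_zero_iff] at hv
    simpa using hex3 _ hv
  · intro v
    exact hmin1 _
  · intro v
    exact th_map_mem _ e1.toLinearMap (hmin2 _)
  · intro v
    exact th_map_mem _ e2.toLinearMap (hmin3 _)
  · intro a b
    simp [hleib1]
  · intro a
    simp [halt]
  · intro a b
    simp only [LinearMap.compr₂_apply, LinearMap.compl₁₂_apply, LinearEquiv.coe_coe]
    rw [hskew, map_neg]
  · intro a z
    simp [hleib2]
  · intro a b c
    simp only [LinearMap.compr₂_apply, LinearMap.compl₁₂_apply, LinearEquiv.coe_coe,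
      LinearEquiv.symm_apply_apply]
    rw [hassoc]
  · intro b hb
    have := th_map_mem _ e2.toLinearMap (T1 b hb)
    simpa only [LinearMap.compr₂_apply, LinearMap.compl₁₂_apply, LinearEquiv.coe_coe,
      s1, s2, map_sub, t2] using this
  · intro a b h1 h2
    have := th_map_mem _ e2.toLinearMap (T2 a b h1 h2)
    simpa only [LinearMap.compr₂_apply, LinearMap.compl₁₂_apply, LinearEquiv.coe_coe,
      s1, s2, map_sub, t2] using this
  · intro b h1 h2
    have := th_map_mem _ e3.toLinearMap (T3 b h1 h2)
    simpa only [LinearMap.compr₂_apply, LinearMap.compl₁₂_apply, LinearEquiv.coe_coe,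
      s1, s2, map_sub, t3] using this
  · intro a b h
    have := th_map_mem _ e3.toLinearMap (T4 a b h)
    simpa only [LinearMap.compr₂_apply, LinearMap.compl₁₂_apply, LinearEquiv.coe_coe,
      s1, s2, map_sub, t3] using this

/-- Packaging with arbitrary index types: `P` indexes the nonzero products in degree `1 + 1`. -/
lemma th_pack {R : Type} [CommRing R] [IsLocalRing R]
    {M1 M2 M3 : Type*} [AddCommGroup M1] [Module R M1] [AddCommGroup M2] [Module R M2]
    [AddCommGroup M3] [Module R M3]
    {ι1 ι2 ι3 P : Type*} [Fintype ι1] [Fintype ι2] [Fintype ι3] [Fintype P] (q : ℕ)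
    (s1 : P → ι1) (pt : ι1) (s2 : P → ι2) (t2 : Fin q → ι2) (s3 : Fin q → ι3)
    (hs1 : Function.Injective s1) (hpt : ∀ i, s1 i ≠ pt)
    (hs2 : Function.Injective s2) (ht2 : Function.Injective t2) (hst : ∀ i j, s2 i ≠ t2 j)
    (hs3 : Function.Injective s3)
    (b1 : Module.Basis ι1 R M1) (b2 : Module.Basis ι2 R M2) (b3 : Module.Basis ι3 R M3)
    (d1 : M1 →ₗ[R] R) (d2 : M2 →ₗ[R] M1) (d3 : M3 →ₗ[R] M2)
    (m11 : M1 →ₗ[R] M1 →ₗ[R] M2) (m12 : M1 →ₗ[R] M2 →ₗ[R] M3)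
    (hex1 : ∀ v, d1 v = 0 ↔ ∃ w, d2 w = v)
    (hex2 : ∀ v, d2 v = 0 ↔ ∃ w, d3 w = v)
    (hex3 : ∀ v, d3 v = 0 → v = 0)
    (hmin1 : ∀ v, d1 v ∈ maximalIdeal R)
    (hmin2 : ∀ v, d2 v ∈ maximalIdeal R • (⊤ : Submodule R M1))
    (hmin3 : ∀ v, d3 v ∈ maximalIdeal R • (⊤ : Submodule R M2))
    (hleib1 : ∀ a b, d2 (m11 a b) = d1 a • b - d1 b • a)
    (halt : ∀ a, m11 a a = 0)
    (hleib2 : ∀ a z, d3 (m12 a z) = d1 a • z - m11 a (d2 z))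
    (T1 : ∀ i, m11 (b1 pt) (b1 (s1 i)) - b2 (s2 i) ∈ maximalIdeal R • (⊤ : Submodule R M2))
    (T2 : ∀ a b, ¬(a = pt ∧ ∃ i, b = s1 i) → ¬(b = pt ∧ ∃ i, a = s1 i) →
      m11 (b1 a) (b1 b) ∈ maximalIdeal R • (⊤ : Submodule R M2))
    (T3 : ∀ i, m12 (b1 pt) (b2 (t2 i)) - b3 (s3 i) ∈ maximalIdeal R • (⊤ : Submodule R M3))
    (T4 : ∀ a b, ¬(a = pt ∧ ∃ i, b = t2 i) →
      m12 (b1 a) (b2 b) ∈ maximalIdeal R • (⊤ : Submodule R M3)) :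
    HasTorClassH R (LinearMap.range d1) (Fintype.card P) q := by
  set p := Fintype.card P with hpdef
  let eP : P ≃ Fin p := Fintype.equivFin P
  obtain ⟨hp, e1, he1⟩ := th_extend (Sum.elim s1 (fun _ : Fin 1 => pt))
    (Function.Injective.sumElim hs1 (Function.injective_of_subsingleton _) (fun i _ => hpt i))
    (p + 1) _ ((Equiv.sumCongr eP (Equiv.refl _)).trans finSumFinEquiv) rfl
  obtain ⟨hpq, e2, he2⟩ := th_extend (Sum.elim s2 t2)
    (Function.Injective.sumElim hs2 ht2 hst)
    (p + q) _ ((Equiv.sumCongr eP (Equiv.refl _)).trans finSumFinEquiv) rfl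
  obtain ⟨hq3, e3, he3⟩ := th_extend s3 hs3 q _ (Equiv.refl _) rfl
  have h1p : e1 ⟨p, hp⟩ = pt := by
    rw [← Sum.elim_inr s1 (fun _ : Fin 1 => pt) 0, ← he1]
    congr 1
  have h1s : ∀ i : Fin p, e1 ⟨i, i.2.trans hp⟩ = s1 (eP.symm i) := fun i => by
    rw [← Sum.elim_inl s1 (fun _ : Fin 1 => pt) (eP.symm i), ← he1]
    congr 1
    ext
    simp
  have h2s : ∀ i : Fin p, e2 ⟨i, by omega⟩ = s2 (eP.symm i) := fun i => by
    rw [← Sum.elim_inl s2 t2 (eP.symm i), ← he2]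
    congr 1
    ext
    simp
  have h2t : ∀ i : Fin q, e2 ⟨p + i, by omega⟩ = t2 i := fun i => by
    rw [← Sum.elim_inr s2 t2 i, ← he2]
    congr 1
  have h3s : ∀ i : Fin q, e3 ⟨i, by omega⟩ = s3 i := fun i => by
    rw [← he3]
    congr 1
  have c1 : ∀ a, e1 a = pt → (a : ℕ) = p := fun a h => by
    rw [← h1p] at h
    rw [e1.injective h]
  have c2 : ∀ a i, e1 a = s1 i → (a : ℕ) < p := fun a i h => by
    have := h1s (eP i)
    rw [eP.symm_apply_apply, ← h] at this
    rw [← e1.injective this]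
    exact (eP i).2
  refine th_pack0 (Fintype.card ι1) (Fintype.card ι2) (Fintype.card ι3) p q hp hpq hq3
    (b1.reindex e1.symm) (b2.reindex e2.symm) (b3.reindex e3.symm) d1 d2 d3 m11 m12
    hex1 hex2 hex3 hmin1 hmin2 hmin3 hleib1 halt hleib2 ?_ ?_ ?_ ?_
  · intro b hb
    simp only [Module.Basis.reindex_apply, Equiv.symm_symm, h1p]
    have e := h1s ⟨b, hb⟩
    have e' := h2s ⟨b, hb⟩
    simp only [Fin.eta] at e e'
    rw [e, e']
    exact T1 _
  · intro a b h h'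
    simp only [Module.Basis.reindex_apply, Equiv.symm_symm]
    refine T2 _ _ ?_ ?_
    · rintro ⟨h1, i, h2⟩
      exact h ⟨c1 _ h1, c2 _ _ h2⟩
    · rintro ⟨h1, i, h2⟩
      exact h' ⟨c1 _ h1, c2 _ _ h2⟩
  · intro b hb1 hb2
    simp only [Module.Basis.reindex_apply, Equiv.symm_symm, h1p]
    have e := h2t ⟨b - p, by omega⟩
    have e' := h3s ⟨b - p, by omega⟩
    have hb : (⟨p + (b - p), by omega⟩ : Fin (Fintype.card ι2)) = b := by
      ext
      simp
      omega
    simp only [hb] at e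
    rw [e, e']
    exact T3 _
  · intro a b h
    simp only [Module.Basis.reindex_apply, Equiv.symm_symm]
    refine T4 _ _ ?_
    rintro ⟨h1, i, h2⟩
    rw [← h2t] at h2
    have := e2.injective h2
    refine h ⟨c1 _ h1, ?_, ?_⟩ <;> rw [this]
    · simp
    · simp

end TrimPackaging

section TrimCore

open IsLocalRing

lemma th_core {R : Type} [CommRing R] [IsLocalRing R]
    (p q : ℕ)
    (n1 n2 n3 : ℕ) (hp : p < n1) (hpq : p + q ≤ n2) (hq3 : q ≤ n3)
    (d1 : (Fin n1 → R) →ₗ[R] R) (d2 : (Fin n2 → R) →ₗ[R] (Fin n1 → R))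
    (d3 : (Fin n3 → R) →ₗ[R] (Fin n2 → R))
    (hex1 : LinearMap.ker d1 = LinearMap.range d2)
    (hex2 : LinearMap.ker d2 = LinearMap.range d3)
    (hex3 : LinearMap.ker d3 = ⊥)
    (hmin3 : ∀ v, d3 v ∈ maximalIdeal R • (⊤ : Submodule R (Fin n2 → R)))
    (m11 : (Fin n1 → R) →ₗ[R] (Fin n1 → R) →ₗ[R] (Fin n2 → R))
    (m12 : (Fin n1 → R) →ₗ[R] (Fin n2 → R) →ₗ[R] (Fin n3 → R))
    (hleib1 : ∀ a b, d2 (m11 a b) = d1 a • b - d1 b • a)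
    (halt : ∀ a, m11 a a = 0) (hskew : ∀ a b, m11 a b = - m11 b a)
    (hleib2 : ∀ a z, d3 (m12 a z) = d1 a • z - m11 a (d2 z))
    (htabH1 : ∀ b : Fin n1, ∀ hb : (b : ℕ) < p,
      m11 (Pi.single (⟨p, hp⟩ : Fin n1) 1) (Pi.single b 1) -
        Pi.single (⟨(b : ℕ), by omega⟩ : Fin n2) 1 ∈
      maximalIdeal R • (⊤ : Submodule R (Fin n2 → R)))
    (htabH2 : ∀ a b : Fin n1, ¬((a : ℕ) = p ∧ (b : ℕ) < p) → ¬((b : ℕ) = p ∧ (a : ℕ) < p) →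
      m11 (Pi.single a 1) (Pi.single b 1) ∈
        maximalIdeal R • (⊤ : Submodule R (Fin n2 → R)))
    (htabH3 : ∀ b : Fin n2, ∀ hb1 : p ≤ (b : ℕ), ∀ hb2 : (b : ℕ) < p + q,
      m12 (Pi.single (⟨p, hp⟩ : Fin n1) 1) (Pi.single b 1) -
        Pi.single (⟨(b : ℕ) - p, by omega⟩ : Fin n3) 1 ∈
      maximalIdeal R • (⊤ : Submodule R (Fin n3 → R)))
    (htabH4 : ∀ (a : Fin n1) (b : Fin n2), ¬((a : ℕ) = p ∧ p ≤ (b : ℕ) ∧ (b : ℕ) < p + q) →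
      m12 (Pi.single a 1) (Pi.single b 1) ∈
        maximalIdeal R • (⊤ : Submodule R (Fin n3 → R)))
    (hquad : ∀ v, d2 v ∈ (maximalIdeal R ^ 2) • (⊤ : Submodule R (Fin n1 → R)))
    (hd1 : ∀ v, d1 v ∈ maximalIdeal R ^ 2)
    -- the trimming data
    {E K1 K2 K3 ιE ι1 ι2 ι3 : Type*} [AddCommGroup E] [Module R E]
    [AddCommGroup K1] [Module R K1] [AddCommGroup K2] [Module R K2] [AddCommGroup K3] [Module R K3]
    [Fintype ιE] [Fintype ι1] [Fintype ι2] [Fintype ι3]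
    (bE : Module.Basis ιE R E) (bK1 : Module.Basis ι1 R K1) (bK2 : Module.Basis ι2 R K2)
    (bK3 : Module.Basis ι3 R K3)
    (α : (E × K1) →ₗ[R] (Fin n1 → R)) (δ2 : K2 →ₗ[R] K1) (δ3 : K3 →ₗ[R] K2)
    (kex1 : ∀ v, α v = 0 ↔ ∃ k, (0, δ2 k) = v)
    (kex2 : ∀ k, δ2 k = 0 ↔ ∃ c, δ3 c = k)
    (kex3 : ∀ c, δ3 c = 0 → c = 0)
    (kmin2 : ∀ k, δ2 k ∈ maximalIdeal R • (⊤ : Submodule R K1))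
    (kmin3 : ∀ k, δ3 k ∈ maximalIdeal R • (⊤ : Submodule R K2))
    (star2 : ∀ k, δ2 k ∈ (maximalIdeal R ^ 2) • (⊤ : Submodule R K1) →
      k ∈ maximalIdeal R • (⊤ : Submodule R K2))
    (star3 : ∀ k, δ3 k ∈ (maximalIdeal R ^ 2) • (⊤ : Submodule R K2) →
      k ∈ maximalIdeal R • (⊤ : Submodule R K3))
    (hαK : ∀ k, α (0, k) ∈ maximalIdeal R • (⊤ : Submodule R (Fin n1 → R)))
    (hlift : ∀ v ∈ (maximalIdeal R ^ 2) • (⊤ : Submodule R (Fin n1 → R)),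
      ∃ u ∈ (maximalIdeal R ^ 2) • (⊤ : Submodule R E),
      ∃ k ∈ maximalIdeal R • (⊤ : Submodule R K1), α (u, k) = v)
    (j : ιE → Fin n1) (hj : Function.Injective j)
    (hαE : ∀ i, α (bE i, 0) = Pi.single (j i) 1)
    (pt : ιE) (hpt : (j pt : ℕ) = p) :
    HasTorClassH R (LinearMap.range (d1 ∘ₗ α)) (Fintype.card {i : ιE // (j i : ℕ) < p}) q := by
  classical
  set 𝔪 := maximalIdeal R with h𝔪
  have hsq : 𝔪 ^ 2 = 𝔪 * 𝔪 := pow_two 𝔪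
  have hle : 𝔪 ^ 2 ≤ 𝔪 := Ideal.pow_le_self two_ne_zero
  have upE : ∀ {v : E}, v ∈ (𝔪 ^ 2) • (⊤ : Submodule R E) → v ∈ 𝔪 • (⊤ : Submodule R E) :=
    fun h => Submodule.smul_mono hle le_rfl h
  have ex1 : ∀ v, d1 v = 0 ↔ ∃ w, d2 w = v := fun v => by
    rw [← LinearMap.mem_ker, hex1, LinearMap.mem_range]
  have ex2 : ∀ v, d2 v = 0 ↔ ∃ w, d3 w = v := fun v => by
    rw [← LinearMap.mem_ker, hex2, LinearMap.mem_range]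
  have ex3 : ∀ v, d3 v = 0 → v = 0 := LinearMap.ker_eq_bot'.1 hex3
  have ex3i : Function.Injective d3 := LinearMap.ker_eq_bot.1 hex3
  -- `β`
  obtain ⟨β, hβ, hβS⟩ := th_lift (Pi.basisFun R (Fin n2)) α d2
    (((𝔪 ^ 2) • (⊤ : Submodule R E)).prod (𝔪 • (⊤ : Submodule R K1))) (fun y => by
      obtain ⟨u, hu, k, hk, h⟩ := hlift _ (hquad y)
      exact ⟨(u, k), ⟨hu, hk⟩, h⟩)
  have hβm : ∀ f, β f ∈ 𝔪 • (⊤ : Submodule R (E × K1)) := fun f =>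
    th_prod_mem 𝔪 (upE (hβS f).1) (hβS f).2
  have hβ2 : ∀ {f}, f ∈ 𝔪 • (⊤ : Submodule R (Fin n2 → R)) →
      β f ∈ (𝔪 ^ 2) • (⊤ : Submodule R (E × K1)) := fun hf => by
    rw [hsq]
    exact th_map_mem_mul _ _ β hβm hf
  have hα0 : ∀ k, α (0, δ2 k) = 0 := fun k => (kex1 _).2 ⟨k, rfl⟩
  have star2' : ∀ k, ((0, δ2 k) : E × K1) ∈ (𝔪 ^ 2) • (⊤ : Submodule R (E × K1)) →
      k ∈ 𝔪 • (⊤ : Submodule R K2) := fun k hk => star2 k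
    (th_map_mem _ (LinearMap.snd R E K1) hk)
  let δ : K2 →ₗ[R] E × K1 := LinearMap.inr R E K1 ∘ₗ δ2
  have hδ : ∀ k, δ k = (0, δ2 k) := fun k => rfl
  -- `γ`
  obtain ⟨γ, hγ, -⟩ := th_lift (Pi.basisFun R (Fin n3)) δ (-(β ∘ₗ d3)) ⊤ (fun y => by
      have : α (-(β (d3 y))) = 0 := by
        rw [map_neg, hβ, (ex2 _).2 ⟨y, rfl⟩, neg_zero]
      obtain ⟨k, hk⟩ := (kex1 _).1 this
      exact ⟨k, trivial, hk⟩)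
  have hγ' : ∀ g, δ (γ g) = - β (d3 g) := fun g => hγ g
  have hγm : ∀ g, γ g ∈ 𝔪 • (⊤ : Submodule R K2) := fun g => by
    apply star2'
    rw [← hδ, hγ']
    exact neg_mem (hβ2 (hmin3 g))
  -- `κ`
  let ρ : (E × K1) →ₗ[R] (E × K1) →ₗ[R] (E × K1) :=
    (LinearMap.lsmul R (E × K1)).comp (d1 ∘ₗ α) -
      ((LinearMap.lsmul R (E × K1)).comp (d1 ∘ₗ α)).flip - (m11.compl₁₂ α α).compr₂ β
  have hρ : ∀ a b, ρ a b = d1 (α a) • b - d1 (α b) • a - β (m11 (α a) (α b)) := fun a b => rfl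
  obtain ⟨κ, hκ, hκalt⟩ := th_alt_lift (bE.prod bK1) δ ρ (fun a => by simp [hρ, halt])
    (fun a b => by
      have : α (ρ a b) = 0 := by
        rw [hρ, map_sub, map_sub, hβ, hleib1]
        simp
      exact (kex1 _).1 this)
  have hκm : ∀ a b, m11 (α a) (α b) ∈ 𝔪 • (⊤ : Submodule R (Fin n2 → R)) →
      κ a b ∈ 𝔪 • (⊤ : Submodule R K2) := fun a b h => by
    apply star2'
    rw [← hδ, hκ, hρ]
    exact sub_mem (sub_mem (th_smul_mem _ (hd1 _) _) (th_smul_mem _ (hd1 _) _)) (hβ2 h)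
  have hm11K : ∀ a k, m11 (α a) (α (0, k)) ∈ 𝔪 • (⊤ : Submodule R (Fin n2 → R)) := fun a k =>
    th_map_mem 𝔪 (m11 (α a)) (hαK k)
  have hm11K' : ∀ a k, m11 (α (0, k)) (α a) ∈ 𝔪 • (⊤ : Submodule R (Fin n2 → R)) := fun a k => by
    rw [hskew]
    exact neg_mem (hm11K a k)
  have hκ2 : ∀ a k, k ∈ 𝔪 • (⊤ : Submodule R K1) →
      κ a (0, k) ∈ (𝔪 ^ 2) • (⊤ : Submodule R K2) := fun a k hk => by
    rw [hsq]
    exact th_map_mem_mul 𝔪 𝔪 (κ a ∘ₗ LinearMap.inr R E K1) (fun k => hκm _ _ (hm11K a k)) hk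
  have hκβ : ∀ a f, κ a (β f) ∈ (𝔪 ^ 2) • (⊤ : Submodule R K2) := fun a f => by
    have e : β f = ((β f).1, 0) + (0, (β f).2) := by simp
    rw [e, map_add]
    exact add_mem (th_map_mem _ (κ a ∘ₗ LinearMap.inl R E K1) (hβS f).1) (hκ2 _ _ (hβS f).2)
  -- the new complex
  let d2' : ((Fin n2 → R) × K2) →ₗ[R] E × K1 := β.coprod δ
  let d3' : ((Fin n3 → R) × K3) →ₗ[R] (Fin n2 → R) × K2 :=
    LinearMap.prod (d3 ∘ₗ LinearMap.fst R _ _) (γ.coprod δ3)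
  let m11' : (E × K1) →ₗ[R] (E × K1) →ₗ[R] (Fin n2 → R) × K2 :=
    (m11.compl₁₂ α α).compr₂ (LinearMap.inl R _ _) + κ.compr₂ (LinearMap.inr R _ _)
  have hd2' : ∀ z, d2' z = β z.1 + δ z.2 := fun z => rfl
  have hd3' : ∀ z, d3' z = (d3 z.1, γ z.1 + δ3 z.2) := fun z => rfl
  have hm11' : ∀ a b, m11' a b = (m11 (α a) (α b), κ a b) := fun a b => by
    simp [m11']
  have hαd2' : ∀ z, α (d2' z) = d2 z.1 := fun z => by
    rw [hd2', map_add, hβ, hδ, hα0, add_zero]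
  have E1 : ∀ v, (d1 ∘ₗ α) v = 0 ↔ ∃ w, d2' w = v := fun v => by
    constructor
    · intro h
      obtain ⟨f, hf⟩ := (ex1 _).1 h
      have : α (v - β f) = 0 := by rw [map_sub, hβ, hf, sub_self]
      obtain ⟨k, hk⟩ := (kex1 _).1 this
      exact ⟨(f, k), by rw [hd2', hδ, hk]; simp⟩
    · rintro ⟨w, rfl⟩
      rw [LinearMap.comp_apply, hαd2']
      exact (ex1 _).2 ⟨_, rfl⟩
  have hδ0 : ∀ k, δ k = 0 ↔ ∃ c, δ3 c = k := fun k => by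
    rw [← kex2, hδ]
    simp
  have E2 : ∀ v, d2' v = 0 ↔ ∃ w, d3' w = v := fun v => by
    constructor
    · intro h
      have h1 : d2 v.1 = 0 := by rw [← hαd2', h, map_zero]
      obtain ⟨g, hg⟩ := (ex2 _).1 h1
      have h2 : δ (v.2 - γ g) = 0 := by
        rw [map_sub, hγ', hg, sub_neg_eq_add, add_comm, ← hd2', h]
      obtain ⟨c, hc⟩ := (hδ0 _).1 h2
      exact ⟨(g, c), by rw [hd3', hc, hg]; simp⟩
    · rintro ⟨w, rfl⟩
      rw [hd2', hd3']
      dsimp only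
      rw [map_add, hγ', (hδ0 _).2 ⟨_, rfl⟩]
      simp
  have E3 : ∀ v, d3' v = 0 → v = 0 := fun v h => by
    rw [hd3', Prod.mk_eq_zero] at h
    have h1 := ex3 _ h.1
    have h2 := h.2
    rw [h1, map_zero, zero_add] at h2
    exact Prod.ext h1 (kex3 _ h2)
  have L1 : ∀ a b, d2' (m11' a b) = (d1 ∘ₗ α) a • b - (d1 ∘ₗ α) b • a := fun a b => by
    rw [hd2', hm11']
    dsimp only
    rw [hκ, hρ]
    simp
  have A1 : ∀ a, m11' a a = 0 := fun a => by
    rw [hm11', halt, hκalt]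
    rfl
  obtain ⟨m12', L2⟩ := th_bilin_lift d3' E3
    ((LinearMap.lsmul R _).comp (d1 ∘ₗ α) - m11'.compl₂ d2') (fun a z => by
      rw [← E2]
      simp only [LinearMap.sub_apply, LinearMap.comp_apply, LinearMap.lsmul_apply,
        LinearMap.compl₂_apply, map_sub, map_smul, L1]
      rw [hαd2', (ex1 _).2 ⟨_, rfl⟩]
      simp)
  replace L2 : ∀ a z, d3' (m12' a z) = (d1 ∘ₗ α) a • z - m11' a (d2' z) := L2
  have F1 : ∀ a z, (m12' a z).1 = m12 (α a) z.1 := fun a z => by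
    apply ex3i
    have := congrArg Prod.fst (L2 a z)
    rw [hd3', hm11', hαd2'] at this
    rw [hleib2]
    exact this
  have F2 : ∀ a z, m12 (α a) z.1 ∈ 𝔪 • (⊤ : Submodule R (Fin n3 → R)) →
      m12' a z ∈ 𝔪 • (⊤ : Submodule R ((Fin n3 → R) × K3)) := fun a z h => by
    refine th_prod_mem 𝔪 (v := (m12' a z).1) (w := (m12' a z).2) (by rwa [F1]) ?_
    apply star3
    have e := congrArg Prod.snd (L2 a z)
    rw [hd3', hm11', hd2', F1] at e
    have e' : δ3 (m12' a z).2 = d1 (α a) • z.2 - κ a (β z.1) - κ a (δ z.2)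
        - γ (m12 (α a) z.1) := by
      have e2 : γ (m12 (α a) z.1) + δ3 (m12' a z).2 = d1 (α a) • z.2 - κ a (β z.1 + δ z.2) := e
      rw [map_add] at e2
      rw [eq_sub_iff_add_eq, add_comm, e2]
      abel
    rw [e']
    refine sub_mem (sub_mem (sub_mem (th_smul_mem _ (hd1 _) _) (hκβ _ _))
      (hκ2 _ _ (kmin2 _))) ?_
    rw [hsq]
    exact th_map_mem_mul 𝔪 𝔪 γ hγm h
  -- bases
  let θ2 : (Fin n2 → R) →ₗ[R] K2 := (Pi.basisFun R (Fin n2)).constr R (fun b =>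
    if h : ∃ i : ιE, (j i : ℕ) < p ∧ (j i : ℕ) = b then κ (bE pt, 0) (bE h.choose, 0) else 0)
  have hθ2 : ∀ b, θ2 (Pi.single b 1) =
      if h : ∃ i : ιE, (j i : ℕ) < p ∧ (j i : ℕ) = b then κ (bE pt, 0) (bE h.choose, 0) else 0 :=
    fun b => by
      have := (Pi.basisFun R (Fin n2)).constr_basis R (fun b =>
        if h : ∃ i : ιE, (j i : ℕ) < p ∧ (j i : ℕ) = b then
          κ (bE pt, 0) (bE h.choose, 0) else 0) b
      rw [Pi.basisFun_apply] at this
      exact this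
  let θ3 : (Fin n3 → R) →ₗ[R] K3 := (Pi.basisFun R (Fin n3)).constr R (fun b =>
    if h : (b : ℕ) < q then (m12' (bE pt, 0) (Pi.single ⟨p + b, by omega⟩ 1, 0)).2 else 0)
  have hθ3 : ∀ b : Fin n3, ∀ h : (b : ℕ) < q, θ3 (Pi.single b 1) =
      (m12' (bE pt, 0) (Pi.single ⟨p + b, by omega⟩ 1, 0)).2 := fun b h => by
    have := (Pi.basisFun R (Fin n3)).constr_basis R (fun b : Fin n3 =>
      if h : (b : ℕ) < q then (m12' (bE pt, 0) (Pi.single ⟨p + b, by omega⟩ 1, 0)).2 else 0) b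
    rw [Pi.basisFun_apply, dif_pos h] at this
    exact this
  let B2 := ((Pi.basisFun R (Fin n2)).prod bK2).map
    ((LinearEquiv.refl R (Fin n2 → R)).skewProd (LinearEquiv.refl R K2) θ2)
  let B3 := ((Pi.basisFun R (Fin n3)).prod bK3).map
    ((LinearEquiv.refl R (Fin n3 → R)).skewProd (LinearEquiv.refl R K3) θ3)
  have B2l : ∀ b, B2 (Sum.inl b) = (Pi.single b 1, θ2 (Pi.single b 1)) := fun b => by
    simp [B2, Module.Basis.prod_apply]
  have B2r : ∀ b, B2 (Sum.inr b) = (0, bK2 b) := fun b => by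
    simp [B2, Module.Basis.prod_apply]
  have B3l : ∀ b, B3 (Sum.inl b) = (Pi.single b 1, θ3 (Pi.single b 1)) := fun b => by
    simp [B3, Module.Basis.prod_apply]
  have B1l : ∀ b, (bE.prod bK1) (Sum.inl b) = (bE b, 0) := fun b => by
    simp [Module.Basis.prod_apply]
  have B1r : ∀ b, (bE.prod bK1) (Sum.inr b) = (0, bK1 b) := fun b => by
    simp [Module.Basis.prod_apply]
  have jpt : j pt = ⟨p, hp⟩ := Fin.ext hpt
  refine th_pack (P := {i : ιE // (j i : ℕ) < p}) q (fun i => Sum.inl i.1) (Sum.inl pt)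
    (fun i => Sum.inl ⟨(j i.1 : ℕ), by have := i.2; omega⟩)
    (fun i => Sum.inl ⟨p + i, by omega⟩)
    (fun i => Sum.inl ⟨i, by omega⟩) ?_ ?_ ?_ ?_ ?_ ?_ (bE.prod bK1) B2 B3
    (d1 ∘ₗ α) d2' d3' m11' m12' E1 E2 E3 (fun v => hle (hd1 _)) ?_ ?_ L1 A1 L2 ?_ ?_ ?_ ?_
  · exact Sum.inl_injective.comp Subtype.val_injective
  · rintro ⟨i, hi⟩ h
    have := Sum.inl_injective h
    dsimp only at this
    rw [this, hpt] at hi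
    exact lt_irrefl _ hi
  · intro a b h
    have := congrArg Fin.val (Sum.inl_injective h)
    exact Subtype.ext (hj (Fin.ext this))
  · intro a b h
    have := congrArg Fin.val (Sum.inl_injective h)
    dsimp only at this
    exact Fin.ext (by omega)
  · rintro ⟨i, hi⟩ b h
    have := congrArg Fin.val (Sum.inl_injective h)
    dsimp only at this
    omega
  · intro a b h
    have := congrArg Fin.val (Sum.inl_injective h)
    exact Fin.ext this
  · intro v
    rw [hd2', hδ]
    exact add_mem (hβm _) (th_prod_mem 𝔪 (zero_mem _) (kmin2 _))
  · intro v
    rw [hd3']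
    exact th_prod_mem 𝔪 (hmin3 _) (add_mem (hγm _) (kmin3 _))
  · rintro ⟨i, hi⟩
    dsimp only
    rw [B1l, B1l, B2l, hm11', hθ2]
    have hex : ∃ i' : ιE, (j i' : ℕ) < p ∧ (j i' : ℕ) =
      ((⟨(j i : ℕ), by omega⟩ : Fin n2) : ℕ) := ⟨i, hi, rfl⟩
    rw [dif_pos hex]
    have hc : hex.choose = i := hj (Fin.ext hex.choose_spec.2)
    rw [hc, Prod.mk_sub_mk, sub_self, hαE, hαE, jpt]
    exact th_prod_mem 𝔪 (htabH1 _ hi) (zero_mem _)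
  · intro a b h1 h2
    have key : m11 (α ((bE.prod bK1) a)) (α ((bE.prod bK1) b)) ∈
        𝔪 • (⊤ : Submodule R (Fin n2 → R)) := by
      rcases a with a | a
      · rcases b with b | b
        · rw [B1l, B1l, hαE, hαE]
          refine htabH2 _ _ ?_ ?_
          · rintro ⟨ha, hb⟩
            exact h1 ⟨congrArg Sum.inl (hj (Fin.ext (ha.trans hpt.symm))), ⟨b, hb⟩, rfl⟩
          · rintro ⟨ha, hb⟩
            exact h2 ⟨congrArg Sum.inl (hj (Fin.ext (ha.trans hpt.symm))), ⟨a, hb⟩, rfl⟩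
        · rw [B1r]
          exact hm11K _ _
      · rw [B1r]
        exact hm11K' _ _
    rw [hm11']
    exact th_prod_mem 𝔪 key (hκm _ _ key)
  · intro i
    have hno : ¬ ∃ i' : ιE, (j i' : ℕ) < p ∧ (j i' : ℕ) =
      ((⟨p + i, by omega⟩ : Fin n2) : ℕ) := by
      rintro ⟨i', h1, h2⟩
      dsimp only at h2
      omega
    rw [B1l, B2l, B3l, hθ2, dif_neg hno, hθ3 _ i.2]
    refine th_prod_mem 𝔪 (v := (m12' (bE pt, 0) _).1 - _) (w := (m12' (bE pt, 0) _).2 - _) ?_ ?_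
    · rw [F1, hαE, jpt]
      have := htabH3 ⟨p + i, by omega⟩ (by simp) (by simp)
      simpa using this
    · rw [sub_self]
      exact zero_mem _
  · intro a b h
    apply F2
    rcases b with b | b
    · rw [B2l]
      dsimp only
      rcases a with a | a
      · rw [B1l, hαE]
        refine htabH4 _ _ ?_
        rintro ⟨h1, h2, h3⟩
        refine h ⟨congrArg Sum.inl (hj (Fin.ext (h1.trans hpt.symm))),
          ⟨b - p, by omega⟩, congrArg Sum.inl (Fin.ext ?_)⟩
        dsimp only
        omega
      · rw [B1r]
        exact th_map_mem 𝔪 (m12.flip (Pi.single b 1)) (hαK _)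
    · rw [B2r]
      simp

end TrimCore

section TrimKoszul

set_option linter.unusedSectionVars false

open IsLocalRing

variable {R : Type} [CommRing R] [IsLocalRing R]

/-- The map sending `e_i ↦ e_i` (`i ∉ σ`) and `k_{j,a} ↦ x_a e_j` (`j ∈ σ`). -/
def thα (x : Fin 3 → R) {n : ℕ} (σ : Finset (Fin n)) :
    (({i // i ∉ σ} → R) × (σ × Fin 3 → R)) →ₗ[R] (Fin n → R) :=
  LinearMap.pi fun i => if h : i ∈ σ then
      (∑ a, x a • (LinearMap.proj (⟨i, h⟩, a) : (σ × Fin 3 → R) →ₗ[R] R)) ∘ₗ LinearMap.snd R _ _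
    else (LinearMap.proj ⟨i, h⟩ : ({i // i ∉ σ} → R) →ₗ[R] R) ∘ₗ LinearMap.fst R _ _

/-- The Koszul differential `K₂ → K₁` (a cross product), one copy for each `j ∈ σ`. -/
def thδ2 (x : Fin 3 → R) {n : ℕ} (σ : Finset (Fin n)) : (σ × Fin 3 → R) →ₗ[R] (σ × Fin 3 → R) :=
  LinearMap.pi fun ja => x (ja.2 + 1) • (LinearMap.proj (ja.1, ja.2 + 2) : (σ × Fin 3 → R) →ₗ[R] R)
    - x (ja.2 + 2) • (LinearMap.proj (ja.1, ja.2 + 1) : (σ × Fin 3 → R) →ₗ[R] R)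

/-- The Koszul differential `K₃ → K₂`, one copy for each `j ∈ σ`. -/
def thδ3 (x : Fin 3 → R) {n : ℕ} (σ : Finset (Fin n)) : (σ → R) →ₗ[R] (σ × Fin 3 → R) :=
  LinearMap.pi fun ja => x ja.2 • (LinearMap.proj ja.1 : (σ → R) →ₗ[R] R)

lemma thα_mem (x : Fin 3 → R) {n : ℕ} (σ : Finset (Fin n)) (v) {i : Fin n} (h : i ∈ σ) :
    thα x σ v i = ∑ a, x a * v.2 (⟨i, h⟩, a) := by
  simp [thα, h]

lemma thα_not_mem (x : Fin 3 → R) {n : ℕ} (σ : Finset (Fin n)) (v) {i : Fin n} (h : i ∉ σ) :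
    thα x σ v i = v.1 ⟨i, h⟩ := by
  simp [thα, h]

lemma thδ2_apply (x : Fin 3 → R) {n : ℕ} (σ : Finset (Fin n)) (k) (j : σ) (a : Fin 3) :
    thδ2 x σ k (j, a) = x (a + 1) * k (j, a + 2) - x (a + 2) * k (j, a + 1) := by
  simp [thδ2]

lemma thδ3_apply (x : Fin 3 → R) {n : ℕ} (σ : Finset (Fin n)) (k) (j : σ) (a : Fin 3) :
    thδ3 x σ k (j, a) = x a * k j := by
  simp [thδ3]

lemma th_koszul (x : Fin 3 → R) (hreg : RingTheory.Sequence.IsRegular R [x 0, x 1, x 2]) :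
    (∀ v : Fin 3 → R, ∑ a, x a * v a = 0 →
      ∃ w : Fin 3 → R, ∀ a, v a = x (a + 1) * w (a + 2) - x (a + 2) * w (a + 1)) ∧
    (∀ w : Fin 3 → R, (∀ a, x (a + 1) * w (a + 2) - x (a + 2) * w (a + 1) = 0) →
      ∃ r, ∀ a, w a = x a * r) ∧
    (∀ r, x 0 * r = 0 → r = 0) := by
  have hw := hreg.toIsWeaklyRegular.regular_mod_prev
  have h0 : ∀ r, x 0 * r = 0 → r = 0 := by
    have := hw 0 (by simp)
    intro r hr
    have h := this (a₁ := Submodule.Quotient.mk r) (a₂ := 0) (by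
      dsimp only
      rw [← Submodule.Quotient.mk_smul, smul_zero, Submodule.Quotient.mk_eq_zero]
      simp [hr])
    rw [Submodule.Quotient.mk_eq_zero] at h
    simpa using h
  have h1 : ∀ r s, x 1 * r = x 0 * s → ∃ t, r = x 0 * t := by
    have := hw 1 (by simp)
    intro r s hr
    have h := this (a₁ := Submodule.Quotient.mk r) (a₂ := 0) (by
      dsimp only
      rw [← Submodule.Quotient.mk_smul, smul_zero, Submodule.Quotient.mk_eq_zero]
      simp [Ideal.ofList, Ideal.mem_span_singleton', hr]
      exact ⟨s, mul_comm _ _⟩)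
    rw [Submodule.Quotient.mk_eq_zero] at h
    simp [Ideal.ofList, Ideal.mem_span_singleton'] at h
    obtain ⟨t, ht⟩ := h
    exact ⟨t, by rw [← ht, mul_comm]⟩
  have h2 : ∀ r s t, x 2 * r = x 0 * s + x 1 * t → ∃ s' t', r = x 0 * s' + x 1 * t' := by
    have := hw 2 (by simp)
    have hI : Ideal.ofList (List.take 2 [x 0, x 1, x 2]) = Ideal.span {x 0, x 1} := by
      simp [Ideal.ofList]
      congr 1
    rw [hI] at this
    intro r s t hr
    have h := this (a₁ := Submodule.Quotient.mk r) (a₂ := 0) (by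
      dsimp only
      rw [← Submodule.Quotient.mk_smul, smul_zero, Submodule.Quotient.mk_eq_zero]
      simp [Ideal.mem_span_pair, hr]
      exact ⟨s, t, by ring⟩)
    rw [Submodule.Quotient.mk_eq_zero] at h
    simp [Ideal.mem_span_pair] at h
    obtain ⟨s', t', ht⟩ := h
    exact ⟨s', t', by rw [← ht]; ring⟩
  refine ⟨fun v hv => ?_, fun w hw => ?_, h0⟩
  · rw [Fin.sum_univ_three] at hv
    obtain ⟨a, b, hab⟩ := h2 (v 2) (-v 0) (-v 1) (by linear_combination hv)
    obtain ⟨c, hc⟩ := h1 (v 1 + x 2 * b) (-(v 0 + x 2 * a)) (by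
      rw [hab] at hv
      linear_combination hv)
    have h3 := h0 (v 0 + x 2 * a + x 1 * c) (by
      rw [hab] at hv
      linear_combination hv - x 1 * hc)
    refine ⟨![-b, a, -c], fun i => ?_⟩
    fin_cases i
    · change v 0 = x 1 * (-c) - x 2 * a
      linear_combination h3
    · change v 1 = x 2 * (-b) - x 0 * (-c)
      linear_combination hc
    · change v 2 = x 0 * a - x 1 * (-b)
      linear_combination hab
  · have e0 : x 1 * w 2 - x 2 * w 1 = 0 := hw 0
    have e1 : x 2 * w 0 - x 0 * w 2 = 0 := hw 1
    have e2 : x 0 * w 1 - x 1 * w 0 = 0 := hw 2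
    obtain ⟨r, hr⟩ := h1 (w 0) (w 1) (by linear_combination -e2)
    have f1 := h0 (w 1 - x 1 * r) (by linear_combination e2 + x 1 * hr)
    have f2 := h0 (w 2 - x 2 * r) (by linear_combination -e1 + x 2 * hr)
    refine ⟨r, fun i => ?_⟩
    fin_cases i
    · exact hr
    · change w 1 = x 1 * r
      linear_combination f1
    · change w 2 = x 2 * r
      linear_combination f2

lemma th_x_mem (x : Fin 3 → R) (hx : Ideal.span {x 0, x 1, x 2} = maximalIdeal R) (a : Fin 3) :
    x a ∈ maximalIdeal R := by
  rw [← hx]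
  apply Ideal.subset_span
  fin_cases a <;> simp

lemma th_mem_m (x : Fin 3 → R) (hx : Ideal.span {x 0, x 1, x 2} = maximalIdeal R) {y : R}
    (hy : y ∈ maximalIdeal R) : ∃ m : Fin 3 → R, ∑ a, x a * m a = y := by
  rw [← hx, Submodule.mem_span_triple] at hy
  obtain ⟨a, b, c, h⟩ := hy
  refine ⟨![a, b, c], ?_⟩
  rw [← h, Fin.sum_univ_three]
  simp [mul_comm]

lemma th_mem_m2 (x : Fin 3 → R) (hx : Ideal.span {x 0, x 1, x 2} = maximalIdeal R) {y : R}
    (hy : y ∈ maximalIdeal R ^ 2) :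
    ∃ m : Fin 3 → R, (∀ a, m a ∈ maximalIdeal R) ∧ ∑ a, x a * m a = y := by
  rw [pow_two] at hy
  induction hy using Submodule.mul_induction_on' with
  | mem_mul_mem r hr s hs =>
    obtain ⟨m, hm⟩ := th_mem_m x hx hr
    refine ⟨fun a => m a * s, fun a => Ideal.mul_mem_left _ _ hs, ?_⟩
    rw [← hm, Finset.sum_mul]
    exact Finset.sum_congr rfl fun a _ => by ring
  | add y _ z _ h1 h2 =>
    obtain ⟨m, hm, e⟩ := h1
    obtain ⟨m', hm', e'⟩ := h2
    refine ⟨m + m', fun a => add_mem (hm a) (hm' a), ?_⟩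
    rw [← e, ← e', ← Finset.sum_add_distrib]
    exact Finset.sum_congr rfl fun a _ => by simp [mul_add]

lemma th_indep (x : Fin 3 → R) (hx : Ideal.span {x 0, x 1, x 2} = maximalIdeal R)
    (r1 : ∀ v : Fin 3 → R, ∑ a, x a * v a = 0 →
      ∃ w : Fin 3 → R, ∀ a, v a = x (a + 1) * w (a + 2) - x (a + 2) * w (a + 1))
    (c : Fin 3 → R) (hc : ∑ a, x a * c a ∈ maximalIdeal R ^ 2) (a : Fin 3) :
    c a ∈ maximalIdeal R := by
  obtain ⟨m, hm, e⟩ := th_mem_m2 x hx hc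
  obtain ⟨w, hw⟩ := r1 (c - m) (by simp [mul_sub, e])
  have h : c a = m a + (x (a + 1) * w (a + 2) - x (a + 2) * w (a + 1)) := by
    rw [← hw]
    simp
  rw [h]
  exact add_mem (hm a) (sub_mem (Ideal.mul_mem_right _ _ (th_x_mem x hx _))
    (Ideal.mul_mem_right _ _ (th_x_mem x hx _)))

variable {n : ℕ}

lemma th_kex1 (x : Fin 3 → R) (σ : Finset (Fin n))
    (r1 : ∀ v : Fin 3 → R, ∑ a, x a * v a = 0 →
      ∃ w : Fin 3 → R, ∀ a, v a = x (a + 1) * w (a + 2) - x (a + 2) * w (a + 1)) (v) :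
    thα x σ v = 0 ↔ ∃ k, (0, thδ2 x σ k) = v := by
  constructor
  · intro h
    have h1 : v.1 = 0 := by
      ext ⟨i, hi⟩
      rw [← thα_not_mem x σ v hi, h]
      rfl
    have h2 : ∀ j : σ, ∃ w : Fin 3 → R, ∀ a, v.2 (j, a) =
        x (a + 1) * w (a + 2) - x (a + 2) * w (a + 1) := fun j => by
      refine r1 (fun a => v.2 (j, a)) ?_
      rw [← thα_mem x σ v j.2, h]
      rfl
    choose w hw using h2
    refine ⟨fun ja => w ja.1 ja.2, Prod.ext h1.symm ?_⟩
    ext ⟨j, a⟩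
    rw [hw]
    exact thδ2_apply x σ _ j a
  · rintro ⟨k, rfl⟩
    ext i
    by_cases hi : i ∈ σ
    · rw [thα_mem x σ _ hi, Fin.sum_univ_three]
      simp only [thδ2_apply]
      simp
      ring
    · rw [thα_not_mem x σ _ hi]
      rfl

lemma th_kex2 (x : Fin 3 → R) (σ : Finset (Fin n))
    (r2 : ∀ w : Fin 3 → R, (∀ a, x (a + 1) * w (a + 2) - x (a + 2) * w (a + 1) = 0) →
      ∃ r, ∀ a, w a = x a * r) (k) :
    thδ2 x σ k = 0 ↔ ∃ c, thδ3 x σ c = k := by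
  constructor
  · intro h
    have h2 : ∀ j : σ, ∃ r, ∀ a, k (j, a) = x a * r := fun j =>
      r2 (fun a => k (j, a)) (fun a => by rw [← thδ2_apply x σ k, h]; rfl)
    choose r hr using h2
    exact ⟨r, by ext ⟨j, a⟩; rw [thδ3_apply, hr]⟩
  · rintro ⟨c, rfl⟩
    ext ⟨j, a⟩
    rw [thδ2_apply, thδ3_apply, thδ3_apply]
    simp
    ring

lemma th_kex3 (x : Fin 3 → R) (σ : Finset (Fin n)) (r3 : ∀ r, x 0 * r = 0 → r = 0) (c)
    (h : thδ3 x σ c = 0) : c = 0 := by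
  ext j
  apply r3
  rw [← thδ3_apply, h]
  rfl

lemma th_kmin2 (x : Fin 3 → R) (hx : Ideal.span {x 0, x 1, x 2} = maximalIdeal R)
    (σ : Finset (Fin n)) (k) :
    thδ2 x σ k ∈ maximalIdeal R • (⊤ : Submodule R (σ × Fin 3 → R)) := by
  rw [th_pi_mem]
  rintro ⟨j, a⟩
  rw [thδ2_apply]
  exact sub_mem (Ideal.mul_mem_right _ _ (th_x_mem x hx _))
    (Ideal.mul_mem_right _ _ (th_x_mem x hx _))

lemma th_kmin3 (x : Fin 3 → R) (hx : Ideal.span {x 0, x 1, x 2} = maximalIdeal R)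
    (σ : Finset (Fin n)) (k) :
    thδ3 x σ k ∈ maximalIdeal R • (⊤ : Submodule R (σ × Fin 3 → R)) := by
  rw [th_pi_mem]
  rintro ⟨j, a⟩
  rw [thδ3_apply]
  exact Ideal.mul_mem_right _ _ (th_x_mem x hx _)

lemma th_star2 (x : Fin 3 → R) (hx : Ideal.span {x 0, x 1, x 2} = maximalIdeal R)
    (σ : Finset (Fin n))
    (r1 : ∀ v : Fin 3 → R, ∑ a, x a * v a = 0 →
      ∃ w : Fin 3 → R, ∀ a, v a = x (a + 1) * w (a + 2) - x (a + 2) * w (a + 1)) (k)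
    (h : thδ2 x σ k ∈ (maximalIdeal R ^ 2) • (⊤ : Submodule R (σ × Fin 3 → R))) :
    k ∈ maximalIdeal R • (⊤ : Submodule R (σ × Fin 3 → R)) := by
  rw [th_pi_mem] at h ⊢
  rintro ⟨j, a⟩
  have e0 : x 1 * k (j, 2) - x 2 * k (j, 1) ∈ maximalIdeal R ^ 2 := by
    simpa [thδ2_apply] using h (j, 0)
  have e1 : x 2 * k (j, 0) - x 0 * k (j, 2) ∈ maximalIdeal R ^ 2 := by
    simpa [thδ2_apply] using h (j, 1)
  have f1 := th_indep x hx r1 ![0, k (j, 2), -k (j, 1)] (by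
    rw [Fin.sum_univ_three]
    convert e0 using 1
    simp
    ring)
  have f2 := th_indep x hx r1 ![-k (j, 2), 0, k (j, 0)] (by
    rw [Fin.sum_univ_three]
    convert e1 using 1
    simp
    ring)
  have g0 : k (j, 0) ∈ maximalIdeal R := by simpa using f2 2
  have g1 : k (j, 1) ∈ maximalIdeal R := by
    have := f1 2
    rw [← neg_mem_iff]
    simpa using this
  have g2 : k (j, 2) ∈ maximalIdeal R := by simpa using f1 1
  fin_cases a
  · exact g0
  · exact g1
  · exact g2

lemma th_star3 (x : Fin 3 → R) (hx : Ideal.span {x 0, x 1, x 2} = maximalIdeal R)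
    (σ : Finset (Fin n))
    (r1 : ∀ v : Fin 3 → R, ∑ a, x a * v a = 0 →
      ∃ w : Fin 3 → R, ∀ a, v a = x (a + 1) * w (a + 2) - x (a + 2) * w (a + 1)) (k)
    (h : thδ3 x σ k ∈ (maximalIdeal R ^ 2) • (⊤ : Submodule R (σ × Fin 3 → R))) :
    k ∈ maximalIdeal R • (⊤ : Submodule R (σ → R)) := by
  rw [th_pi_mem] at h ⊢
  intro j
  have e0 := h (j, 0)
  rw [thδ3_apply] at e0
  have f1 := th_indep x hx r1 ![k j, 0, 0] (by
    rw [Fin.sum_univ_three]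
    simpa using e0) 0
  simpa using f1

lemma th_αK (x : Fin 3 → R) (hx : Ideal.span {x 0, x 1, x 2} = maximalIdeal R)
    (σ : Finset (Fin n)) (k) :
    thα x σ (0, k) ∈ maximalIdeal R • (⊤ : Submodule R (Fin n → R)) := by
  rw [th_pi_mem]
  intro i
  by_cases hi : i ∈ σ
  · rw [thα_mem x σ _ hi]
    exact sum_mem fun a _ => Ideal.mul_mem_right _ _ (th_x_mem x hx _)
  · rw [thα_not_mem x σ _ hi]
    exact zero_mem _

lemma th_hlift (x : Fin 3 → R) (hx : Ideal.span {x 0, x 1, x 2} = maximalIdeal R)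
    (σ : Finset (Fin n)) (v : Fin n → R)
    (hv : v ∈ (maximalIdeal R ^ 2) • (⊤ : Submodule R (Fin n → R))) :
      ∃ u ∈ (maximalIdeal R ^ 2) • (⊤ : Submodule R ({i // i ∉ σ} → R)),
      ∃ k ∈ maximalIdeal R • (⊤ : Submodule R (σ × Fin 3 → R)), thα x σ (u, k) = v := by
  rw [th_pi_mem] at hv
  choose m hm e using fun i => th_mem_m2 x hx (hv i)
  refine ⟨fun i => v i.1, (th_pi_mem _ _).2 fun i => hv _, fun ja => m ja.1.1 ja.2,
    (th_pi_mem _ _).2 fun ja => hm _ _, ?_⟩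
  ext i
  by_cases hi : i ∈ σ
  · rw [thα_mem x σ _ hi, ← e]
  · rw [thα_not_mem x σ _ hi]

lemma th_αE [DecidableEq (Fin n)] (x : Fin 3 → R) (σ : Finset (Fin n)) (i : {i // i ∉ σ}) :
    thα x σ ((Pi.basisFun R {i // i ∉ σ}) i, 0) = Pi.single i.1 1 := by
  ext i'
  by_cases hi : i' ∈ σ
  · rw [thα_mem x σ _ hi, Pi.single_eq_of_ne (by rintro rfl; exact i.2 hi)]
    simp
  · rw [thα_not_mem x σ _ hi]
    simp [Pi.single_apply, Subtype.ext_iff]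

lemma th_range_trim (x : Fin 3 → R) (hx : Ideal.span {x 0, x 1, x 2} = maximalIdeal R)
    (d1 : (Fin n → R) →ₗ[R] R) (σ : Finset (Fin n)) :
    LinearMap.range (d1 ∘ₗ thα x σ) = trimIdeal R (fun i => d1 (Pi.single i 1)) σ := by
  classical
  apply le_antisymm
  · rintro _ ⟨v, rfl⟩
    rw [LinearMap.comp_apply, pi_eq_sum_univ' (thα x σ v), map_sum]
    refine sum_mem fun i _ => ?_
    rw [map_smul, smul_eq_mul]
    by_cases hi : i ∈ σ
    · refine Ideal.mem_sup_right (Ideal.mul_mem_mul ?_ (Ideal.subset_span ⟨i, hi, ?_⟩))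
      · rw [thα_mem x σ _ hi]
        exact sum_mem fun a _ => Ideal.mul_mem_right _ _ (th_x_mem x hx _)
      · congr 1
    · refine Ideal.mem_sup_left (Ideal.mul_mem_left _ _ (Ideal.subset_span ⟨i, hi, ?_⟩))
      congr 1
  · refine sup_le (Ideal.span_le.2 ?_) (Ideal.mul_le.2 fun r hr s hs => ?_)
    · rintro _ ⟨i, hi, rfl⟩
      refine ⟨((Pi.basisFun R {i // i ∉ σ}) ⟨i, hi⟩, 0), ?_⟩
      rw [LinearMap.comp_apply, th_αE]
    · induction hs using Submodule.span_induction with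
      | zero => simp
      | add a b _ _ ha hb => rw [mul_add]; exact add_mem ha hb
      | smul c a _ ha =>
        rw [smul_eq_mul, mul_left_comm]
        exact Submodule.smul_mem _ c ha
      | mem a ha =>
        obtain ⟨j, hj, rfl⟩ := ha
        obtain ⟨m, hm⟩ := th_mem_m x hx hr
        refine ⟨(0, fun ja => if ja.1.1 = j then m ja.2 else 0), ?_⟩
        have : thα x σ (0, fun ja => if ja.1.1 = j then m ja.2 else 0) = r • Pi.single j 1 := by
          ext i
          by_cases hi : i ∈ σ
          · rw [thα_mem x σ _ hi]
            by_cases hij : i = j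
            · subst hij
              simpa using hm
            · simp [hij]
          · rw [thα_not_mem x σ _ hi]
            have hij : i ≠ j := by rintro rfl; exact hi hj
            simp [hij]
        rw [LinearMap.comp_apply, this, map_smul, smul_eq_mul]

lemma th_card (n p : ℕ) (hp : p < n) (σ : Finset (Fin n))
    [Fintype {i : {i // i ∉ σ} // ((i : Fin n) : ℕ) < p}] :
    Fintype.card {i : {i // i ∉ σ} // ((i : Fin n) : ℕ) < p} =
      p - ((σ : Set (Fin n)) ∩ {i | (i : ℕ) < p}).ncard := by
  classical
  have e1 : ((σ : Set (Fin n)) ∩ {i | (i : ℕ) < p}) =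
      ((Finset.univ.filter fun i : Fin n => (i : ℕ) < p ∧ i ∈ σ : Finset (Fin n)) : Set (Fin n)) := by
    ext i
    simp [and_comm]
  rw [e1, Set.ncard_coe_finset]
  have e2 : Fintype.card {i : {i // i ∉ σ} // ((i : Fin n) : ℕ) < p} =
      (Finset.univ.filter fun i : Fin n => (i : ℕ) < p ∧ i ∉ σ).card := by
    rw [← Fintype.card_subtype]
    refine Fintype.card_congr ((Equiv.subtypeSubtypeEquivSubtypeInter
      (fun i : Fin n => i ∉ σ) (fun i : Fin n => (i : ℕ) < p)).trans
      (Equiv.subtypeEquivRight fun i => and_comm))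
  have e3 : (Finset.univ.filter fun i : Fin n => (i : ℕ) < p).card = p := by
    have : (Finset.univ.filter fun i : Fin n => (i : ℕ) < p) = Finset.Iio (⟨p, hp⟩ : Fin n) := by
      ext i
      simp [Fin.lt_def]
    rw [this]
    simp
  have e4 := Finset.card_filter_add_card_filter_not
    (s := Finset.univ.filter fun i : Fin n => (i : ℕ) < p) (fun i => i ∈ σ)
  rw [Finset.filter_filter, Finset.filter_filter, e3] at e4
  rw [e2]
  omega

end TrimKoszul

/-!
STATEMENT 10 (Corollary 4.12): in the situation of Lemma 4.11 (regular local of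
dimension 3, `R/I` of class `H(p,q)` with minimal DG-algebra resolution `F` in standard
form and `f₁ⁱ ·_F f₁ʲ ∈ 𝔪² F₂` for `i, j ≠ p+1`), assume moreover `d₂(F₂) ⊆ 𝔪² F₁`.
Then for every index set `σ` with `p+1 ∉ σ`, the trimmed ideal `tm_σ(I)` is either
Golod or defines a ring of Tor-algebra class `H(p - |σ ∩ [p]|, q)`.
-/
theorem trim_quadratic_torclass_H
    {R : Type} [CommRing R] [IsNoetherianRing R] [IsLocalRing R]
    -- regular local of dimension 3
    (x : Fin 3 → R)
    (hreg : RingTheory.Sequence.IsRegular R [x 0, x 1, x 2])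
    (hx : Ideal.span {x 0, x 1, x 2} = maximalIdeal R)
    (I : Ideal R) (p q : ℕ)
    (n1 n2 n3 : ℕ) (hp : p < n1) (hpq : p + q ≤ n2) (hq3 : q ≤ n3)
    (d1 : (Fin n1 → R) →ₗ[R] R) (d2 : (Fin n2 → R) →ₗ[R] (Fin n1 → R))
    (d3 : (Fin n3 → R) →ₗ[R] (Fin n2 → R))
    -- minimal free resolution of `R/I`
    (hI : LinearMap.range d1 = I)
    (hex1 : LinearMap.ker d1 = LinearMap.range d2)
    (hex2 : LinearMap.ker d2 = LinearMap.range d3)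
    (hex3 : LinearMap.ker d3 = ⊥)
    (hmin1 : ∀ v, d1 v ∈ maximalIdeal R)
    (hmin2 : ∀ v, d2 v ∈ maximalIdeal R • (⊤ : Submodule R (Fin n1 → R)))
    (hmin3 : ∀ v, d3 v ∈ maximalIdeal R • (⊤ : Submodule R (Fin n2 → R)))
    -- DG-algebra structure on `F`
    (m11 : (Fin n1 → R) →ₗ[R] (Fin n1 → R) →ₗ[R] (Fin n2 → R))
    (m12 : (Fin n1 → R) →ₗ[R] (Fin n2 → R) →ₗ[R] (Fin n3 → R))
    (hleib1 : ∀ a b, d2 (m11 a b) = d1 a • b - d1 b • a)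
    (halt : ∀ a, m11 a a = 0) (hskew : ∀ a b, m11 a b = - m11 b a)
    (hleib2 : ∀ a z, d3 (m12 a z) = d1 a • z - m11 a (d2 z))
    (hassoc : ∀ a b c, m12 c (m11 a b) = m12 a (m11 b c))
    -- `F` is in standard form of class `H(p,q)`
    (htabH1 : ∀ b : Fin n1, ∀ hb : (b : ℕ) < p,
      m11 (Pi.single (⟨p, hp⟩ : Fin n1) 1) (Pi.single b 1) -
        Pi.single (⟨(b : ℕ), by omega⟩ : Fin n2) 1 ∈
      maximalIdeal R • (⊤ : Submodule R (Fin n2 → R)))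
    (htabH2 : ∀ a b : Fin n1, ¬((a : ℕ) = p ∧ (b : ℕ) < p) → ¬((b : ℕ) = p ∧ (a : ℕ) < p) →
      m11 (Pi.single a 1) (Pi.single b 1) ∈
        maximalIdeal R • (⊤ : Submodule R (Fin n2 → R)))
    (htabH3 : ∀ b : Fin n2, ∀ hb1 : p ≤ (b : ℕ), ∀ hb2 : (b : ℕ) < p + q,
      m12 (Pi.single (⟨p, hp⟩ : Fin n1) 1) (Pi.single b 1) -
        Pi.single (⟨(b : ℕ) - p, by omega⟩ : Fin n3) 1 ∈
      maximalIdeal R • (⊤ : Submodule R (Fin n3 → R)))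
    (htabH4 : ∀ (a : Fin n1) (b : Fin n2), ¬((a : ℕ) = p ∧ p ≤ (b : ℕ) ∧ (b : ℕ) < p + q) →
      m12 (Pi.single a 1) (Pi.single b 1) ∈
        maximalIdeal R • (⊤ : Submodule R (Fin n3 → R)))
    -- `f₁ⁱ ·_F f₁ʲ ∈ 𝔪² F₂` for all `i, j ≠ p+1`
    (hFF : ∀ a b : Fin n1, (a : ℕ) ≠ p → (b : ℕ) ≠ p →
      m11 (Pi.single a 1) (Pi.single b 1) ∈ (maximalIdeal R ^ 2) • (⊤ : Submodule R (Fin n2 → R)))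
    -- `d₂(F₂) ⊆ 𝔪² F₁`
    (hquad : ∀ v, d2 v ∈ (maximalIdeal R ^ 2) • (⊤ : Submodule R (Fin n1 → R)))
    -- an index set not containing `p+1`
    (σ : Finset (Fin n1)) (hpnot : (⟨p, hp⟩ : Fin n1) ∉ σ) :
    IsGolodQuotient R (trimIdeal R (fun i => d1 (Pi.single i 1)) σ) ∨
    HasTorClassH R (trimIdeal R (fun i => d1 (Pi.single i 1)) σ)
      (p - ((σ : Set (Fin n1)) ∩ {i | (i : ℕ) < p}).ncard) q := by
  classical
  by_cases hσ : σ = ∅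
  · subst hσ
    right
    have hJ : LinearMap.range d1 = trimIdeal R (fun i => d1 (Pi.single i 1)) ∅ := by
      have := th_range_trim x hx d1 ∅
      rw [← this]
      apply le_antisymm
      · rintro _ ⟨v, rfl⟩
        refine ⟨((fun i => v i.1), 0), ?_⟩
        rw [LinearMap.comp_apply]
        congr 1
      · rintro _ ⟨v, rfl⟩
        exact ⟨_, rfl⟩
    simp only [Finset.coe_empty, Set.empty_inter, Set.ncard_empty, Nat.sub_zero]
    exact ⟨n1, n2, n3, hp, hpq, hq3, d1, d2, d3, m11, m12, hJ, hex1, hex2, hex3, hmin1, hmin2,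
      hmin3, hleib1, halt, hskew, hleib2, hassoc, htabH1, htabH2, htabH3, htabH4⟩
  · right
    obtain ⟨j0, hj0⟩ := Finset.nonempty_iff_ne_empty.2 hσ
    have hd1 : ∀ v, d1 v ∈ maximalIdeal R ^ 2 := by
      have hs : ∀ i, d1 (Pi.single i 1) ∈ maximalIdeal R ^ 2 := by
        intro i
        obtain ⟨i', hi'⟩ : ∃ i', i' ≠ i := by
          by_cases h : j0 = i
          · exact ⟨⟨p, hp⟩, fun h' => hpnot (by rw [h', ← h]; exact hj0)⟩
          · exact ⟨j0, h⟩
        have h := (th_pi_mem _ _).1 (hquad (m11 (Pi.single i 1) (Pi.single i' 1))) i'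
        rw [hleib1] at h
        simpa [hi'] using h
      intro v
      rw [pi_eq_sum_univ' v, map_sum]
      refine sum_mem fun i _ => ?_
      rw [map_smul]
      exact Ideal.mul_mem_left _ _ (hs i)
    obtain ⟨r1, r2, r3⟩ := th_koszul x hreg
    have key := th_core p q n1 n2 n3 hp hpq hq3 d1 d2 d3 hex1 hex2 hex3 hmin3 m11 m12 hleib1
      halt hskew hleib2 htabH1 htabH2 htabH3 htabH4 hquad hd1
      (Pi.basisFun R {i // i ∉ σ}) (Pi.basisFun R (σ × Fin 3)) (Pi.basisFun R (σ × Fin 3))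
      (Pi.basisFun R σ) (thα x σ) (thδ2 x σ) (thδ3 x σ)
      (th_kex1 x σ r1) (th_kex2 x σ r2) (th_kex3 x σ r3)
      (th_kmin2 x hx σ) (th_kmin3 x hx σ) (th_star2 x hx σ r1) (th_star3 x hx σ r1)
      (th_αK x hx σ) (th_hlift x hx σ) Subtype.val Subtype.val_injective
      (th_αE x σ) ⟨⟨p, hp⟩, hpnot⟩ rfl
    rw [th_range_trim x hx d1 σ] at key
    rwa [th_card n1 p hp σ] at key
end

section
/- Let (R, 𝔪, k) be a regular local ring of dimension 3. Let (m, n, r) be a tuple of positive integers with r = m − 3(n−1) ≥ 2, n ≥ 2, and m ≥ 2n+3 ≥ 7. Then there exists an ideal J ⊆ R with pd_R(R/J) = 3 such that R/J has Tor-algebra class G(r) and realizes the tuple (m, n, r): the minimal free resolution 0 → F_3 → F_2 → F_1 → R of R/J has rank_R(F_1) = m and rank_R(F_3) = n. -/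
open IsLocalRing

/-- `R/J` has projective dimension 3, Tor-algebra class `G(r)` (normal form
`f̄₁ⁱ f̄₂ⁱ = f̄₃¹` for `1 ≤ i ≤ r`, all other products of basis elements zero)
and realizes the tuple `(m, n, r)`: its minimal free resolution
`0 → F₃ → F₂ → F₁ → R` has `rank F₁ = m` and `rank F₃ = n`. -/
def HasTorClassGWithRanks (R : Type) [CommRing R] [IsLocalRing R]
    (J : Ideal R) (m n r : ℕ) : Prop :=
  ∃ (n2 : ℕ) (h3 : 0 < n), r ≤ m ∧ r ≤ n2 ∧
  ∃ (d1 : (Fin m → R) →ₗ[R] R) (d2 : (Fin n2 → R) →ₗ[R] (Fin m → R))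
    (d3 : (Fin n → R) →ₗ[R] (Fin n2 → R))
    (m11 : (Fin m → R) →ₗ[R] (Fin m → R) →ₗ[R] (Fin n2 → R))
    (m12 : (Fin m → R) →ₗ[R] (Fin n2 → R) →ₗ[R] (Fin n → R)),
    -- minimal free resolution of `R/J`
    LinearMap.range d1 = J ∧
    LinearMap.ker d1 = LinearMap.range d2 ∧
    LinearMap.ker d2 = LinearMap.range d3 ∧
    LinearMap.ker d3 = ⊥ ∧
    (∀ v, d1 v ∈ maximalIdeal R) ∧
    (∀ v, d2 v ∈ maximalIdeal R • (⊤ : Submodule R (Fin m → R))) ∧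
    (∀ v, d3 v ∈ maximalIdeal R • (⊤ : Submodule R (Fin n2 → R))) ∧
    -- DG-algebra axioms
    (∀ a b, d2 (m11 a b) = d1 a • b - d1 b • a) ∧
    (∀ a, m11 a a = 0) ∧ (∀ a b, m11 a b = - m11 b a) ∧
    (∀ a z, d3 (m12 a z) = d1 a • z - m11 a (d2 z)) ∧
    (∀ a b c, m12 c (m11 a b) = m12 a (m11 b c)) ∧
    -- `G(r)` normal form for the induced products on `F ⊗ k`
    (∀ a b : Fin m, m11 (Pi.single a 1) (Pi.single b 1) ∈
      maximalIdeal R • (⊤ : Submodule R (Fin n2 → R))) ∧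
    (∀ (a : Fin m) (b : Fin n2),
      m12 (Pi.single a 1) (Pi.single b 1) -
        (if (a : ℕ) = (b : ℕ) ∧ (a : ℕ) < r then Pi.single (⟨0, h3⟩ : Fin n) 1 else 0) ∈
      maximalIdeal R • (⊤ : Submodule R (Fin n → R)))


namespace TrimG

/-- Elementary form of `a, b, c` is a regular sequence. -/
def Reg {R : Type} [CommRing R] (a b c : R) : Prop :=
  (∀ u, a * u = 0 → u = 0) ∧ (∀ u v, b * u = a * v → ∃ w, u = a * w) ∧
    (∀ u v w, c * u = a * v + b * w → ∃ d e, u = a * d + b * e)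

theorem reg_of_isWeaklyRegular {R : Type} [CommRing R] (a b c : R)
    (h : RingTheory.Sequence.IsWeaklyRegular R [a, b, c]) : Reg a b c := by
  have h1 := h.regular_mod_prev 0 (by simp)
  have h2 := h.regular_mod_prev 1 (by simp)
  have h3 := h.regular_mod_prev 2 (by simp)
  simp only [isSMulRegular_quotient_iff_mem_of_smul_mem] at h1 h2 h3
  simp [Ideal.ofList_cons, ← Ideal.span_insert, Ideal.mem_span_pair, Ideal.mem_span_singleton']
    at h1 h2 h3
  refine ⟨h1, ?_, ?_⟩
  · intro u v huv
    obtain ⟨w, hw⟩ := h2 u v (by rw [huv]; ring)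
    exact ⟨w, by rw [← hw]; ring⟩
  · intro u v w huv
    obtain ⟨d, hd⟩ := h3 u v w (by rw [huv]; ring)
    obtain ⟨e, hd⟩ := hd
    exact ⟨d, e, by rw [← hd]; ring⟩

/-- All that we need about a regular system of parameters. -/
structure RSP {R : Type} [CommRing R] [IsLocalRing R] (x : Fin 3 → R) : Prop where
  r012 : Reg (x 0) (x 1) (x 2)
  r120 : Reg (x 1) (x 2) (x 0)
  r201 : Reg (x 2) (x 0) (x 1)
  mem : ∀ a, a ∈ maximalIdeal R ↔ ∃ u v w, a = x 0 * u + x 1 * v + x 2 * w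

theorem rsp_of {R : Type} [CommRing R] [IsNoetherianRing R] [IsLocalRing R]
    (x : Fin 3 → R)
    (hreg : RingTheory.Sequence.IsRegular R [x 0, x 1, x 2])
    (hx : Ideal.span {x 0, x 1, x 2} = maximalIdeal R) : RSP x := by
  have hm : ∀ i, x i ∈ maximalIdeal R := by
    intro i
    rw [← hx]
    apply Ideal.subset_span
    fin_cases i <;> simp
  have hw := hreg.toIsWeaklyRegular
  refine ⟨reg_of_isWeaklyRegular _ _ _ hw, reg_of_isWeaklyRegular _ _ _ ?_,
    reg_of_isWeaklyRegular _ _ _ ?_, ?_⟩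
  · refine IsLocalRing.isWeaklyRegular_of_perm_of_subset_maximalIdeal hw ?_ ?_
    · exact (List.perm_append_comm (l₁ := [x 0]) (l₂ := [x 1, x 2]))
    · intro r hr
      simp at hr
      rcases hr with rfl | rfl | rfl <;> apply hm
  · refine IsLocalRing.isWeaklyRegular_of_perm_of_subset_maximalIdeal hw ?_ ?_
    · exact (List.perm_append_comm (l₁ := [x 0, x 1]) (l₂ := [x 2]))
    · intro r hr
      simp at hr
      rcases hr with rfl | rfl | rfl <;> apply hm
  · intro a
    rw [← hx, Ideal.mem_span_insert]
    constructor
    · rintro ⟨u, z, hz, rfl⟩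
      obtain ⟨v, w, rfl⟩ := Ideal.mem_span_pair.1 hz
      exact ⟨u, v, w, by ring⟩
    · rintro ⟨u, v, w, rfl⟩
      exact ⟨u, v * x 1 + w * x 2, Ideal.mem_span_pair.2 ⟨v, w, rfl⟩, by ring⟩

section
variable {R : Type} [CommRing R] [IsLocalRing R] {x : Fin 3 → R}

theorem RSP.x_mem (h : RSP x) (i : Fin 3) : x i ∈ maximalIdeal R := by
  rw [h.mem]
  fin_cases i
  · exact ⟨1, 0, 0, by simp⟩
  · exact ⟨0, 1, 0, by simp⟩
  · exact ⟨0, 0, 1, by simp⟩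

/-- first Koszul homology vanishes -/
theorem RSP.koszul1 (h : RSP x) (c : Fin 3 → R) (hc : ∑ j, x j * c j = 0) :
    ∃ μ, c = crossProduct x μ := by
  rw [Fin.sum_univ_three] at hc
  obtain ⟨h1, h2, h3⟩ := h.r012
  obtain ⟨d, e, hde⟩ := h3 (c 2) (-c 0) (-c 1) (by linear_combination hc)
  obtain ⟨f, hf⟩ := h2 (c 1 + x 2 * e) (-(c 0 + x 2 * d)) (by
    rw [hde] at hc; linear_combination hc)
  have h0 := h1 (c 0 + x 2 * d + x 1 * f) (by
    rw [hde] at hc; linear_combination hc - x 1 * hf)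
  refine ⟨![-e, d, -f], ?_⟩
  rw [cross_apply]
  ext j
  fin_cases j
  · simp; linear_combination h0
  · simp; linear_combination hf
  · simp; linear_combination hde

/-- second Koszul homology vanishes -/
theorem RSP.koszul2 (h : RSP x) (μ : Fin 3 → R) (hc : crossProduct x μ = 0) :
    ∃ l : R, μ = l • x := by
  rw [cross_apply] at hc
  have e0 := congrFun hc 0
  have e1 := congrFun hc 1
  have e2 := congrFun hc 2
  simp at e0 e1 e2
  obtain ⟨h1, h2, h3⟩ := h.r012
  obtain ⟨l, hl⟩ := h2 (μ 0) (μ 1) (by linear_combination -e2)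
  have f1 : μ 1 - x 1 * l = 0 := h1 _ (by rw [hl] at e2; linear_combination e2)
  have f2 : μ 2 - x 2 * l = 0 := h1 _ (by rw [hl] at e1; linear_combination -e1)
  refine ⟨l, ?_⟩
  ext j
  fin_cases j
  · simp; linear_combination hl
  · simp; linear_combination f1
  · simp; linear_combination f2

theorem RSP.mem_pair (h : RSP x) (i j : Fin 3) (u v : R) :
    x i * u + x j * v ∈ maximalIdeal R :=
  add_mem (Ideal.mul_mem_right _ _ (h.x_mem i)) (Ideal.mul_mem_right _ _ (h.x_mem j))

theorem RSP.syz (h : RSP x) (c : Fin 3 → R) (hc : ∑ j, x j * c j = 0) (j : Fin 3) :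
    c j ∈ maximalIdeal R := by
  obtain ⟨μ, rfl⟩ := h.koszul1 c hc
  rw [cross_apply]
  fin_cases j
  · simpa [sub_eq_add_neg] using h.mem_pair 1 2 (μ 2) (-μ 1)
  · simpa [sub_eq_add_neg] using h.mem_pair 2 0 (μ 0) (-μ 2)
  · simpa [sub_eq_add_neg] using h.mem_pair 0 1 (μ 1) (-μ 0)

/-- elements of `𝔪 * 𝔪` -/
theorem RSP.mem_sq (h : RSP x) (a : R) (ha : a ∈ maximalIdeal R * maximalIdeal R) :
    ∃ c : Fin 3 → R, (∀ j, c j ∈ maximalIdeal R) ∧ a = ∑ j, x j * c j := by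
  induction ha using Submodule.mul_induction_on' with
  | mem_mul_mem m hm n hn =>
    obtain ⟨u, v, w, rfl⟩ := (h.mem m).1 hm
    refine ⟨![u * n, v * n, w * n], ?_, ?_⟩
    · intro j
      fin_cases j <;> exact Ideal.mul_mem_left _ _ hn
    · simp [Fin.sum_univ_three]; ring
  | add a ha b hb iha ihb =>
    obtain ⟨c, hc, rfl⟩ := iha
    obtain ⟨d, hd, rfl⟩ := ihb
    exact ⟨c + d, fun j => add_mem (hc j) (hd j), by
      simp [Fin.sum_univ_three]; ring⟩

/-- the `x j` are linearly independent in `𝔪/𝔪²` -/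
theorem RSP.indep (h : RSP x) (c : Fin 3 → R)
    (hc : ∑ j, x j * c j ∈ maximalIdeal R * maximalIdeal R) (j : Fin 3) :
    c j ∈ maximalIdeal R := by
  obtain ⟨d, hd, he⟩ := h.mem_sq _ hc
  have := h.syz (c - d) (by
    simp only [Pi.sub_apply, mul_sub, Finset.sum_sub_distrib, he, sub_self]) j
  have h2 := add_mem this (hd j)
  simpa using h2

theorem Reg.sq_syz {a b c : R} (h : Reg a b c) (hab : ∀ u v, a * u + b * v ∈ maximalIdeal R)
    (u v w : R) (he : a * a * u + b * b * v + c * c * w = 0) : w ∈ maximalIdeal R := by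
  obtain ⟨h1, h2, h3⟩ := h
  obtain ⟨d, e, hde⟩ := h3 (c * w) (-a * u) (-b * v) (by linear_combination he)
  obtain ⟨d', e', hde'⟩ := h3 w d e hde
  rw [hde']; exact hab _ _

theorem RSP.sq_syz (h : RSP x) (u : Fin 3 → R) (he : ∑ j, x j * x j * u j = 0) (j : Fin 3) :
    u j ∈ maximalIdeal R := by
  rw [Fin.sum_univ_three] at he
  fin_cases j
  · exact h.r120.sq_syz (h.mem_pair 1 2) (u 1) (u 2) (u 0) (by linear_combination he)
  · exact h.r201.sq_syz (h.mem_pair 2 0) (u 2) (u 0) (u 1) (by linear_combination he)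
  · exact h.r012.sq_syz (h.mem_pair 0 1) (u 0) (u 1) (u 2) (by linear_combination he)

end
end TrimG


namespace TrimG
section
variable {R : Type} [CommRing R]

theorem sat_aux {M : Type} [AddCommGroup M] [Module R M] (K S : Submodule R M) (x y z : R)
    (hP : ∀ u ∈ K, x • u ∈ S → y • u ∈ S → z • u ∈ S → u ∈ S) :
    ∀ N a b c : ℕ, a + b + c ≤ N → ∀ u ∈ K, x ^ a • u ∈ S → y ^ b • u ∈ S → z ^ c • u ∈ S →
      u ∈ S := by
  intro N
  induction N with
  | zero =>
    intro a b c h u hu h1 h2 h3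
    obtain rfl : a = 0 := by omega
    simpa using h1
  | succ N ih =>
    intro a b c h u hu h1 h2 h3
    rcases a with _ | a
    · simpa using h1
    rcases b with _ | b
    · simpa using h2
    rcases c with _ | c
    · simpa using h3
    apply hP u hu
    · refine ih a (b + 1) (c + 1) (by omega) _ (K.smul_mem _ hu) ?_ ?_ ?_
      · rwa [smul_smul, ← pow_succ]
      · rw [smul_comm]; exact S.smul_mem _ h2
      · rw [smul_comm]; exact S.smul_mem _ h3
    · refine ih (a + 1) b (c + 1) (by omega) _ (K.smul_mem _ hu) ?_ ?_ ?_
      · rw [smul_comm]; exact S.smul_mem _ h1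
      · rwa [smul_smul, ← pow_succ]
      · rw [smul_comm]; exact S.smul_mem _ h3
    · refine ih (a + 1) (b + 1) c (by omega) _ (K.smul_mem _ hu) ?_ ?_ ?_
      · rw [smul_comm]; exact S.smul_mem _ h1
      · rw [smul_comm]; exact S.smul_mem _ h2
      · rwa [smul_smul, ← pow_succ]

/-- the annihilator of `u` modulo `S` -/
def annI {M : Type} [AddCommGroup M] [Module R M] (S : Submodule R M) (u : M) : Ideal R :=
  S.comap (LinearMap.toSpanSingleton R M u)

theorem mem_annI {M : Type} [AddCommGroup M] [Module R M] (S : Submodule R M) (u : M) (r : R) :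
    r ∈ annI S u ↔ r • u ∈ S := Iff.rfl

theorem sat_rad {M : Type} [AddCommGroup M] [Module R M] (K S : Submodule R M) (x y z : R)
    (hP : ∀ u ∈ K, x • u ∈ S → y • u ∈ S → z • u ∈ S → u ∈ S) (u : M) (hu : u ∈ K)
    (hx : x ∈ (annI S u).radical)
    (hy : y ∈ (annI S u).radical)
    (hz : z ∈ (annI S u).radical) : u ∈ S := by
  obtain ⟨a, ha⟩ := hx
  obtain ⟨b, hb⟩ := hy
  obtain ⟨c, hc⟩ := hz
  exact sat_aux K S x y z hP _ a b c le_rfl u hu ha hb hc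

variable {ι : Type}

theorem reg_pi {a b c : R} (h : Reg a b c) (u : ι → R) (he : a • u = 0) : u = 0 := by
  ext i
  exact h.1 _ (congrFun he i)

/-- acyclicity at the second spot -/
theorem depth2 {a b c : R} (h : Reg a b c) (g : ι → R) (hg : ∀ r : R, r • g = 0 → r = 0)
    (v : ι → R) (h1 : a • v ∈ Submodule.span R {g}) (h2 : b • v ∈ Submodule.span R {g}) :
    v ∈ Submodule.span R {g} := by
  rw [Submodule.mem_span_singleton] at *
  obtain ⟨α, hα⟩ := h1
  obtain ⟨β, hβ⟩ := h2
  have e : (b * α - a * β) • g = 0 := by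
    rw [sub_smul, mul_smul, mul_smul, hα, hβ, smul_comm, sub_self]
  obtain ⟨γ, rfl⟩ := h.2.1 α β (sub_eq_zero.1 (hg _ e))
  refine ⟨γ, ?_⟩
  rw [← sub_eq_zero]
  apply reg_pi h
  rw [smul_sub, ← hα, smul_smul, sub_self]

/-- acyclicity at the first spot -/
theorem depth1 {a b c : R} (h : Reg a b c) (g : ι → R) (hg : ∀ r : R, r • g = 0 → r = 0)
    (X : (ι → R) →ₗ[R] (ι → R)) (hXg : X g = 0)
    (hE2 : ∀ v, X v = 0 → v ∈ Submodule.span R {g})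
    (u : ι → R) (h1 : a • u ∈ LinearMap.range X) (h2 : b • u ∈ LinearMap.range X)
    (h3 : c • u ∈ LinearMap.range X) : u ∈ LinearMap.range X := by
  obtain ⟨α, hα⟩ := h1
  obtain ⟨β, hβ⟩ := h2
  obtain ⟨γ, hγ⟩ := h3
  obtain ⟨ρ, hρ⟩ := Submodule.mem_span_singleton.1 (hE2 (b • α - a • β) (by
    simp [hα, hβ, smul_comm a b]))
  obtain ⟨s, hs⟩ := Submodule.mem_span_singleton.1 (hE2 (c • α - a • γ) (by
    simp [hα, hγ, smul_comm a c]))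
  obtain ⟨t, ht⟩ := Submodule.mem_span_singleton.1 (hE2 (c • β - b • γ) (by
    simp [hβ, hγ, smul_comm b c]))
  have e := hg (c * ρ - b * s + a * t) (by
    rw [add_smul, sub_smul, mul_smul, mul_smul, mul_smul, hρ, hs, ht]
    module)
  obtain ⟨d, f, hd⟩ := h.2.2 ρ (-t) s (by linear_combination e)
  have k : b • (α - f • g) = a • (β + d • g) := by
    have : b • α - a • β = (a * d + b * f) • g := by rw [← hρ, hd]
    rw [← sub_eq_zero]
    calc b • (α - f • g) - a • (β + d • g) = (b • α - a • β) - (a * d + b * f) • g := by module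
      _ = 0 := by rw [this, sub_self]
  have k2 : ∀ i, ∃ w, (α - f • g) i = a * w := fun i => h.2.1 _ _ (congrFun k i)
  choose w hw using k2
  refine ⟨w, ?_⟩
  rw [← sub_eq_zero]
  apply reg_pi h
  have : a • w = α - f • g := by ext i; exact (hw i).symm
  rw [smul_sub, ← map_smul, this, map_sub, map_smul, hXg, hα]
  simp
end
end TrimG


namespace TrimG
section
variable {R : Type} [CommRing R]

/-- continuants -/
def Kp (z0 Z t : R) : ℕ → R
  | 0 => 1
  | 1 => z0
  | n + 2 => Z * Kp z0 Z t (n + 1) - t * Kp z0 Z t n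

/-- The linear relations satisfied by the two branches of a sequence. -/
structure Rec {N : Type} [AddCommGroup N] [Module R N] (z0 Z X Y : R) (k : ℕ) (P M : ℕ → N) :
    Prop where
  hk : 1 ≤ k
  p0 : z0 • P 0 = X • P 1
  p : ∀ i, i + 2 ≤ k → Z • P (i + 1) = X • P (i + 2) + Y • P i
  m0 : z0 • M 0 = Y • M 1
  m : ∀ i, i + 2 ≤ k → Z • M (i + 1) = Y • M (i + 2) + X • M i
  c : P k = M k
  e : X • M (k - 1) = Y • P (k - 1)

variable {N : Type} [AddCommGroup N] [Module R N] {z0 Z X Y : R} {k : ℕ} {P M : ℕ → N}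

theorem Rec.symm (h : Rec z0 Z X Y k P M) : Rec z0 Z Y X k M P :=
  ⟨h.hk, h.m0, h.m, h.p0, h.p, h.c.symm, h.e.symm⟩

theorem Rec.a1 (h : Rec z0 Z X Y k P M) (i : ℕ) (hi : i ≤ k) :
    X ^ i • P i = Kp z0 Z (X * Y) i • P 0 := by
  induction i using Nat.strong_induction_on with
  | _ i ih =>
    match i, hi, ih with
    | 0, _, _ => simp [Kp]
    | 1, _, _ => simp [Kp, h.p0]
    | i + 2, hi, ih =>
      have h1 := ih (i + 1) (by omega) (by omega)
      have h2 := ih i (by omega) (by omega)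
      have h3 : X • P (i + 2) = Z • P (i + 1) - Y • P i := by rw [h.p i hi]; abel
      calc X ^ (i + 2) • P (i + 2) = X ^ (i + 1) • (X • P (i + 2)) := by
            rw [smul_smul, ← pow_succ]
        _ = Z • (X ^ (i + 1) • P (i + 1)) - (X * Y) • (X ^ i • P i) := by
            rw [h3, pow_succ]; module
        _ = _ := by rw [h1, h2, Kp]; module

theorem Rec.a2 (h : Rec z0 Z X Y k P M) (j : ℕ) (hj : j ≤ k) :
    X ^ (k + j) • M (k - j) = ((X * Y) ^ j * Kp z0 Z (X * Y) (k - j)) • P 0 := by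
  induction j using Nat.strong_induction_on with
  | _ j ih =>
    match j, hj, ih with
    | 0, _, _ => simpa [← h.c] using h.a1 k le_rfl
    | 1, hj, _ =>
      obtain ⟨l, rfl⟩ : ∃ l, k = l + 1 := ⟨k - 1, by omega⟩
      have e := h.e
      have h1 := h.a1 l (by omega)
      simp only [Nat.add_sub_cancel] at e ⊢
      calc X ^ (l + 1 + 1) • M l = X ^ (l + 1) • (X • M l) := by rw [smul_smul, ← pow_succ]
        _ = (X * Y) • (X ^ l • P l) := by rw [e, pow_succ]; module
        _ = _ := by rw [h1, pow_one, smul_smul]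
    | j + 2, hj, ih =>
      obtain ⟨i, rfl⟩ : ∃ i, k = i + j + 2 := ⟨k - j - 2, by omega⟩
      have h1 := ih (j + 1) (by omega) (by omega)
      have h2 := ih j (by omega) (by omega)
      have e0 : i + j + 2 - (j + 2) = i := by omega
      have e1 : i + j + 2 - (j + 1) = i + 1 := by omega
      have e2 : i + j + 2 - j = i + 2 := by omega
      rw [e1] at h1
      rw [e2, Kp] at h2
      rw [e0]
      have h3 : X • M i = Z • M (i + 1) - Y • M (i + 2) := by rw [h.m i (by omega)]; abel
      calc X ^ (i + j + 2 + (j + 2)) • M i = X ^ (i + j + 2 + (j + 1)) • (X • M i) := by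
            rw [smul_smul, ← pow_succ]; rfl
        _ = Z • (X ^ (i + j + 2 + (j + 1)) • M (i + 1))
            - (X * Y) • (X ^ (i + j + 2 + j) • M (i + 2)) := by
            rw [h3, ← add_assoc (i + j + 2) j 1, pow_succ]; module
        _ = _ := by rw [h1, h2]; module

theorem Rec.xP (h : Rec z0 Z X Y k P M) (i : ℕ) (hi : i ≤ k) :
    X ^ (2 * k) • P i = (X ^ k * (X ^ (k - i) * Kp z0 Z (X * Y) i)) • P 0 := by
  have h1 := h.a1 i hi
  obtain ⟨d, rfl⟩ := Nat.exists_eq_add_of_le hi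
  have e : X ^ (2 * (i + d)) = X ^ (i + d) * X ^ d * X ^ i := by ring
  rw [e, mul_smul, h1, smul_smul]
  simp [mul_assoc]

theorem Rec.xM (h : Rec z0 Z X Y k P M) (i : ℕ) (hi : i ≤ k) :
    X ^ (2 * k) • M i = (X ^ k * (Y ^ (k - i) * Kp z0 Z (X * Y) i)) • P 0 := by
  have h1 := h.a2 (k - i) (by omega)
  obtain ⟨d, rfl⟩ := Nat.exists_eq_add_of_le hi
  have e3 : i + d - (i + d - i) = i := by omega
  have e4 : i + d - i = d := by omega
  rw [e3, e4] at h1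
  rw [e4]
  have e : X ^ (2 * (i + d)) = X ^ i * X ^ (i + d + d) := by ring
  rw [e, mul_smul, h1, smul_smul]
  congr 1
  ring

theorem Rec.a3 (h : Rec z0 Z X Y k P M) (i : ℕ) (hi : i + 1 ≤ k) :
    Kp z0 Z (X * Y) (i + 1) • P i = (X * Kp z0 Z (X * Y) i) • P (i + 1) := by
  induction i with
  | zero => simp [Kp, h.p0]
  | succ i ih =>
    have h1 := ih (by omega)
    have h2 := h.p i (by omega)
    rw [Kp]
    calc (Z * Kp z0 Z (X * Y) (i + 1) - X * Y * Kp z0 Z (X * Y) i) • P (i + 1)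
        = Kp z0 Z (X * Y) (i + 1) • (Z • P (i + 1))
          - Y • ((X * Kp z0 Z (X * Y) i) • P (i + 1)) := by module
      _ = _ := by rw [h2, ← h1]; module

/-- auxiliary products of continuants -/
def Wp (z0 Z t : R) (k n : ℕ) : R := ∏ l ∈ Finset.range n, Kp z0 Z t (k - l)

theorem Rec.a4 (h : Rec z0 Z X Y k P M) (n : ℕ) (hn : n ≤ k) :
    Wp z0 Z (X * Y) k n • P (k - n) = (Wp z0 Z (X * Y) (k - 1) n * X ^ n) • P k := by
  induction n with
  | zero => simp [Wp]
  | succ n ih =>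
    have h1 := ih (by omega)
    have h2 := h.a3 (k - (n + 1)) (by omega)
    have e1 : k - (n + 1) + 1 = k - n := by omega
    have e2 : k - 1 - n = k - (n + 1) := by omega
    rw [e1] at h2
    rw [Wp, Finset.prod_range_succ, mul_smul, h2, smul_comm, ← Wp, h1, Wp, Wp,
      Finset.prod_range_succ, e2, smul_smul]
    congr 1
    ring

theorem Wp_split (z0 Z t : R) (k d : ℕ) (hd : d ≤ k) : ∃ c,
    Wp z0 Z t k k = c * Kp z0 Z t d * Wp z0 Z t k (k - d) ∧
    c * Wp z0 Z t (k - 1) (k - d) = Wp z0 Z t (k - 1) k := by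
  induction d with
  | zero => exact ⟨1, by simp [Kp], by simp⟩
  | succ d ih =>
    obtain ⟨c, h1, h2⟩ := ih (by omega)
    have e1 : k - d = k - (d + 1) + 1 := by omega
    have e2 : k - (k - (d + 1)) = d + 1 := by omega
    have e3 : k - 1 - (k - (d + 1)) = d := by omega
    refine ⟨c * Kp z0 Z t d, ?_, ?_⟩
    · rw [h1, e1]
      conv_lhs => rw [Wp, Finset.prod_range_succ, e2]
      rw [Wp]; ring
    · rw [← h2, e1]
      conv_rhs => rw [Wp, Finset.prod_range_succ, e3]
      rw [Wp]; ring

theorem Rec.zP (h : Rec z0 Z X Y k P M) (i : ℕ) (hi : i ≤ k) :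
    Wp z0 Z (X * Y) k k • P i =
      (Wp z0 Z (X * Y) (k - 1) k * (X ^ (k - i) * Kp z0 Z (X * Y) i)) • P k := by
  obtain ⟨c, h1, h2⟩ := Wp_split z0 Z (X * Y) k i hi
  have h3 := h.a4 (k - i) (by omega)
  have e : k - (k - i) = i := by omega
  rw [e] at h3
  rw [h1, mul_smul, h3, ← h2, smul_smul]
  congr 1
  ring

theorem Kp_pow (z t : R) (a b : ℕ) (n : ℕ) : ∃ e s, Kp (z ^ a) (z ^ b) t n = z ^ e + t * s := by
  induction n using Nat.strong_induction_on with
  | _ n ih =>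
    match n, ih with
    | 0, _ => exact ⟨0, 0, by simp [Kp]⟩
    | 1, _ => exact ⟨a, 0, by simp [Kp]⟩
    | n + 2, ih =>
      obtain ⟨e, s, h⟩ := ih (n + 1) (by omega)
      refine ⟨b + e, z ^ b * s - Kp (z ^ a) (z ^ b) t n, ?_⟩
      rw [Kp, h]; ring

theorem Wp_pow (z t : R) (a b : ℕ) (k n : ℕ) :
    ∃ e s, Wp (z ^ a) (z ^ b) t k n = z ^ e + t * s := by
  unfold Wp
  apply Finset.prod_induction _ (fun w => ∃ e s, w = z ^ e + t * s)
  · rintro _ _ ⟨e, s, rfl⟩ ⟨e', s', rfl⟩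
    exact ⟨e + e', z ^ e * s' + s * z ^ e' + t * s * s', by ring⟩
  · exact ⟨0, 0, by simp⟩
  · intro l _
    exact Kp_pow z t a b _

theorem mem_rad_of {A : Ideal R} (z t : R) (a b k n : ℕ) (ht : t ∈ A.radical)
    (hW : Wp (z ^ a) (z ^ b) t k n ∈ A.radical) : z ∈ A.radical := by
  obtain ⟨e, s, h⟩ := Wp_pow z t a b k n
  have h1 : z ^ e ∈ A.radical := by
    have : z ^ e = Wp (z ^ a) (z ^ b) t k n - t * s := by rw [h]; ring
    rw [this]
    exact sub_mem hW (Ideal.mul_mem_right _ _ ht)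
  rw [← Ideal.radical_idem]
  exact ⟨e, h1⟩

end
end TrimG


namespace TrimG
section
variable {R : Type} [CommRing R]

def sgX (a : ℤ) : R := if a ≤ -1 then 1 else -1
def sgY (a : ℤ) : R := if a ≤ 0 then 1 else -1
def sgZ (a : ℤ) : R := if 0 < a then 1 else if a < 0 then -1 else 0
def zz (z0 Z : R) (k : ℕ) (a : ℤ) : R := if a.natAbs = k then z0 else Z

/-- entries of the skew matrix -/
def ent (z0 Z X Y : R) (k : ℕ) (a b : ℤ) : R :=
  (if b = -1 - a then sgX a * X else 0) + (if b = 1 - a then sgY a * Y else 0)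
    + (if b = -a then sgZ a * zz z0 Z k a else 0)

theorem ent_skew (z0 Z X Y : R) (k : ℕ) (a b : ℤ) :
    ent z0 Z X Y k a b = - ent z0 Z X Y k b a := by
  unfold ent
  have h1 : (if b = -1 - a then sgX a * X else 0) = -(if a = -1 - b then sgX b * X else 0) := by
    by_cases h : b = -1 - a
    · rw [if_pos h, if_pos (by omega)]
      unfold sgX
      split_ifs <;> first | omega | simp
    · rw [if_neg h, if_neg (by omega)]; simp
  have h2 : (if b = 1 - a then sgY a * Y else 0) = -(if a = 1 - b then sgY b * Y else 0) := by
    by_cases h : b = 1 - a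
    · rw [if_pos h, if_pos (by omega)]
      unfold sgY
      split_ifs <;> first | omega | simp
    · rw [if_neg h, if_neg (by omega)]; simp
  have h3 : (if b = -a then sgZ a * zz z0 Z k a else 0)
      = -(if a = -b then sgZ b * zz z0 Z k b else 0) := by
    by_cases h : b = -a
    · rw [if_pos h, if_pos (by omega)]
      unfold sgZ zz
      split_ifs <;> first | omega | simp
    · rw [if_neg h, if_neg (by omega)]; simp
  rw [h1, h2, h3]; ring

/-- right hand side of a row relation -/
def row {N : Type} [AddCommGroup N] [Module R N] (z0 Z X Y : R) (k : ℕ) (F : ℤ → N) (a : ℤ) : N :=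
  (sgX a * X) • F (-1 - a) + (sgY a * Y) • F (1 - a) + (sgZ a * zz z0 Z k a) • F (-a)

variable {ι : Type} [Fintype ι]

/-- `ι` is identified with the integers of absolute value at most `k`. -/
structure Idx (k : ℕ) (e : ι → ℤ) : Prop where
  inj : Function.Injective e
  le : ∀ i, (e i).natAbs ≤ k
  surj : ∀ c : ℤ, c.natAbs ≤ k → ∃ i, e i = c

/-- extension by zero -/
def ext {N : Type} [AddCommGroup N] (e : ι → ℤ) (f : ι → N) (c : ℤ) : N :=
  ∑ i, if e i = c then f i else 0

variable {k : ℕ} {e : ι → ℤ} {N : Type} [AddCommGroup N] [Module R N]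

theorem Idx.ext_apply (h : Idx k e) (f : ι → N) (i : ι) : ext e f (e i) = f i := by
  classical
  unfold ext
  rw [Finset.sum_eq_single i]
  · simp
  · intro j _ hj
    rw [if_neg (fun h' => hj (h.inj h'))]
  · simp

theorem Idx.ext_zero (h : Idx k e) (f : ι → N) (c : ℤ) (hc : k < c.natAbs) : ext e f c = 0 := by
  unfold ext
  apply Finset.sum_eq_zero
  intro i _
  rw [if_neg]
  rintro rfl
  have := h.le i
  omega

theorem Idx.sum_single (h : Idx k e) (F : ℤ → N) (hF : ∀ c : ℤ, k < c.natAbs → F c = 0)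
    (c : ℤ) (r : R) : ∑ i, (if e i = c then r else 0) • F (e i) = r • F c := by
  classical
  by_cases hc : c.natAbs ≤ k
  · obtain ⟨i, rfl⟩ := h.surj c hc
    rw [Finset.sum_eq_single i]
    · simp
    · intro j _ hj
      rw [if_neg (fun h' => hj (h.inj h')), zero_smul]
    · simp
  · rw [hF c (by omega), smul_zero]
    apply Finset.sum_eq_zero
    intro i _
    rw [if_neg, zero_smul]
    rintro rfl
    exact hc (h.le i)

theorem Idx.row_eq (h : Idx k e) (z0 Z X Y : R) (F : ℤ → N)
    (hF : ∀ c : ℤ, k < c.natAbs → F c = 0) (a : ℤ) :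
    ∑ i, ent z0 Z X Y k a (e i) • F (e i) = row z0 Z X Y k F a := by
  unfold ent row
  simp only [add_smul, Finset.sum_add_distrib]
  rw [h.sum_single F hF, h.sum_single F hF, h.sum_single F hF]

theorem rec_of_row (z0 Z X Y : R) (hk : 1 ≤ k) (F : ℤ → N)
    (hF : ∀ c : ℤ, k < c.natAbs → F c = 0)
    (hr : ∀ a : ℤ, a.natAbs ≤ k → row z0 Z X Y k F a = 0) :
    Rec z0 Z X Y k (fun i => F (k - i)) (fun i => F (i - k)) := by
  have hneg : ∀ c : ℤ, 0 < c → c ≤ k → (zz z0 Z k c) • F c = X • F (c - 1) + Y • F (c + 1) := by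
    intro c h1 h2
    have h := hr (-c) (by omega)
    unfold row at h
    rw [show sgX (-c) = (1 : R) from if_pos (by omega), show sgY (-c) = (1 : R) from if_pos (by omega),
      show sgZ (-c) = (-1 : R) by unfold sgZ; rw [if_neg (by omega), if_pos (by omega)],
      show zz z0 Z k (-c) = zz z0 Z k c by simp [zz],
      show -1 - -c = c - 1 by ring, show 1 - -c = c + 1 by ring, neg_neg] at h
    rw [eq_comm, ← sub_eq_zero, ← h]
    module
  have hpos : ∀ c : ℤ, 0 < c → c ≤ k →
      (zz z0 Z k c) • F (-c) = Y • F (1 - c) + X • F (-1 - c) := by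
    intro c h1 h2
    have h := hr c (by omega)
    unfold row at h
    rw [show sgX c = (-1 : R) from if_neg (by omega), show sgY c = (-1 : R) from if_neg (by omega),
      show sgZ c = (1 : R) from if_pos h1] at h
    rw [← sub_eq_zero, ← h]
    module
  have hzz0 : zz z0 Z k (k : ℤ) = z0 := if_pos (by omega)
  have hzz : ∀ i : ℕ, i + 2 ≤ k → zz z0 Z k ((k : ℤ) - ((i + 1 : ℕ) : ℤ)) = Z := by
    intro i hi
    exact if_neg (by omega)
  refine ⟨hk, ?_, ?_, ?_, ?_, ?_, ?_⟩
  · have h := hneg k (by omega) (by omega)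
    rw [hzz0, hF (k + 1) (by omega), smul_zero, add_zero] at h
    simpa using h
  · intro i hi
    have h := hneg ((k : ℤ) - ((i + 1 : ℕ) : ℤ)) (by omega) (by omega)
    rw [hzz i hi] at h
    convert h using 3 <;> (try congr 1) <;> push_cast <;> ring
  · have h := hpos k (by omega) (by omega)
    rw [hzz0, hF (-1 - k) (by omega), smul_zero, add_zero] at h
    simpa using h
  · intro i hi
    have h := hpos ((k : ℤ) - ((i + 1 : ℕ) : ℤ)) (by omega) (by omega)
    rw [hzz i hi] at h
    convert h using 3 <;> (try congr 1) <;> push_cast <;> ring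
  · simp
  · have h := hr 0 (by omega)
    unfold row at h
    rw [show sgX 0 = (-1 : R) from if_neg (by omega), show sgY 0 = (1 : R) from if_pos (by omega),
      show sgZ 0 = (0 : R) by simp [sgZ]] at h
    have e1 : ((k - 1 : ℕ) : ℤ) - k = -1 - 0 := by omega
    have e2 : (k : ℤ) - ((k - 1 : ℕ) : ℤ) = 1 - 0 := by omega
    simp only [e1, e2]
    rw [eq_comm, ← sub_eq_zero, ← h]
    module

/-- the Gorenstein generators -/
def Gp (z0 Z X Y : R) (k : ℕ) (c : ℤ) : R :=
  if c.natAbs ≤ k then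
    if 0 ≤ c then X ^ c.natAbs * Kp z0 Z (X * Y) (k - c.natAbs)
    else Y ^ c.natAbs * Kp z0 Z (X * Y) (k - c.natAbs)
  else 0

theorem Gp_pos (z0 Z X Y : R) (n d : ℕ) :
    Gp z0 Z X Y (n + d) n = X ^ n * Kp z0 Z (X * Y) d := by
  unfold Gp
  rw [if_pos (by omega), if_pos (by omega)]
  simp

theorem Gp_neg (z0 Z X Y : R) (n d : ℕ) :
    Gp z0 Z X Y (n + d) (-n) = Y ^ n * Kp z0 Z (X * Y) d := by
  unfold Gp
  rw [if_pos (by omega)]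
  rcases n with _ | n
  · simp
  · rw [if_neg (by omega), show (-((n + 1 : ℕ) : ℤ)).natAbs = n + 1 by omega,
      show n + 1 + d - (n + 1) = d by omega]

theorem Gp_zero (z0 Z X Y : R) (k : ℕ) (c : ℤ) (hc : k < c.natAbs) : Gp z0 Z X Y k c = 0 :=
  if_neg (by omega)

theorem kill_of_rec (z0 Z X Y : R) (F : ℤ → N)
    (h : Rec z0 Z X Y k (fun i => F (k - i)) (fun i => F (i - k))) (c : ℤ) (hc : c.natAbs ≤ k) :
    X ^ (2 * k) • F c = (X ^ k * Gp z0 Z X Y k c) • F k ∧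
    Y ^ (2 * k) • F c = (Y ^ k * Gp z0 Z X Y k c) • F (-k) ∧
    Wp z0 Z (X * Y) k k • F c = (Wp z0 Z (X * Y) (k - 1) k * Gp z0 Z X Y k c) • F 0 := by
  have hs := h.symm
  rcases le_or_gt 0 c with h0 | h0
  · obtain ⟨n, rfl⟩ := Int.eq_ofNat_of_zero_le h0
    obtain ⟨d, rfl⟩ := Nat.exists_eq_add_of_le (show n ≤ k by omega)
    have a := h.xP d (by omega)
    have b := hs.xM d (by omega)
    have c := h.zP d (by omega)
    have ee : ((n + d : ℕ) : ℤ) - (d : ℤ) = (n : ℤ) := by omega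
    have ef : n + d - d = n := by omega
    simp only [ee, ef, mul_comm Y X] at a b c
    rw [Gp_pos]
    refine ⟨?_, ?_, ?_⟩
    · simpa using a
    · simpa using b
    · simpa using c
  · obtain ⟨n, rfl⟩ : ∃ n : ℕ, c = -(n : ℤ) := ⟨c.natAbs, by omega⟩
    obtain ⟨d, rfl⟩ := Nat.exists_eq_add_of_le (show n ≤ k by omega)
    have a := h.xM d (by omega)
    have b := hs.xP d (by omega)
    have c := hs.zP d (by omega)
    have ee : (d : ℤ) - ((n + d : ℕ) : ℤ) = -(n : ℤ) := by omega
    have ef : n + d - d = n := by omega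
    simp only [ee, ef, mul_comm Y X] at a b c
    rw [Gp_neg]
    refine ⟨?_, ?_, ?_⟩
    · simpa using a
    · simpa using b
    · simpa using c

theorem row_Gp (z0 Z X Y : R) (hk : 1 ≤ k) (a : ℤ) (ha : a.natAbs ≤ k) :
    row z0 Z X Y k (Gp z0 Z X Y k) a = 0 := by
  unfold row
  rcases lt_trichotomy a 0 with h0 | h0 | h0
  · obtain ⟨n, rfl⟩ : ∃ n : ℕ, a = -((n + 1 : ℕ) : ℤ) := ⟨a.natAbs - 1, by omega⟩
    rw [show sgX (-((n + 1 : ℕ) : ℤ)) = (1 : R) from if_pos (by omega),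
      show sgY (-((n + 1 : ℕ) : ℤ)) = (1 : R) from if_pos (by omega),
      show sgZ (-((n + 1 : ℕ) : ℤ)) = (-1 : R) by
        unfold sgZ; rw [if_neg (by omega), if_pos (by omega)],
      show -1 - -((n + 1 : ℕ) : ℤ) = (n : ℤ) by omega,
      show 1 - -((n + 1 : ℕ) : ℤ) = ((n + 2 : ℕ) : ℤ) by omega, neg_neg]
    obtain ⟨d, rfl⟩ := Nat.exists_eq_add_of_le (show n + 1 ≤ k by omega)
    rw [Gp_pos]
    rcases d with _ | d
    · rw [Gp_zero _ _ _ _ _ ((n + 2 : ℕ) : ℤ) (by omega), show zz z0 Z _ _ = z0 from if_pos (by omega)]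
      have := Gp_pos z0 Z X Y n 1
      simp only [add_zero] at *
      rw [this]
      simp [Kp]; ring
    · rw [show zz z0 Z _ _ = Z from if_neg (by omega)]
      have h1 := Gp_pos z0 Z X Y n (d + 2)
      have h2 := Gp_pos z0 Z X Y (n + 2) d
      rw [show n + (d + 2) = n + 1 + (d + 1) by ring] at h1
      rw [show n + 2 + d = n + 1 + (d + 1) by ring] at h2
      rw [h1, h2, Kp]
      simp; ring
  · subst h0
    obtain ⟨d, rfl⟩ := Nat.exists_eq_add_of_le hk
    have h1 := Gp_pos z0 Z X Y 1 d
    have h2 := Gp_neg z0 Z X Y 1 d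
    rw [show sgX 0 = (-1 : R) from if_neg (by omega), show sgY 0 = (1 : R) from if_pos (by omega),
      show sgZ 0 = (0 : R) by simp [sgZ]]
    simp only [Nat.cast_one] at h1 h2
    simp [h1, h2]; ring
  · obtain ⟨n, rfl⟩ : ∃ n : ℕ, a = ((n + 1 : ℕ) : ℤ) := ⟨a.natAbs - 1, by omega⟩
    rw [show sgX (((n + 1 : ℕ) : ℤ)) = (-1 : R) from if_neg (by omega),
      show sgY (((n + 1 : ℕ) : ℤ)) = (-1 : R) from if_neg (by omega),
      show sgZ (((n + 1 : ℕ) : ℤ)) = (1 : R) from if_pos (by omega),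
      show 1 - ((n + 1 : ℕ) : ℤ) = -(n : ℤ) by omega,
      show -1 - ((n + 1 : ℕ) : ℤ) = -((n + 2 : ℕ) : ℤ) by omega]
    obtain ⟨d, rfl⟩ := Nat.exists_eq_add_of_le (show n + 1 ≤ k by omega)
    rw [Gp_neg]
    rcases d with _ | d
    · rw [Gp_zero _ _ _ _ _ (-((n + 2 : ℕ) : ℤ)) (by omega),
        show zz z0 Z _ _ = z0 from if_pos (by omega)]
      have := Gp_neg z0 Z X Y n 1
      simp only [add_zero] at *
      rw [this]
      simp [Kp]; ring
    · rw [show zz z0 Z _ _ = Z from if_neg (by omega)]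
      have h1 := Gp_neg z0 Z X Y n (d + 2)
      have h2 := Gp_neg z0 Z X Y (n + 2) d
      rw [show n + (d + 2) = n + 1 + (d + 1) by ring] at h1
      rw [show n + 2 + d = n + 1 + (d + 1) by ring] at h2
      rw [h1, h2, Kp]
      simp; ring

end
end TrimG

set_option linter.unusedSectionVars false

namespace TrimG
section
variable {R : Type} [CommRing R] [IsLocalRing R] {ι : Type} [Fintype ι]

/-- A Gorenstein resolution `0 → R → R^ι → R^ι → R` with the properties that we need. -/
structure Gor (g : ι → R) (X : (ι → R) →ₗ[R] (ι → R)) : Prop where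
  g_mem : ∀ i, g i ∈ maximalIdeal R * maximalIdeal R
  X_mem : ∀ v i, X v i ∈ maximalIdeal R
  gX : ∀ v, ∑ i, g i * X v i = 0
  Xg : X g = 0
  e1 : ∀ u : ι → R, ∑ i, g i * u i = 0 → ∃ v, X v = u
  e2 : ∀ v, X v = 0 → ∃ c : R, v = c • g
  e3 : ∀ c : R, c • g = 0 → c = 0
  P : ∀ v, (∀ i, X v i ∈ Ideal.span (Set.range g)) → ∀ i, v i ∈ maximalIdeal R

/-- data used for trimming the generator `t` -/
structure Triv (x : Fin 3 → R) (g : ι → R) (X : (ι → R) →ₗ[R] (ι → R)) (t : ι)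
    (Ξ : (ι → R) →ₗ[R] (Fin 3 → R)) (q : Fin 3 → R) : Prop where
  sum : ∀ v, ∑ j, x j * Ξ v j = X v t
  mem : ∀ v, Ξ v 0 ∈ maximalIdeal R ∧ Ξ v 1 ∈ maximalIdeal R
  mem2 : ∀ v : ι → R, (∀ i, v i ∈ maximalIdeal R) →
    Ξ v 0 ∈ maximalIdeal R * maximalIdeal R ∧ Ξ v 1 ∈ maximalIdeal R * maximalIdeal R
  cross : crossProduct x q = Ξ g
  q_mem : ∀ j, q j ∈ maximalIdeal R * maximalIdeal R

variable (x : Fin 3 → R) (s k : ℕ) (e : ι → ℤ)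

def gg : ι → R := fun i => Gp (x 2 ^ (s + 1)) (x 2 ^ 2) (x 0 ^ 2) (x 1 ^ 2) k (e i)

def XX : (ι → R) →ₗ[R] (ι → R) :=
  (Matrix.of fun i j => ent (x 2 ^ (s + 1)) (x 2 ^ 2) (x 0 ^ 2) (x 1 ^ 2) k (e i) (e j)).mulVecLin

theorem XX_apply (v : ι → R) (i : ι) : XX x s k e v i =
    ∑ j, ent (x 2 ^ (s + 1)) (x 2 ^ 2) (x 0 ^ 2) (x 1 ^ 2) k (e i) (e j) * v j := rfl

def extL (c : ℤ) : (ι → R) →ₗ[R] R where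
  toFun v := ext e v c
  map_add' u v := by
    unfold ext; rw [← Finset.sum_add_distrib]
    apply Finset.sum_congr rfl; intro i _; split_ifs <;> simp
  map_smul' r v := by
    unfold ext
    simp only [Finset.smul_sum, RingHom.id_apply]
    apply Finset.sum_congr rfl; intro i _; split_ifs <;> simp

theorem extL_apply (c : ℤ) (v : ι → R) : extL e c v = ext e v c := rfl

variable {x s k e}

theorem XX_row (he : Idx k e) (v : ι → R) (i : ι) : XX x s k e v i =
    row (x 2 ^ (s + 1)) (x 2 ^ 2) (x 0 ^ 2) (x 1 ^ 2) k (ext e v) (e i) := by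
  rw [XX_apply, ← he.row_eq _ _ _ _ _ (fun c hc => he.ext_zero v c hc)]
  simp [he.ext_apply]

theorem ext_gg (he : Idx k e) (c : ℤ) : ext e (gg x s k e) c =
    Gp (x 2 ^ (s + 1)) (x 2 ^ 2) (x 0 ^ 2) (x 1 ^ 2) k c := by
  by_cases hc : c.natAbs ≤ k
  · obtain ⟨i, rfl⟩ := he.surj c hc
    rw [he.ext_apply]; rfl
  · rw [he.ext_zero _ _ (by omega), Gp_zero _ _ _ _ _ _ (by omega)]

theorem XX_gg (hk : 2 ≤ k) (he : Idx k e) : XX x s k e (gg x s k e) = 0 := by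
  ext i
  rw [XX_row he, show ext e (gg x s k e) = _ from funext (ext_gg he)]
  exact row_Gp _ _ _ _ (by omega) _ (he.le i)

theorem gg_XX (hk : 2 ≤ k) (he : Idx k e) (v : ι → R) : ∑ i, gg x s k e i * XX x s k e v i = 0 := by
  have h := XX_gg (x := x) (s := s) hk he
  simp only [XX_apply, Finset.mul_sum]
  rw [Finset.sum_comm]
  apply Finset.sum_eq_zero
  intro j _
  have hj := congrFun h j
  rw [XX_apply] at hj
  have : ∑ i, gg x s k e i * (ent (x 2 ^ (s + 1)) (x 2 ^ 2) (x 0 ^ 2) (x 1 ^ 2) k (e i) (e j) * v j)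
    = - (∑ i, ent (x 2 ^ (s + 1)) (x 2 ^ 2) (x 0 ^ 2) (x 1 ^ 2) k (e j) (e i) * gg x s k e i) * v j := by
    rw [← Finset.sum_neg_distrib, Finset.sum_mul]
    apply Finset.sum_congr rfl
    intro i _
    rw [ent_skew]; ring
  rw [this, hj]; simp

theorem gg_e3 (hk : 2 ≤ k) (he : Idx k e) (hx : RSP x) (c : R) (h : c • gg x s k e = 0) : c = 0 := by
  obtain ⟨i, hi⟩ := he.surj k (by omega)
  have := congrFun h i
  have h2 := Gp_pos (x 2 ^ (s + 1)) (x 2 ^ 2) (x 0 ^ 2) (x 1 ^ 2) k 0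
  rw [add_zero] at h2
  simp only [Pi.smul_apply, smul_eq_mul, Pi.zero_apply, gg, hi] at this
  rw [h2] at this
  simp only [Kp, mul_one, ← pow_mul] at this
  revert this
  generalize 2 * k = N
  induction N with
  | zero => simp
  | succ N ih =>
    intro h'
    apply ih
    apply hx.r012.1
    rw [← h']; ring


theorem rad_of_kill {N : Type} [AddCommGroup N] [Module R N] (hk : 2 ≤ k) (F : ℤ → N)
    (hF : ∀ c : ℤ, k < c.natAbs → F c = 0)
    (hr : ∀ a : ℤ, a.natAbs ≤ k → row (x 2 ^ (s + 1)) (x 2 ^ 2) (x 0 ^ 2) (x 1 ^ 2) k F a = 0)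
    (A : Ideal R)
    (hA : ∀ (r r' : R) (f : N), (∀ c : ℤ, c.natAbs ≤ k → r • F c =
      (r' * Gp (x 2 ^ (s + 1)) (x 2 ^ 2) (x 0 ^ 2) (x 1 ^ 2) k c) • f) → r ∈ A) :
    x 0 ∈ A.radical ∧ x 1 ∈ A.radical ∧ x 2 ∈ A.radical := by
  have hrec := rec_of_row _ _ _ _ (by omega) F hF hr
  have hkill := fun c hc => kill_of_rec _ _ _ _ F hrec c hc
  have h0 : x 0 ∈ A.radical := by
    refine ⟨2 * (2 * k), ?_⟩
    rw [pow_mul]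
    exact hA _ _ _ (fun c hc => (hkill c hc).1)
  have h1 : x 1 ∈ A.radical := by
    refine ⟨2 * (2 * k), ?_⟩
    rw [pow_mul]
    exact hA _ _ _ (fun c hc => (hkill c hc).2.1)
  refine ⟨h0, h1, ?_⟩
  refine mem_rad_of (x 2) (x 0 ^ 2 * x 1 ^ 2) (s + 1) 2 k k ?_ ?_
  · exact Ideal.mul_mem_right _ _ (Ideal.pow_mem_of_mem _ h0 2 (by omega))
  · exact Ideal.le_radical (hA _ _ _ (fun c hc => (hkill c hc).2.2))

theorem gg_e2 (hk : 2 ≤ k) (he : Idx k e) (hx : RSP x) (v : ι → R) (h : XX x s k e v = 0) :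
    v ∈ Submodule.span R {gg x s k e} := by
  obtain ⟨h0, h1, h2⟩ := rad_of_kill (x := x) (s := s) hk (ext e v) (fun c hc => he.ext_zero v c hc)
    (by
      intro a ha
      obtain ⟨i, rfl⟩ := he.surj a ha
      rw [← XX_row he, h]; rfl) (annI (Submodule.span R {gg x s k e}) v) (by
      intro r r' f hr
      rw [mem_annI, Submodule.mem_span_singleton]
      refine ⟨r' * f, ?_⟩
      ext i
      have := hr (e i) (he.le i)
      rw [he.ext_apply] at this
      simp only [Pi.smul_apply, this, gg, smul_eq_mul]
      ring)
  refine sat_rad ⊤ _ (x 0) (x 1) (x 2) ?_ v trivial h0 h1 h2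
  intro u _ a b _
  exact depth2 hx.r012 _ (fun r hr => gg_e3 hk he hx r hr) u a b

theorem gg_e1 (hk : 2 ≤ k) (he : Idx k e) (hx : RSP x) (u : ι → R)
    (h : ∑ i, gg x s k e i * u i = 0) :
    u ∈ LinearMap.range (XX x s k e) := by
  classical
  let S := LinearMap.range (XX x s k e)
  let f0 : ι → ((ι → R) ⧸ S) := fun i => S.mkQ (Pi.single i 1)
  obtain ⟨h0, h1, h2⟩ := rad_of_kill (x := x) (s := s) hk (ext e f0) (fun c hc => he.ext_zero f0 c hc)
    (by
      intro a ha
      obtain ⟨i, rfl⟩ := he.surj a ha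
      rw [← he.row_eq _ _ _ _ _ (fun c hc => he.ext_zero f0 c hc)]
      simp only [he.ext_apply, f0]
      simp only [← map_smul, ← map_sum]
      rw [Submodule.mkQ_apply, Submodule.Quotient.mk_eq_zero]
      refine ⟨-Pi.single i 1, ?_⟩
      ext j
      rw [map_neg, Pi.neg_apply, XX_apply]
      simp [Finset.sum_apply, Pi.single_apply, ent_skew _ _ _ _ _ (e j) (e i)]) (annI S u) (by
      intro r r' f hr
      rw [mem_annI, ← Submodule.Quotient.mk_eq_zero, ← Submodule.mkQ_apply]
      have hu : u = ∑ i, u i • (Pi.single i 1 : ι → R) := by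
        ext j; simp [Finset.sum_apply, Pi.single_apply]
      have : S.mkQ u = ∑ i, u i • f0 i := by
        conv_lhs => rw [hu]
        simp [f0]
      rw [map_smul, this, Finset.smul_sum]
      have h3 : ∀ i, r • u i • f0 i = (gg x s k e i * u i) • r' • f := by
        intro i
        have := hr (e i) (he.le i)
        rw [he.ext_apply] at this
        rw [smul_comm, this]
        simp only [smul_smul, gg]
        congr 1; ring
      simp only [h3]
      rw [← Finset.sum_smul, h, zero_smul])
  refine sat_rad ⊤ _ (x 0) (x 1) (x 2) ?_ u trivial h0 h1 h2
  intro u _ a b c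
  exact depth1 hx.r012 _ (fun r hr => gg_e3 hk he hx r hr) _ (XX_gg hk he)
    (fun v hv => gg_e2 hk he hx v hv) u a b c

end
end TrimG

set_option linter.unusedSectionVars false

namespace TrimG
section
variable {R : Type} [CommRing R] [IsLocalRing R] {ι : Type} [Fintype ι]

def sqm (x : Fin 3 → R) : Ideal R where
  carrier := {a | ∃ b : Fin 3 → R, (∀ j, b j ∈ maximalIdeal R) ∧ a = ∑ j, x j * x j * b j}
  add_mem' := by
    rintro a a' ⟨b, hb, rfl⟩ ⟨b', hb', rfl⟩
    refine ⟨b + b', fun j => add_mem (hb j) (hb' j), ?_⟩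
    rw [← Finset.sum_add_distrib]
    exact Finset.sum_congr rfl (fun j _ => by simp; ring)
  zero_mem' := ⟨0, fun j => zero_mem _, by simp⟩
  smul_mem' := by
    rintro r a ⟨b, hb, rfl⟩
    refine ⟨r • b, fun j => Ideal.mul_mem_left _ _ (hb j), ?_⟩
    rw [Finset.smul_sum]
    exact Finset.sum_congr rfl (fun j _ => by simp; ring)

theorem mem_sqm (x : Fin 3 → R) (j : Fin 3) (a : R) (ha : a ∈ maximalIdeal R) :
    x j ^ 2 * a ∈ sqm x := by
  refine ⟨Pi.single j a, fun i => ?_, ?_⟩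
  · rw [Pi.single_apply]; split_ifs
    · exact ha
    · exact zero_mem _
  · simp [Pi.single_apply, pow_two]

variable {x : Fin 3 → R} {s k : ℕ} {e : ι → ℤ}

theorem Kp_mem (hx : RSP x) (n : ℕ) :
    Kp (x 2 ^ (s + 1)) (x 2 ^ 2) (x 0 ^ 2 * x 1 ^ 2) (n + 1) ∈ maximalIdeal R := by
  cases n with
  | zero => exact Ideal.pow_mem_of_mem _ (hx.x_mem 2) _ (by omega)
  | succ n =>
    rw [Kp]
    exact sub_mem (Ideal.mul_mem_right _ _ (Ideal.pow_mem_of_mem _ (hx.x_mem 2) _ (by omega)))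
      (Ideal.mul_mem_right _ _ (Ideal.mul_mem_right _ _
        (Ideal.pow_mem_of_mem _ (hx.x_mem 0) _ (by omega))))

theorem Gp_sqm (hk : 2 ≤ k) (hx : RSP x) (c : ℤ) :
    Gp (x 2 ^ (s + 1)) (x 2 ^ 2) (x 0 ^ 2) (x 1 ^ 2) k c ∈ sqm x := by
  have key : ∀ n d : ℕ, n + 1 + d = k → ∀ y ∈ maximalIdeal R,
      y ^ n * Kp (x 2 ^ (s + 1)) (x 2 ^ 2) (x 0 ^ 2 * x 1 ^ 2) d ∈ maximalIdeal R := by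
    intro n d hnd y hy
    rcases d with _ | d
    · exact Ideal.mul_mem_right _ _ (Ideal.pow_mem_of_mem _ hy _ (by omega))
    · exact Ideal.mul_mem_left _ _ (Kp_mem hx d)
  by_cases hc : c.natAbs ≤ k
  · obtain ⟨d, hd⟩ := Nat.exists_eq_add_of_le hc
    rcases lt_trichotomy c 0 with h0 | h0 | h0
    · obtain ⟨n, rfl⟩ : ∃ n : ℕ, c = -((n + 1 : ℕ) : ℤ) := ⟨c.natAbs - 1, by omega⟩
      have hd' : k = n + 1 + d := by omega
      have := mem_sqm x 1 _ (key n d hd'.symm _ (Ideal.pow_mem_of_mem _ (hx.x_mem 1) 2 (by omega)))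
      rw [hd', Gp_neg]
      convert this using 1; ring
    · subst h0
      have := Gp_pos (x 2 ^ (s + 1)) (x 2 ^ 2) (x 0 ^ 2) (x 1 ^ 2) 0 k
      simp only [zero_add, Nat.cast_zero, pow_zero, one_mul] at this
      rw [this]
      obtain ⟨n, rfl⟩ := Nat.exists_eq_add_of_le' hk
      rw [Kp]
      refine sub_mem (mem_sqm x 2 _ (Kp_mem hx n)) ?_
      rw [mul_assoc]
      exact mem_sqm x 0 _ (Ideal.mul_mem_right _ _ (Ideal.pow_mem_of_mem _ (hx.x_mem 1) 2 (by omega)))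
    · obtain ⟨n, rfl⟩ : ∃ n : ℕ, c = ((n + 1 : ℕ) : ℤ) := ⟨c.natAbs - 1, by omega⟩
      have hd' : k = n + 1 + d := by omega
      have := mem_sqm x 0 _ (key n d hd'.symm _ (Ideal.pow_mem_of_mem _ (hx.x_mem 0) 2 (by omega)))
      rw [hd', Gp_pos]
      convert this using 1; ring
  · rw [Gp_zero _ _ _ _ _ _ (by omega)]; exact zero_mem _

theorem sgX_mem (I : Ideal R) (a : ℤ) (b : R) (h : sgX a * b ∈ I) : b ∈ I := by
  unfold sgX at h
  split_ifs at h
  · simpa using h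
  · simpa using h

theorem sgY_mem (I : Ideal R) (a : ℤ) (b : R) (h : sgY a * b ∈ I) : b ∈ I := by
  unfold sgY at h
  split_ifs at h
  · simpa using h
  · simpa using h

theorem gg_P (hk : 2 ≤ k) (he : Idx k e) (hx : RSP x) (v : ι → R)
    (hv : ∀ i, XX x s k e v i ∈ Ideal.span (Set.range (gg x s k e))) (i : ι) :
    v i ∈ maximalIdeal R := by
  have hle : Ideal.span (Set.range (gg x s k e)) ≤ sqm x := by
    rw [Ideal.span_le]
    rintro _ ⟨j, rfl⟩
    exact Gp_sqm hk hx _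
  have key : ∀ a : ℤ, a.natAbs < k →
      ext e v (-1 - a) ∈ maximalIdeal R ∧ ext e v (1 - a) ∈ maximalIdeal R := by
    intro a ha
    obtain ⟨t, rfl⟩ := he.surj a ha.le
    obtain ⟨b, hb, heq⟩ := hle (hv t)
    rw [XX_row he, row, show zz _ _ _ _ = _ from if_neg ha.ne] at heq
    have := hx.sq_syz (![sgX (e t) * ext e v (-1 - e t), sgY (e t) * ext e v (1 - e t),
      sgZ (e t) * ext e v (- e t)] - b) (by
        rw [Fin.sum_univ_three] at *
        simp only [smul_eq_mul, Pi.sub_apply, Matrix.cons_val] at *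
        linear_combination heq)
    refine ⟨sgX_mem _ (e t) _ ?_, sgY_mem _ (e t) _ ?_⟩
    · have h := add_mem (this 0) (hb 0)
      simpa using h
    · have h := add_mem (this 1) (hb 1)
      simpa using h
  rw [← he.ext_apply v i]
  have hi := he.le i
  rcases lt_trichotomy (e i) 0 with h0 | h0 | h0
  · have := (key (-1 - e i) (by omega)).1
    simpa using this
  · have := (key 1 (by omega)).2
    simpa [h0] using this
  · have := (key (1 - e i) (by omega)).2
    simpa using this

theorem gor (hk : 2 ≤ k) (he : Idx k e) (hx : RSP x) : Gor (gg x s k e) (XX x s k e) where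
  g_mem i := by
    obtain ⟨b, hb, h⟩ := Gp_sqm (s := s) hk hx (e i)
    change Gp _ _ _ _ _ _ ∈ _
    rw [h]
    refine sum_mem fun j _ => ?_
    rw [mul_assoc]
    exact Ideal.mul_mem_mul (hx.x_mem _) (Ideal.mul_mem_left _ _ (hb j))
  X_mem v i := by
    rw [XX_row he, row]
    refine add_mem (add_mem ?_ ?_) ?_ <;> rw [smul_eq_mul] <;> apply Ideal.mul_mem_right <;>
      apply Ideal.mul_mem_left
    · exact Ideal.pow_mem_of_mem _ (hx.x_mem 0) _ (by omega)
    · exact Ideal.pow_mem_of_mem _ (hx.x_mem 1) _ (by omega)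
    · unfold zz
      split_ifs <;> exact Ideal.pow_mem_of_mem _ (hx.x_mem 2) _ (by omega)
  gX := gg_XX hk he
  Xg := XX_gg hk he
  e1 u h := gg_e1 hk he hx u h
  e2 v h := by
    obtain ⟨c, hc⟩ := Submodule.mem_span_singleton.1 (gg_e2 hk he hx v h)
    exact ⟨c, hc.symm⟩
  e3 := gg_e3 hk he hx
  P := gg_P hk he hx

variable (x s k e) in
def Xi (t : ι) : (ι → R) →ₗ[R] (Fin 3 → R) :=
  LinearMap.pi ![(sgX (e t) * x 0) • extL e (-1 - e t), (sgY (e t) * x 1) • extL e (1 - e t),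
    (sgZ (e t) * (if (e t).natAbs = k then x 2 ^ s else x 2)) • extL e (- e t)]

theorem Xi_0 (t : ι) (v) : Xi x s k e t v 0 = sgX (e t) * x 0 * ext e v (-1 - e t) := rfl
theorem Xi_1 (t : ι) (v) : Xi x s k e t v 1 = sgY (e t) * x 1 * ext e v (1 - e t) := rfl
theorem Xi_2 (t : ι) (v) : Xi x s k e t v 2 =
  sgZ (e t) * (if (e t).natAbs = k then x 2 ^ s else x 2) * ext e v (- e t) := rfl

theorem ext_mem (I : Ideal R) (v : ι → R) (h : ∀ i, v i ∈ I) (c : ℤ) : ext e v c ∈ I := by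
  unfold ext
  refine sum_mem fun i _ => ?_
  split_ifs
  · exact h i
  · exact zero_mem _

theorem exists_q (hk : 2 ≤ k) (he : Idx k e) (hx : RSP x) (t : ι) :
    ∃ q : Fin 3 → R, crossProduct x q = Xi x s k e t (gg x s k e) ∧
      ∀ j, q j ∈ maximalIdeal R * maximalIdeal R := by
  have hmm : ∀ (i j : Fin 3) (a : R), x i * x j * a ∈ maximalIdeal R * maximalIdeal R :=
    fun i j a => Ideal.mul_mem_right _ _ (Ideal.mul_mem_mul (hx.x_mem i) (hx.x_mem j))
  have h0 := Xi_0 (x := x) (s := s) (k := k) (e := e) t (gg x s k e)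
  have h1 := Xi_1 (x := x) (s := s) (k := k) (e := e) t (gg x s k e)
  have h2 := Xi_2 (x := x) (s := s) (k := k) (e := e) t (gg x s k e)
  rw [ext_gg he] at h0 h1 h2
  have hle := he.le t
  suffices h : ∃ q : Fin 3 → R, (x 1 * q 2 - x 2 * q 1 = Xi x s k e t (gg x s k e) 0 ∧
      x 2 * q 0 - x 0 * q 2 = Xi x s k e t (gg x s k e) 1 ∧
      x 0 * q 1 - x 1 * q 0 = Xi x s k e t (gg x s k e) 2) ∧
      ∀ j, q j ∈ maximalIdeal R * maximalIdeal R by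
    obtain ⟨q, ⟨h0, h1, h2⟩, h⟩ := h
    refine ⟨q, ?_, h⟩
    rw [cross_apply, h0, h1, h2]
    ext j; fin_cases j <;> rfl
  rw [h0, h1, h2]
  generalize e t = a at *
  clear h0 h1 h2
  rcases lt_trichotomy a 0 with h0 | h0 | h0
  · obtain ⟨n, rfl⟩ : ∃ n : ℕ, a = -((n + 1 : ℕ) : ℤ) := ⟨a.natAbs - 1, by omega⟩
    rw [show sgX (-((n + 1 : ℕ) : ℤ)) = (1 : R) from if_pos (by omega),
      show sgY (-((n + 1 : ℕ) : ℤ)) = (1 : R) from if_pos (by omega),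
      show sgZ (-((n + 1 : ℕ) : ℤ)) = (-1 : R) by
        unfold sgZ; rw [if_neg (by omega), if_pos (by omega)],
      show -1 - -((n + 1 : ℕ) : ℤ) = (n : ℤ) by omega,
      show 1 - -((n + 1 : ℕ) : ℤ) = ((n + 2 : ℕ) : ℤ) by omega, neg_neg]
    obtain ⟨d, rfl⟩ := Nat.exists_eq_add_of_le (show n + 1 ≤ k by omega)
    rw [Gp_pos]
    rcases d with _ | d
    · rw [Gp_zero _ _ _ _ _ ((n + 2 : ℕ) : ℤ) (by omega), if_pos (by omega)]
      have := Gp_pos (x 2 ^ (s + 1)) (x 2 ^ 2) (x 0 ^ 2) (x 1 ^ 2) n 1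
      simp only [add_zero] at *
      rw [this]
      refine ⟨![0, - (x 2 ^ s * x 0 ^ (2 * n + 1)), 0], ?_, ?_⟩
      · simp [Kp]; constructor <;> ring
      · obtain ⟨n, rfl⟩ := Nat.exists_eq_add_of_le' (show 1 ≤ n by omega)
        intro j
        fin_cases j
        · simp
        · simp only [Fin.mk_one, Matrix.cons_val, neg_mem_iff]
          convert hmm 0 0 (x 2 ^ s * x 0 ^ (2 * n + 1)) using 1; ring
        · simp
    · rw [if_neg (by omega)]
      have h1 := Gp_pos (x 2 ^ (s + 1)) (x 2 ^ 2) (x 0 ^ 2) (x 1 ^ 2) n (d + 2)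
      have h2 := Gp_pos (x 2 ^ (s + 1)) (x 2 ^ 2) (x 0 ^ 2) (x 1 ^ 2) (n + 2) d
      rw [show n + (d + 2) = n + 1 + (d + 1) by ring] at h1
      rw [show n + 2 + d = n + 1 + (d + 1) by ring] at h2
      rw [h1, h2, Kp]
      generalize Kp (x 2 ^ (s + 1)) (x 2 ^ 2) (x 0 ^ 2 * x 1 ^ 2) (d + 1) = K1
      generalize Kp (x 2 ^ (s + 1)) (x 2 ^ 2) (x 0 ^ 2 * x 1 ^ 2) d = K0
      refine ⟨![0, - (x 2 * x 0 ^ (2 * n + 1) * K1), - (x 1 * x 0 ^ (2 * n + 3) * K0)], ?_, ?_⟩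
      · simp; refine ⟨?_, ?_, ?_⟩ <;> ring
      · intro j
        fin_cases j
        · simp
        · simp only [Fin.mk_one, Matrix.cons_val, neg_mem_iff]
          convert hmm 0 2 (x 0 ^ (2 * n) * K1) using 1; ring
        · simp only [Fin.reduceFinMk, Matrix.cons_val, neg_mem_iff]
          convert hmm 0 1 (x 0 ^ (2 * n + 2) * K0) using 1; ring
  · subst h0
    obtain ⟨d, rfl⟩ := Nat.exists_eq_add_of_le (show 1 ≤ k by omega)
    have h1 := Gp_pos (x 2 ^ (s + 1)) (x 2 ^ 2) (x 0 ^ 2) (x 1 ^ 2) 1 d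
    have h2 := Gp_neg (x 2 ^ (s + 1)) (x 2 ^ 2) (x 0 ^ 2) (x 1 ^ 2) 1 d
    rw [show sgX 0 = (-1 : R) from if_neg (by omega), show sgY 0 = (1 : R) from if_pos (by omega),
      show sgZ 0 = (0 : R) by simp [sgZ]]
    simp only [Nat.cast_one] at h1 h2
    simp only [sub_zero]
    rw [h1, h2]
    generalize Kp (x 2 ^ (s + 1)) (x 2 ^ 2) (x 0 ^ 2 * x 1 ^ 2) d = K0
    refine ⟨![0, 0, - (x 0 * x 1 * K0)], ?_, ?_⟩
    · simp; refine ⟨?_, ?_⟩ <;> ring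
    · intro j
      fin_cases j
      · simp
      · simp
      · simp only [Fin.reduceFinMk, Matrix.cons_val, neg_mem_iff]
        exact hmm 0 1 K0
  · obtain ⟨n, rfl⟩ : ∃ n : ℕ, a = ((n + 1 : ℕ) : ℤ) := ⟨a.natAbs - 1, by omega⟩
    rw [show sgX (((n + 1 : ℕ) : ℤ)) = (-1 : R) from if_neg (by omega),
      show sgY (((n + 1 : ℕ) : ℤ)) = (-1 : R) from if_neg (by omega),
      show sgZ (((n + 1 : ℕ) : ℤ)) = (1 : R) from if_pos (by omega),
      show 1 - ((n + 1 : ℕ) : ℤ) = -(n : ℤ) by omega,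
      show -1 - ((n + 1 : ℕ) : ℤ) = -((n + 2 : ℕ) : ℤ) by omega]
    obtain ⟨d, rfl⟩ := Nat.exists_eq_add_of_le (show n + 1 ≤ k by omega)
    rw [Gp_neg]
    rcases d with _ | d
    · rw [Gp_zero _ _ _ _ _ (-((n + 2 : ℕ) : ℤ)) (by omega), if_pos (by omega)]
      have := Gp_neg (x 2 ^ (s + 1)) (x 2 ^ 2) (x 0 ^ 2) (x 1 ^ 2) n 1
      simp only [add_zero] at *
      rw [this]
      refine ⟨![- (x 2 ^ s * x 1 ^ (2 * n + 1)), 0, 0], ?_, ?_⟩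
      · simp [Kp]; constructor <;> ring
      · obtain ⟨n, rfl⟩ := Nat.exists_eq_add_of_le' (show 1 ≤ n by omega)
        intro j
        fin_cases j
        · simp only [Fin.zero_eta, Matrix.cons_val, neg_mem_iff]
          convert hmm 1 1 (x 2 ^ s * x 1 ^ (2 * n + 1)) using 1; ring
        · simp
        · simp
    · rw [if_neg (by omega)]
      have h1 := Gp_neg (x 2 ^ (s + 1)) (x 2 ^ 2) (x 0 ^ 2) (x 1 ^ 2) n (d + 2)
      have h2 := Gp_neg (x 2 ^ (s + 1)) (x 2 ^ 2) (x 0 ^ 2) (x 1 ^ 2) (n + 2) d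
      rw [show n + (d + 2) = n + 1 + (d + 1) by ring] at h1
      rw [show n + 2 + d = n + 1 + (d + 1) by ring] at h2
      rw [h1, h2, Kp]
      generalize Kp (x 2 ^ (s + 1)) (x 2 ^ 2) (x 0 ^ 2 * x 1 ^ 2) (d + 1) = K1
      generalize Kp (x 2 ^ (s + 1)) (x 2 ^ 2) (x 0 ^ 2 * x 1 ^ 2) d = K0
      refine ⟨![- (x 2 * x 1 ^ (2 * n + 1) * K1), 0, - (x 0 * x 1 ^ (2 * n + 3) * K0)], ?_, ?_⟩
      · simp; refine ⟨?_, ?_, ?_⟩ <;> ring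
      · intro j
        fin_cases j
        · simp only [Fin.zero_eta, Matrix.cons_val, neg_mem_iff]
          convert hmm 1 2 (x 1 ^ (2 * n) * K1) using 1; ring
        · simp
        · simp only [Fin.reduceFinMk, Matrix.cons_val, neg_mem_iff]
          convert hmm 0 1 (x 1 ^ (2 * n + 2) * K0) using 1; ring

theorem triv (hk : 2 ≤ k) (he : Idx k e) (hx : RSP x) (t : ι) :
    ∃ q, Triv x (gg x s k e) (XX x s k e) t (Xi x s k e t) q := by
  obtain ⟨q, hq, hq'⟩ := exists_q (s := s) hk he hx t
  refine ⟨q, ?_, ?_, ?_, hq, hq'⟩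
  · intro v
    rw [XX_row he, row, Fin.sum_univ_three, Xi_0, Xi_1, Xi_2, zz]
    simp only [smul_eq_mul]
    split_ifs <;> ring
  · intro v
    rw [Xi_0, Xi_1]
    exact ⟨Ideal.mul_mem_right _ _ (Ideal.mul_mem_left _ _ (hx.x_mem 0)),
      Ideal.mul_mem_right _ _ (Ideal.mul_mem_left _ _ (hx.x_mem 1))⟩
  · intro v hv
    rw [Xi_0, Xi_1]
    exact ⟨Ideal.mul_mem_mul (Ideal.mul_mem_left _ _ (hx.x_mem 0)) (ext_mem _ v hv _),
      Ideal.mul_mem_mul (Ideal.mul_mem_left _ _ (hx.x_mem 1)) (ext_mem _ v hv _)⟩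

theorem Xi_2_mem (hx : RSP x) (t : ι) (h : 1 ≤ s ∨ (e t).natAbs ≠ k) (v) :
    Xi x s k e t v 2 ∈ maximalIdeal R := by
  rw [Xi_2]
  refine Ideal.mul_mem_right _ _ (Ideal.mul_mem_left _ _ ?_)
  split_ifs with h1
  · exact Ideal.pow_mem_of_mem _ (hx.x_mem 2) _ (by omega)
  · exact hx.x_mem 2

theorem Xi_2_eq (hk : 2 ≤ k) (he : Idx k e) (t b : ι) (ht : e t = k) (hb : e b = -k) (v) :
    Xi x 0 k e t v 2 = v b := by
  rw [Xi_2, ht, if_pos (by omega), ← hb, he.ext_apply, show sgZ (k : ℤ) = (1 : R) from if_pos (by omega)]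
  simp

end
end TrimG

set_option linter.unusedSectionVars false

namespace TrimG
section
variable {R : Type} [CommRing R]

theorem mem_smul_top {α : Type} [Fintype α] (I : Ideal R) (v : α → R) :
    v ∈ I • (⊤ : Submodule R (α → R)) ↔ ∀ i, v i ∈ I := by
  classical
  constructor
  · intro h i
    refine Submodule.smul_induction_on h ?_ ?_
    · intro r hr n _
      exact Ideal.mul_mem_right _ _ hr
    · intro u w hu hw
      exact add_mem hu hw
  · intro h
    have hu : v = ∑ i, v i • (Pi.single i 1 : α → R) := by
      ext j; simp [Finset.sum_apply, Pi.single_apply]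
    rw [hu]
    exact sum_mem fun i _ => Submodule.smul_mem_smul (h i) trivial

theorem exists_mult {m n2 n : ℕ} (d1 : (Fin m → R) →ₗ[R] R)
    (d2 : (Fin n2 → R) →ₗ[R] (Fin m → R)) (d3 : (Fin n → R) →ₗ[R] (Fin n2 → R))
    (h12 : LinearMap.ker d1 = LinearMap.range d2)
    (h23 : LinearMap.ker d2 = LinearMap.range d3) (h3 : LinearMap.ker d3 = ⊥) :
    ∃ (m11 : (Fin m → R) →ₗ[R] (Fin m → R) →ₗ[R] (Fin n2 → R))
      (m12 : (Fin m → R) →ₗ[R] (Fin n2 → R) →ₗ[R] (Fin n → R)),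
      (∀ a b, d2 (m11 a b) = d1 a • b - d1 b • a) ∧
      (∀ a, m11 a a = 0) ∧ (∀ a b, m11 a b = - m11 b a) ∧
      (∀ a z, d3 (m12 a z) = d1 a • z - m11 a (d2 z)) ∧
      (∀ a b c, m12 c (m11 a b) = m12 a (m11 b c)) := by
  have hL : ∀ p q : Fin m, ∃ l, d2 l = d1 (Pi.single p 1) • (Pi.single q 1 : Fin m → R)
      - d1 (Pi.single q 1) • Pi.single p 1 := by
    intro p q
    have : d1 (Pi.single p 1) • (Pi.single q 1 : Fin m → R)
      - d1 (Pi.single q 1) • Pi.single p 1 ∈ LinearMap.ker d1 := by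
      rw [LinearMap.mem_ker]; simp; ring
    rw [h12] at this
    exact this
  choose L hL using hL
  let B := Pi.basisFun R (Fin m)
  let S : (Fin m → R) →ₗ[R] (Fin m → R) →ₗ[R] (Fin n2 → R) :=
    B.constr R fun p => B.constr R fun q => if p < q then L p q else 0
  have hS : ∀ p q, S (Pi.single p 1) (Pi.single q 1) = if p < q then L p q else 0 := by
    intro p q
    have e1 : (Pi.single p 1 : Fin m → R) = B p := (Pi.basisFun_apply R (Fin m) p).symm
    have e2 : (Pi.single q 1 : Fin m → R) = B q := (Pi.basisFun_apply R (Fin m) q).symm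
    rw [e1, e2]
    simp only [S, Module.Basis.constr_basis]
  let m11 := S - S.flip
  have hm : ∀ a b, m11 a b = S a b - S b a := fun a b => rfl
  have h11 : ∀ a b, d2 (m11 a b) = d1 a • b - d1 b • a := by
    let T1 : (Fin m → R) →ₗ[R] (Fin m → R) →ₗ[R] (Fin m → R) := m11.compr₂ d2
    let T2 : (Fin m → R) →ₗ[R] (Fin m → R) →ₗ[R] (Fin m → R) :=
      (LinearMap.lsmul R (Fin m → R)).comp d1 - ((LinearMap.lsmul R (Fin m → R)).comp d1).flip
    have : T1 = T2 := by
      refine LinearMap.ext_basis B B ?_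
      intro p q
      have e1 : (Pi.single p 1 : Fin m → R) = B p := (Pi.basisFun_apply R (Fin m) p).symm
      have e2 : (Pi.single q 1 : Fin m → R) = B q := (Pi.basisFun_apply R (Fin m) q).symm
      rw [← e1, ← e2]
      change d2 (m11 _ _) = d1 (Pi.single p 1) • (Pi.single q 1 : Fin m → R)
        - d1 (Pi.single q 1) • Pi.single p 1
      rw [hm, hS, hS]
      rcases lt_trichotomy p q with h | h | h
      · rw [if_pos h, if_neg h.not_gt, sub_zero, hL]
      · subst h; simp
      · rw [if_pos h, if_neg h.not_gt, zero_sub, map_neg, hL]; abel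
    intro a b
    exact LinearMap.congr_fun (LinearMap.congr_fun this a) b
  have hd12 : ∀ z, d1 (d2 z) = 0 := by
    intro z
    have : d2 z ∈ LinearMap.ker d1 := by rw [h12]; exact ⟨z, rfl⟩
    exact this
  have h12' : ∀ a z, ∃ w, d3 w = d1 a • z - m11 a (d2 z) := by
    intro a z
    have : d1 a • z - m11 a (d2 z) ∈ LinearMap.ker d2 := by
      rw [LinearMap.mem_ker, map_sub, h11, hd12]; simp
    rw [h23] at this
    exact this
  choose f hf using h12'
  have inj := LinearMap.ker_eq_bot.1 h3
  let m12 : (Fin m → R) →ₗ[R] (Fin n2 → R) →ₗ[R] (Fin n → R) := LinearMap.mk₂ R f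
    (by intro a a' z; apply inj; simp only [map_add, hf, LinearMap.add_apply]; module)
    (by intro r a z; apply inj; simp only [map_smul, hf, LinearMap.smul_apply, smul_eq_mul]; module)
    (by intro a z z'; apply inj; simp only [map_add, hf]; module)
    (by intro r a z; apply inj; simp only [map_smul, hf]; module)
  have hm12 : ∀ a z, d3 (m12 a z) = d1 a • z - m11 a (d2 z) := hf
  have hsk : ∀ a b, m11 a b = - m11 b a := by intro a b; rw [hm, hm]; abel
  refine ⟨m11, m12, h11, ?_, hsk, hm12, ?_⟩
  · intro a; rw [hm]; abel
  · intro a b c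
    apply inj
    rw [hm12, hm12, h11, h11]
    simp only [map_sub, map_smul]
    rw [hsk c b, hsk a c]
    module

end
end TrimG

set_option linter.unusedSectionVars false

namespace TrimG
section
variable {R : Type} [CommRing R] [IsLocalRing R] {ι : Type} [Fintype ι]
variable {g : ι → R} {X : (ι → R) →ₗ[R] (ι → R)}

theorem Gor.inj (G : Gor g X) {c d : R} (h : c • g = d • g) : c = d := by
  have := G.e3 (c - d) (by rw [sub_smul, h, sub_self])
  exact sub_eq_zero.1 this

theorem Gor.pairing (G : Gor g X) (α : ι → R) :
    ∃ (ψ : (ι → R) →ₗ[R] (ι → R)) (c : (ι → R) →ₗ[R] R),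
      (∀ β, X (ψ β) = (∑ i, g i * α i) • β - (∑ i, g i * β i) • α) ∧
      (∀ z, (∑ i, g i * α i) • z - ψ (X z) = c z • g) ∧
      (∀ z, c z - ∑ i, α i * z i ∈ maximalIdeal R) := by
  classical
  have hdec : ∀ z : ι → R, z = ∑ i, z i • (Pi.single i 1 : ι → R) := by
    intro z; ext j; simp [Finset.sum_apply, Pi.single_apply]
  have hL : ∀ p : ι, ∃ l, X l = (∑ i, g i * α i) • (Pi.single p 1 : ι → R) - g p • α := by
    intro p
    apply G.e1
    simp [mul_sub, Pi.single_apply, Finset.mul_sum, Finset.sum_sub_distrib]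
    rw [← Finset.sum_sub_distrib]
    apply Finset.sum_eq_zero; intro i _; ring
  choose L hL using hL
  let ψ : (ι → R) →ₗ[R] (ι → R) := (Pi.basisFun R ι).constr R L
  have hψ : ∀ β, ψ β = ∑ p, β p • L p := by
    intro β
    simp [ψ, Module.Basis.constr_apply_fintype]
  have h1 : ∀ β, X (ψ β) = (∑ i, g i * α i) • β - (∑ i, g i * β i) • α := by
    intro β
    rw [hψ, map_sum]
    simp only [map_smul, hL, smul_sub, Finset.sum_sub_distrib]
    congr 1
    · conv_rhs => rw [hdec β, Finset.smul_sum]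
      exact Finset.sum_congr rfl fun i _ => smul_comm _ _ _
    · rw [Finset.sum_smul]
      exact Finset.sum_congr rfl fun i _ => by rw [smul_smul, mul_comm]
  have h2 : ∀ z, ∃ c : R, (∑ i, g i * α i) • z - ψ (X z) = c • g := by
    intro z
    apply G.e2
    rw [map_sub, h1, G.gX, map_smul]
    simp
  choose c hc using h2
  let c' : (ι → R) →ₗ[R] R :=
    { toFun := c
      map_add' := by
        intro u v; apply G.inj; rw [add_smul, ← hc, ← hc, ← hc, map_add, map_add]; module
      map_smul' := by
        intro r v
        apply G.inj; rw [RingHom.id_apply, smul_eq_mul, mul_smul, ← hc, ← hc, map_smul, map_smul]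
        module }
  have hc' : ∀ z, (∑ i, g i * α i) • z - ψ (X z) = c' z • g := hc
  refine ⟨ψ, c', h1, hc', ?_⟩
  have hcg : c' g = ∑ i, g i * α i := by
    apply G.inj
    rw [← hc', G.Xg, map_zero, sub_zero]
  have hsum : ∀ z, c' z = ∑ i, z i * c' (Pi.single i 1) := by
    intro z
    conv_lhs => rw [hdec z, map_sum]
    simp only [map_smul, smul_eq_mul]
  obtain ⟨v, hv⟩ := G.e1 (fun i => c' (Pi.single i 1) - α i) (by
    simp only [mul_sub, Finset.sum_sub_distrib]
    rw [← hsum, hcg, sub_self])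
  intro z
  rw [hsum, ← Finset.sum_sub_distrib]
  refine sum_mem fun i _ => ?_
  rw [mul_comm (α i), ← mul_sub]
  apply Ideal.mul_mem_left
  have := congrFun hv i
  rw [← this]
  exact G.X_mem _ _

variable {F1 F2 F3 : Type} [AddCommGroup F1] [Module R F1] [AddCommGroup F2] [Module R F2]
  [AddCommGroup F3] [Module R F3] {T : Type} {x : Fin 3 → R}

theorem core (hx : RSP x) (G : Gor g X) (b : T → ι) (Ξ : T → (ι → R) →ₗ[R] (Fin 3 → R))
    (q : T → Fin 3 → R) (hT : ∀ t, Triv x g X (b t) (Ξ t) (q t))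
    (d1 : F1 →ₗ[R] R) (d2 : F2 →ₗ[R] F1) (d3 : F3 →ₗ[R] F2)
    (m11 : F1 →ₗ[R] F1 →ₗ[R] F2) (m12 : F1 →ₗ[R] F2 →ₗ[R] F3)
    (h11 : ∀ a b, d2 (m11 a b) = d1 a • b - d1 b • a)
    (h12 : ∀ a z, d3 (m12 a z) = d1 a • z - m11 a (d2 z))
    (hd2 : ∀ z, d2 z ∈ maximalIdeal R • (⊤ : Submodule R F1))
    (π1 : F1 →ₗ[R] (ι → R)) (π2 : F2 →ₗ[R] (ι → R)) (π3 : F3 →ₗ[R] R)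
    (κ : F1 →ₗ[R] (T → Fin 3 → R)) (M : F2 →ₗ[R] (T → Fin 3 → R)) (lam : F3 →ₗ[R] (T → R))
    (c1 : ∀ u, d1 u = ∑ i, g i * π1 u i) (c2 : ∀ z, π1 (d2 z) = X (π2 z))
    (c3 : ∀ w, π2 (d3 w) = π3 w • g)
    (k2 : ∀ z t, κ (d2 z) t = Ξ t (π2 z) + crossProduct x (M z t))
    (k3 : ∀ w t, M (d3 w) t = lam w t • x - π3 w • q t) :
    (∀ a b, (∀ i, π2 (m11 a b) i ∈ maximalIdeal R) ∧ ∀ t j, M (m11 a b) t j ∈ maximalIdeal R) ∧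
    (∀ a z, π3 (m12 a z) - ∑ i, π1 a i * π2 z i ∈ maximalIdeal R ∧
      ∀ t, lam (m12 a z) t ∈ maximalIdeal R) := by
  have hd1 : ∀ u, d1 u ∈ maximalIdeal R * maximalIdeal R := by
    intro u
    rw [c1]
    exact sum_mem fun i _ => Ideal.mul_mem_right _ _ (G.g_mem i)
  have hd1g : ∀ u, d1 u ∈ Ideal.span (Set.range g) := by
    intro u
    rw [c1]
    exact sum_mem fun i _ => Ideal.mul_mem_right _ _ (Ideal.subset_span ⟨i, rfl⟩)
  have V1 : ∀ a b, (∀ i, π2 (m11 a b) i ∈ maximalIdeal R) ∧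
      ∀ t j, M (m11 a b) t j ∈ maximalIdeal R := by
    intro a b
    have hp : ∀ i, π2 (m11 a b) i ∈ maximalIdeal R := by
      apply G.P
      intro i
      rw [← c2, h11, map_sub, map_smul, map_smul]
      exact sub_mem (Ideal.mul_mem_right _ _ (hd1g a)) (Ideal.mul_mem_right _ _ (hd1g b))
    refine ⟨hp, fun t => ?_⟩
    obtain ⟨hm0, hm1⟩ := (hT t).mem2 _ hp
    have hk := k2 (m11 a b) t
    rw [h11] at hk
    have hk' : ∀ j, κ (d1 a • b - d1 b • a) t j ∈ maximalIdeal R * maximalIdeal R := by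
      intro j
      rw [map_sub, map_smul, map_smul]
      exact sub_mem (Ideal.mul_mem_right _ _ (hd1 a)) (Ideal.mul_mem_right _ _ (hd1 b))
    generalize M (m11 a b) t = μ at *
    have e0 : x 1 * μ 2 - x 2 * μ 1 ∈ maximalIdeal R * maximalIdeal R := by
      have := sub_mem (hk' 0) hm0
      rw [hk, cross_apply] at this
      simpa using this
    have e1 : x 2 * μ 0 - x 0 * μ 2 ∈ maximalIdeal R * maximalIdeal R := by
      have := sub_mem (hk' 1) hm1
      rw [hk, cross_apply] at this
      simpa using this
    have f0 := hx.indep ![0, μ 2, -μ 1] (by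
      rw [Fin.sum_univ_three]
      convert e0 using 1
      simp; ring)
    have f1 := hx.indep ![-μ 2, 0, μ 0] (by
      rw [Fin.sum_univ_three]
      convert e1 using 1
      simp; ring)
    intro j
    fin_cases j
    · simpa using f1 2
    · simpa using f0 2
    · simpa using f0 1
  refine ⟨V1, ?_⟩
  intro a z
  constructor
  · obtain ⟨ψ, c, hψ, hc, hcm⟩ := G.pairing (π1 a)
    rw [← c1] at hc
    have hφ : ∀ y ∈ maximalIdeal R • (⊤ : Submodule R F1), ∃ d ∈ maximalIdeal R,
        ψ (π1 y) - π2 (m11 a y) = d • g := by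
      intro y hy
      refine Submodule.smul_induction_on hy ?_ ?_
      · intro r hr n _
        obtain ⟨d, hd⟩ := G.e2 (ψ (π1 n) - π2 (m11 a n)) (by
          rw [map_sub, hψ, ← c2, h11, ← c1, ← c1, map_sub, map_smul, map_smul]
          simp)
        refine ⟨r * d, Ideal.mul_mem_right _ _ hr, ?_⟩
        simp only [map_smul]
        rw [← smul_sub, hd, smul_smul]
      · rintro y y' ⟨d, hd, h⟩ ⟨d', hd', h'⟩
        refine ⟨d + d', add_mem hd hd', ?_⟩
        rw [add_smul, ← h, ← h']
        simp only [map_add]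
        abel
    obtain ⟨d, hd, h⟩ := hφ _ (hd2 z)
    have e1 : π3 (m12 a z) = c (π2 z) + d := by
      apply G.inj
      rw [← c3, h12, add_smul, ← hc, ← h, c2, map_sub, map_smul]
      abel
    rw [e1]
    have := add_mem (hcm (π2 z)) hd
    convert this using 1; ring
  · intro t
    have hM : ∀ y ∈ maximalIdeal R • (⊤ : Submodule R F1), ∀ j,
        M (m11 a y) t j ∈ maximalIdeal R * maximalIdeal R := by
      intro y hy
      refine Submodule.smul_induction_on hy ?_ ?_
      · intro r hr n _ j
        simp only [map_smul]
        exact Ideal.mul_mem_mul hr ((V1 a n).2 t j)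
      · intro y y' h h' j
        simp only [map_add]
        exact add_mem (h j) (h' j)
    have h := k3 (m12 a z) t
    rw [h12, map_sub, map_smul] at h
    have h0 := congrFun h 0
    simp only [Pi.sub_apply, Pi.smul_apply, smul_eq_mul] at h0
    have := hx.indep ![lam (m12 a z) t, 0, 0] (by
      rw [Fin.sum_univ_three]
      have e : lam (m12 a z) t * x 0 ∈ maximalIdeal R * maximalIdeal R := by
        have : lam (m12 a z) t * x 0 = d1 a * M z t 0 - M (m11 a (d2 z)) t 0
          + π3 (m12 a z) * q t 0 := by rw [h0]; ring
        rw [this]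
        exact add_mem (sub_mem (Ideal.mul_mem_right _ _ (hd1 a)) (hM _ (hd2 z) 0))
          (Ideal.mul_mem_left _ _ ((hT t).q_mem 0))
      simpa [mul_comm] using e) 0
    simpa using this

end
end TrimG

set_option linter.unusedSectionVars false

namespace TrimG
section
variable {R : Type} [CommRing R] {ρ σ τ : Type} [Fintype ρ] [Fintype σ] [Fintype τ]

abbrev I0 (ρ σ τ : Type) : Type := (ρ ⊕ σ) ⊕ (σ ⊕ τ)
abbrev I1 (ρ σ τ : Type) : Type := ρ ⊕ (σ ⊕ ((σ × Fin 2) ⊕ (τ × Fin 3)))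
abbrev I2 (ρ σ τ : Type) : Type := ρ ⊕ ((σ ⊕ τ) ⊕ ((σ ⊕ τ) × Fin 3))
abbrev I3 (σ τ : Type) : Type := Fin 1 ⊕ (σ ⊕ τ)

def kap : (I1 ρ σ τ → R) →ₗ[R] (σ ⊕ τ → Fin 3 → R) :=
  LinearMap.pi (Sum.elim
    (fun s => LinearMap.pi ![LinearMap.proj (Sum.inr (Sum.inr (Sum.inl (s, 0)))),
      LinearMap.proj (Sum.inr (Sum.inr (Sum.inl (s, 1)))), 0])
    (fun t => LinearMap.pi fun j => LinearMap.proj (Sum.inr (Sum.inr (Sum.inr (t, j))))))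

def pi1 (x : Fin 3 → R) : (I1 ρ σ τ → R) →ₗ[R] (I0 ρ σ τ → R) :=
  LinearMap.pi (Sum.elim
    (Sum.elim (fun p => LinearMap.proj (Sum.inl p)) (fun s => LinearMap.proj (Sum.inr (Sum.inl s))))
    (fun t => ∑ j, x j • (LinearMap.proj j ∘ₗ LinearMap.proj t ∘ₗ kap)))

def dd1 (x : Fin 3 → R) (g : I0 ρ σ τ → R) : (I1 ρ σ τ → R) →ₗ[R] R :=
  (∑ i, g i • LinearMap.proj i) ∘ₗ pi1 x

def MM : (I2 ρ σ τ → R) →ₗ[R] (σ ⊕ τ → Fin 3 → R) :=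
  LinearMap.pi fun t => LinearMap.pi fun j => LinearMap.proj (Sum.inr (Sum.inr (t, j)))

def pi2 (x : Fin 3 → R) : (I2 ρ σ τ → R) →ₗ[R] (I0 ρ σ τ → R) :=
  LinearMap.pi (Sum.elim
    (Sum.elim (fun p => LinearMap.proj (Sum.inl p))
      (fun s => - (LinearMap.proj 2 ∘ₗ crossProduct x ∘ₗ LinearMap.proj (Sum.inl s) ∘ₗ MM)))
    (fun t => LinearMap.proj (Sum.inr (Sum.inl t))))

def KK (x : Fin 3 → R) (Ξ : σ ⊕ τ → (I0 ρ σ τ → R) →ₗ[R] (Fin 3 → R)) (t : σ ⊕ τ) :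
    (I2 ρ σ τ → R) →ₗ[R] (Fin 3 → R) :=
  Ξ t ∘ₗ pi2 x + crossProduct x ∘ₗ LinearMap.proj t ∘ₗ MM

def dd2 (x : Fin 3 → R) (X : (I0 ρ σ τ → R) →ₗ[R] (I0 ρ σ τ → R))
    (Ξ : σ ⊕ τ → (I0 ρ σ τ → R) →ₗ[R] (Fin 3 → R)) : (I2 ρ σ τ → R) →ₗ[R] (I1 ρ σ τ → R) :=
  LinearMap.pi (Sum.elim (fun p => LinearMap.proj (Sum.inl (Sum.inl p)) ∘ₗ X ∘ₗ pi2 x)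
    (Sum.elim (fun s => LinearMap.proj (Sum.inl (Sum.inr s)) ∘ₗ X ∘ₗ pi2 x)
      (Sum.elim (fun sj => LinearMap.proj sj.2.castSucc ∘ₗ KK x Ξ (Sum.inl sj.1))
        (fun tj => LinearMap.proj tj.2 ∘ₗ KK x Ξ (Sum.inr tj.1)))))

def pi3 : (I3 σ τ → R) →ₗ[R] R := LinearMap.proj (Sum.inl 0)

def lam3 : (I3 σ τ → R) →ₗ[R] (σ ⊕ τ → R) := LinearMap.pi fun t => LinearMap.proj (Sum.inr t)

def dd3 (x : Fin 3 → R) (g : I0 ρ σ τ → R) (q : σ ⊕ τ → Fin 3 → R) :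
    (I3 σ τ → R) →ₗ[R] (I2 ρ σ τ → R) :=
  LinearMap.pi (Sum.elim (fun p => g (Sum.inl (Sum.inl p)) • pi3)
    (Sum.elim (fun t => g (Sum.inr t) • pi3)
      (fun tj => x tj.2 • LinearMap.proj (Sum.inr tj.1) - q tj.1 tj.2 • pi3)))

section
variable (x : Fin 3 → R) (g : I0 ρ σ τ → R) (X : (I0 ρ σ τ → R) →ₗ[R] (I0 ρ σ τ → R))
    (Ξ : σ ⊕ τ → (I0 ρ σ τ → R) →ₗ[R] (Fin 3 → R)) (q : σ ⊕ τ → Fin 3 → R)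
    (u : I1 ρ σ τ → R) (z : I2 ρ σ τ → R) (w : I3 σ τ → R)

theorem kap_inl (s : σ) : kap u (Sum.inl s) =
    ![u (Sum.inr (Sum.inr (Sum.inl (s, 0)))), u (Sum.inr (Sum.inr (Sum.inl (s, 1)))), 0] := by
  ext j; fin_cases j <;> rfl
theorem kap_inr (t : τ) (j) : kap u (Sum.inr t) j = u (Sum.inr (Sum.inr (Sum.inr (t, j)))) := rfl
theorem pi1_ρ (p : ρ) : pi1 x u (Sum.inl (Sum.inl p)) = u (Sum.inl p) := rfl
theorem pi1_σ (s : σ) : pi1 x u (Sum.inl (Sum.inr s)) = u (Sum.inr (Sum.inl s)) := rfl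
theorem pi1_T (t : σ ⊕ τ) : pi1 x u (Sum.inr t) = ∑ j, x j * kap u t j := by
  simp [pi1]
theorem dd1_apply : dd1 x g u = ∑ i, g i * pi1 x u i := by
  simp only [dd1, LinearMap.comp_apply, LinearMap.sum_apply, LinearMap.smul_apply,
    LinearMap.proj_apply, smul_eq_mul]
theorem MM_apply (t : σ ⊕ τ) (j) : MM z t j = z (Sum.inr (Sum.inr (t, j))) := rfl
theorem pi2_ρ (p : ρ) : pi2 x z (Sum.inl (Sum.inl p)) = z (Sum.inl p) := rfl
theorem pi2_σ (s : σ) : pi2 x z (Sum.inl (Sum.inr s)) = - crossProduct x (MM z (Sum.inl s)) 2 := rfl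
theorem pi2_T (t : σ ⊕ τ) : pi2 x z (Sum.inr t) = z (Sum.inr (Sum.inl t)) := rfl
theorem KK_apply (t : σ ⊕ τ) : KK x Ξ t z = Ξ t (pi2 x z) + crossProduct x (MM z t) := rfl
theorem dd2_ρ (p : ρ) : dd2 x X Ξ z (Sum.inl p) = X (pi2 x z) (Sum.inl (Sum.inl p)) := rfl
theorem dd2_σ (s : σ) : dd2 x X Ξ z (Sum.inr (Sum.inl s)) = X (pi2 x z) (Sum.inl (Sum.inr s)) := rfl
theorem dd2_K (s : σ) (j) : dd2 x X Ξ z (Sum.inr (Sum.inr (Sum.inl (s, j)))) =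
  KK x Ξ (Sum.inl s) z j.castSucc := rfl
theorem dd2_K' (t : τ) (j) : dd2 x X Ξ z (Sum.inr (Sum.inr (Sum.inr (t, j)))) =
  KK x Ξ (Sum.inr t) z j := rfl
theorem pi3_apply : pi3 w = w (Sum.inl 0) := rfl
theorem lam3_apply (t : σ ⊕ τ) : lam3 w t = w (Sum.inr t) := rfl
theorem dd3_ρ (p : ρ) : dd3 x g q w (Sum.inl p) = g (Sum.inl (Sum.inl p)) * pi3 w := rfl
theorem dd3_T (t : σ ⊕ τ) : dd3 x g q w (Sum.inr (Sum.inl t)) = g (Sum.inr t) * pi3 w := rfl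
theorem dd3_M (t : σ ⊕ τ) (j) : dd3 x g q w (Sum.inr (Sum.inr (t, j))) =
  x j * lam3 w t - q t j * pi3 w := rfl

theorem dot_cross (μ : Fin 3 → R) : ∑ j, x j * crossProduct x μ j = 0 := by
  rw [Fin.sum_univ_three, cross_apply]; simp; ring
end

variable [IsLocalRing R]
variable {x : Fin 3 → R} {g : I0 ρ σ τ → R} {X : (I0 ρ σ τ → R) →ₗ[R] (I0 ρ σ τ → R)}
    {Ξ : σ ⊕ τ → (I0 ρ σ τ → R) →ₗ[R] (Fin 3 → R)} {q : σ ⊕ τ → Fin 3 → R}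

theorem tk2 (hσ : ∀ s v, Ξ (Sum.inl s) v 2 = v (Sum.inl (Sum.inr s)))
    (z : I2 ρ σ τ → R) (t : σ ⊕ τ) : kap (dd2 x X Ξ z) t = KK x Ξ t z := by
  rcases t with s | t
  · rw [kap_inl]
    ext j
    fin_cases j
    · rfl
    · rfl
    · simp [KK_apply, hσ, pi2_σ]
  · rfl

theorem tc2 (hT : ∀ t, Triv x g X (Sum.inr t) (Ξ t) (q t))
    (hσ : ∀ s v, Ξ (Sum.inl s) v 2 = v (Sum.inl (Sum.inr s)))
    (z : I2 ρ σ τ → R) : pi1 x (dd2 x X Ξ z) = X (pi2 x z) := by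
  ext i
  rcases i with (p | s) | t
  · rfl
  · rfl
  · rw [pi1_T, tk2 hσ, KK_apply, ← (hT t).sum]
    simp only [Pi.add_apply, mul_add, Finset.sum_add_distrib]
    rw [dot_cross, add_zero]

theorem tk3 (w : I3 σ τ → R) (t : σ ⊕ τ) :
    MM (dd3 x g q w) t = lam3 w t • x - pi3 w • q t := by
  ext j
  rw [MM_apply, dd3_M]
  simp [mul_comm]

theorem tc3 (hT : ∀ t, Triv x g X (Sum.inr t) (Ξ t) (q t))
    (hσ : ∀ s v, Ξ (Sum.inl s) v 2 = v (Sum.inl (Sum.inr s)))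
    (w : I3 σ τ → R) : pi2 x (dd3 x g q w) = pi3 w • g := by
  ext i
  rcases i with (p | s) | t
  · rw [pi2_ρ, dd3_ρ]; simp [mul_comm]
  · rw [pi2_σ, tk3, map_sub, map_smul, map_smul, cross_self, (hT _).cross]
    simp [hσ]
  · rw [pi2_T, dd3_T]; simp [mul_comm]

theorem texact1 (hx : RSP x) (G : Gor g X) (hT : ∀ t, Triv x g X (Sum.inr t) (Ξ t) (q t))
    (hσ : ∀ s v, Ξ (Sum.inl s) v 2 = v (Sum.inl (Sum.inr s))) (u : I1 ρ σ τ → R) :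
    dd1 x g u = 0 ↔ ∃ z, dd2 x X Ξ z = u := by
  constructor
  · intro h
    rw [dd1_apply] at h
    obtain ⟨v, hv⟩ := G.e1 _ h
    have hμ : ∀ t, ∃ μ, kap u t - Ξ t v = crossProduct x μ := by
      intro t
      apply hx.koszul1
      simp only [Pi.sub_apply, mul_sub, Finset.sum_sub_distrib]
      rw [(hT t).sum, hv, pi1_T, sub_self]
    choose μ hμ using hμ
    let z : I2 ρ σ τ → R := Sum.elim (fun p => v (Sum.inl (Sum.inl p)))
      (Sum.elim (fun t => v (Sum.inr t)) (fun tj => μ tj.1 tj.2))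
    have hM : ∀ t, MM z t = μ t := fun t => rfl
    have hz : pi2 x z = v := by
      ext i
      rcases i with (p | s) | t
      · rfl
      · rw [pi2_σ, hM, ← hμ, Pi.sub_apply, hσ, kap_inl]
        simp
      · rfl
    have hK : ∀ t, KK x Ξ t z = kap u t := by
      intro t
      rw [KK_apply, hz, hM, ← hμ]; abel
    refine ⟨z, ?_⟩
    ext i
    rcases i with p | s | ⟨s, j⟩ | ⟨t, j⟩
    · rw [dd2_ρ, hz, hv, pi1_ρ]
    · rw [dd2_σ, hz, hv, pi1_σ]
    · rw [dd2_K, hK, kap_inl]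
      fin_cases j <;> rfl
    · rw [dd2_K', hK, kap_inr]
  · rintro ⟨z, rfl⟩
    rw [dd1_apply, tc2 hT hσ]
    exact G.gX _

theorem texact2 (hx : RSP x) (G : Gor g X) (hT : ∀ t, Triv x g X (Sum.inr t) (Ξ t) (q t))
    (hσ : ∀ s v, Ξ (Sum.inl s) v 2 = v (Sum.inl (Sum.inr s))) (z : I2 ρ σ τ → R) :
    dd2 x X Ξ z = 0 ↔ ∃ w, dd3 x g q w = z := by
  constructor
  · intro h
    have h1 := tc2 (Ξ := Ξ) hT hσ z
    rw [h, map_zero] at h1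
    obtain ⟨c, hc⟩ := G.e2 _ h1.symm
    have hl : ∀ t, ∃ l : R, MM z t + c • q t = l • x := by
      intro t
      apply hx.koszul2
      have h2 := tk2 (x := x) (X := X) hσ z t
      rw [h, map_zero, KK_apply, hc, map_smul, ← (hT t).cross] at h2
      rw [map_add, map_smul, add_comm, ← h2]; rfl
    choose l hl using hl
    refine ⟨Sum.elim (fun _ => c) l, ?_⟩
    ext i
    rcases i with p | t | ⟨t, j⟩
    · have := congrFun hc (Sum.inl (Sum.inl p))
      rw [pi2_ρ] at this
      rw [dd3_ρ, this, mul_comm]; rfl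
    · have := congrFun hc (Sum.inr t)
      rw [pi2_T] at this
      rw [dd3_T, this, mul_comm]; rfl
    · have := congrFun (hl t) j
      simp only [Pi.add_apply, Pi.smul_apply, MM_apply, smul_eq_mul] at this
      rw [dd3_M]
      simp only [lam3_apply, pi3_apply, Sum.elim_inl, Sum.elim_inr]
      linear_combination -this
  · rintro ⟨w, rfl⟩
    have hX : X (pi2 x (dd3 x g q w)) = 0 := by
      rw [tc3 hT hσ, map_smul, G.Xg, smul_zero]
    have hK : ∀ t, KK x Ξ t (dd3 x g q w) = 0 := by
      intro t
      rw [KK_apply, tc3 hT hσ, tk3, map_sub, map_smul, map_smul, map_smul, cross_self, (hT t).cross]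
      simp
    ext i
    rcases i with p | s | ⟨s, j⟩ | ⟨t, j⟩
    · rw [dd2_ρ, hX]; rfl
    · rw [dd2_σ, hX]; rfl
    · rw [dd2_K, hK]; rfl
    · rw [dd2_K', hK]; rfl

theorem texact3 (hx : RSP x) (G : Gor g X) (hT : ∀ t, Triv x g X (Sum.inr t) (Ξ t) (q t))
    (hσ : ∀ s v, Ξ (Sum.inl s) v 2 = v (Sum.inl (Sum.inr s))) (w : I3 σ τ → R)
    (h : dd3 x g q w = 0) : w = 0 := by
  have h1 := tc3 (g := g) hT hσ w
  rw [h, map_zero] at h1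
  have h2 := G.e3 _ h1.symm
  ext i
  rcases i with i | t
  · rw [pi3_apply] at h2
    rw [Subsingleton.elim i 0]; exact h2
  · have h3 := congrFun h (Sum.inr (Sum.inr (t, 0)))
    rw [dd3_M, h2] at h3
    apply hx.r012.1
    simpa [lam3_apply] using h3

theorem tmin1 (G : Gor g X) (u : I1 ρ σ τ → R) : dd1 x g u ∈ maximalIdeal R := by
  rw [dd1_apply]
  exact sum_mem fun i _ => Ideal.mul_mem_right _ _ (Ideal.mul_le_right (G.g_mem i))

theorem cross_mem (hx : RSP x) (μ : Fin 3 → R) (j) : crossProduct x μ j ∈ maximalIdeal R := by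
  rw [cross_apply]
  fin_cases j <;> exact sub_mem (Ideal.mul_mem_right _ _ (hx.x_mem _))
    (Ideal.mul_mem_right _ _ (hx.x_mem _))

theorem tmin2 (hx : RSP x) (G : Gor g X) (hT : ∀ t, Triv x g X (Sum.inr t) (Ξ t) (q t))
    (hτ : ∀ t v, Ξ (Sum.inr t) v 2 ∈ maximalIdeal R) (z : I2 ρ σ τ → R) (i) :
    dd2 x X Ξ z i ∈ maximalIdeal R := by
  rcases i with p | s | ⟨s, j⟩ | ⟨t, j⟩
  · exact G.X_mem _ _
  · exact G.X_mem _ _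
  · rw [dd2_K, KK_apply]
    refine add_mem ?_ (cross_mem hx _ _)
    fin_cases j
    · exact ((hT _).mem _).1
    · exact ((hT _).mem _).2
  · rw [dd2_K', KK_apply]
    refine add_mem ?_ (cross_mem hx _ _)
    fin_cases j
    · exact ((hT _).mem _).1
    · exact ((hT _).mem _).2
    · exact hτ _ _

theorem tmin3 (hx : RSP x) (G : Gor g X) (hT : ∀ t, Triv x g X (Sum.inr t) (Ξ t) (q t))
    (w : I3 σ τ → R) (i) : dd3 x g q w i ∈ maximalIdeal R := by
  rcases i with p | t | ⟨t, j⟩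
  · exact Ideal.mul_mem_right _ _ (Ideal.mul_le_right (G.g_mem _))
  · exact Ideal.mul_mem_right _ _ (Ideal.mul_le_right (G.g_mem _))
  · rw [dd3_M]
    exact sub_mem (Ideal.mul_mem_right _ _ (hx.x_mem _))
      (Ideal.mul_mem_right _ _ (Ideal.mul_le_right ((hT t).q_mem j)))

theorem tpair (hx : RSP x) (u : I1 ρ σ τ → R) (z : I2 ρ σ τ → R) :
    ∑ i, pi1 x u i * pi2 x z i - ∑ p, u (Sum.inl p) * z (Sum.inl p) ∈ maximalIdeal R := by
  rw [Fintype.sum_sum_type, Fintype.sum_sum_type]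
  simp only [pi1_ρ, pi2_ρ]
  rw [add_assoc, add_sub_cancel_left]
  refine add_mem (sum_mem fun s _ => ?_) (sum_mem fun t _ => ?_)
  · rw [pi2_σ]
    exact Ideal.mul_mem_left _ _ (neg_mem (cross_mem hx _ _))
  · rw [pi1_T]
    exact Ideal.mul_mem_right _ _ (sum_mem fun j _ => Ideal.mul_mem_right _ _ (hx.x_mem j))

end
end TrimG

set_option linter.unusedSectionVars false

namespace TrimG
section
variable {R : Type} [CommRing R] [IsLocalRing R] {σ τ : Type} [Fintype σ] [Fintype τ] {r : ℕ}
variable {x : Fin 3 → R} {g : I0 (Fin r) σ τ → R}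
    {X : (I0 (Fin r) σ τ → R) →ₗ[R] (I0 (Fin r) σ τ → R)}
    {Ξ : σ ⊕ τ → (I0 (Fin r) σ τ → R) →ₗ[R] (Fin 3 → R)} {q : σ ⊕ τ → Fin 3 → R}

theorem final_of (hx : RSP x) (G : Gor g X) (hT : ∀ t, Triv x g X (Sum.inr t) (Ξ t) (q t))
    (hσ : ∀ s v, Ξ (Sum.inl s) v 2 = v (Sum.inl (Sum.inr s)))
    (hτ : ∀ t v, Ξ (Sum.inr t) v 2 ∈ maximalIdeal R)
    {m n2 n : ℕ} (ε1 : I1 (Fin r) σ τ ≃ Fin m) (ε2 : I2 (Fin r) σ τ ≃ Fin n2)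
    (ε3 : I3 σ τ ≃ Fin n) (hε1 : ∀ p, (ε1 (Sum.inl p) : ℕ) = p)
    (hε2 : ∀ p, (ε2 (Sum.inl p) : ℕ) = p) (hε3 : ∀ p, (ε3 (Sum.inl p) : ℕ) = p)
    (hn : 0 < n) (hrm : r ≤ m) (hrn : r ≤ n2) :
    ∃ J : Ideal R, HasTorClassGWithRanks R J m n r := by
  let E1 : (Fin m → R) ≃ₗ[R] (I1 (Fin r) σ τ → R) := LinearEquiv.funCongrLeft R R ε1
  let E2 : (Fin n2 → R) ≃ₗ[R] (I2 (Fin r) σ τ → R) := LinearEquiv.funCongrLeft R R ε2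
  let E3 : (Fin n → R) ≃ₗ[R] (I3 σ τ → R) := LinearEquiv.funCongrLeft R R ε3
  have hE1 : ∀ u i, E1 u i = u (ε1 i) := fun u i => rfl
  have hE2 : ∀ u i, E2 u i = u (ε2 i) := fun u i => rfl
  have hE3 : ∀ u i, E3 u i = u (ε3 i) := fun u i => rfl
  let d1 : (Fin m → R) →ₗ[R] R := dd1 x g ∘ₗ E1.toLinearMap
  let d2 : (Fin n2 → R) →ₗ[R] (Fin m → R) := E1.symm.toLinearMap ∘ₗ dd2 x X Ξ ∘ₗ E2.toLinearMap
  let d3 : (Fin n → R) →ₗ[R] (Fin n2 → R) := E2.symm.toLinearMap ∘ₗ dd3 x g q ∘ₗ E3.toLinearMap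
  have hd1 : ∀ u, d1 u = dd1 x g (E1 u) := fun u => rfl
  have hd2 : ∀ z, E1 (d2 z) = dd2 x X Ξ (E2 z) := fun z => E1.apply_symm_apply _
  have hd3 : ∀ z, E2 (d3 z) = dd3 x g q (E3 z) := fun z => E2.apply_symm_apply _
  have ex1 : LinearMap.ker d1 = LinearMap.range d2 := by
    ext u
    rw [LinearMap.mem_ker, hd1, texact1 hx G hT hσ, LinearMap.mem_range]
    constructor
    · rintro ⟨z, hz⟩
      refine ⟨E2.symm z, ?_⟩
      apply E1.injective
      rw [hd2, E2.apply_symm_apply, hz]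
    · rintro ⟨z, rfl⟩
      exact ⟨E2 z, (hd2 z).symm⟩
  have ex2 : LinearMap.ker d2 = LinearMap.range d3 := by
    ext u
    have : d2 u = 0 ↔ dd2 x X Ξ (E2 u) = 0 := by
      rw [← hd2, LinearEquiv.map_eq_zero_iff]
    rw [LinearMap.mem_ker, this, texact2 hx G hT hσ, LinearMap.mem_range]
    constructor
    · rintro ⟨z, hz⟩
      refine ⟨E3.symm z, ?_⟩
      apply E2.injective
      rw [hd3, E3.apply_symm_apply, hz]
    · rintro ⟨z, rfl⟩
      exact ⟨E3 z, (hd3 z).symm⟩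
  have ex3 : LinearMap.ker d3 = ⊥ := by
    rw [eq_bot_iff]
    intro w hw
    rw [LinearMap.mem_ker, ← LinearEquiv.map_eq_zero_iff E2, hd3] at hw
    have := texact3 hx G hT hσ _ hw
    rw [LinearEquiv.map_eq_zero_iff] at this
    exact this
  have mn1 : ∀ u, d1 u ∈ maximalIdeal R := fun u => tmin1 G _
  have mn2 : ∀ z, d2 z ∈ maximalIdeal R • (⊤ : Submodule R (Fin m → R)) := by
    intro z
    rw [mem_smul_top]
    intro i
    have := tmin2 hx G hT hτ (E2 z) (ε1.symm i)
    rw [← hd2, hE1, ε1.apply_symm_apply] at this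
    exact this
  have mn3 : ∀ z, d3 z ∈ maximalIdeal R • (⊤ : Submodule R (Fin n2 → R)) := by
    intro z
    rw [mem_smul_top]
    intro i
    have := tmin3 hx G hT (E3 z) (ε2.symm i)
    rw [← hd3, hE2, ε2.apply_symm_apply] at this
    exact this
  obtain ⟨m11, m12, h11, haa, hsk, h12, has⟩ := exists_mult d1 d2 d3 ex1 ex2 ex3
  obtain ⟨V1, V2⟩ := core hx G Sum.inr Ξ q hT d1 d2 d3 m11 m12 h11 h12 mn2
    (pi1 x ∘ₗ E1.toLinearMap) (pi2 x ∘ₗ E2.toLinearMap) (pi3 ∘ₗ E3.toLinearMap)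
    (kap ∘ₗ E1.toLinearMap) (MM ∘ₗ E2.toLinearMap) (lam3 ∘ₗ E3.toLinearMap)
    (fun u => dd1_apply x g (E1 u))
    (fun z => by
      change pi1 x (E1 (d2 z)) = X (pi2 x (E2 z))
      rw [hd2, tc2 hT hσ])
    (fun w => by
      change pi2 x (E2 (d3 w)) = pi3 (E3 w) • g
      rw [hd3, tc3 hT hσ])
    (fun z t => by
      change kap (E1 (d2 z)) t = KK x Ξ t (E2 z)
      rw [hd2, tk2 hσ])
    (fun w t => by
      change MM (E2 (d3 w)) t = lam3 (E3 w) t • x - pi3 (E3 w) • q t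
      rw [hd3, tk3])
  refine ⟨LinearMap.range d1, n2, hn, hrm, hrn, d1, d2, d3, m11, m12, rfl, ex1, ex2, ex3, mn1, mn2,
    mn3, h11, haa, hsk, h12, has, ?_, ?_⟩
  · intro a b
    rw [mem_smul_top]
    intro i
    obtain ⟨i, rfl⟩ := ε2.surjective i
    obtain ⟨w1, w2⟩ := V1 (Pi.single a 1) (Pi.single b 1)
    rcases i with p | t | ⟨t, j⟩
    · exact w1 (Sum.inl (Sum.inl p))
    · exact w1 (Sum.inr t)
    · exact w2 t j
  · intro a b
    rw [mem_smul_top]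
    intro i
    obtain ⟨i, rfl⟩ := ε3.surjective i
    obtain ⟨w1, w2⟩ := V2 (Pi.single a 1) (Pi.single b 1)
    rcases i with i | t
    · obtain rfl : i = 0 := Subsingleton.elim _ _
      have h1 := tpair hx (E1 (Pi.single a 1)) (E2 (Pi.single b 1))
      have h2 := add_mem w1 h1
      have h0 : (⟨0, hn⟩ : Fin n) = ε3 (Sum.inl 0) := Fin.ext (by rw [hε3]; rfl)
      have h3 : ∑ p, E1 (Pi.single a 1) (Sum.inl p) * E2 (Pi.single b 1) (Sum.inl p) =
          if (a : ℕ) = (b : ℕ) ∧ (a : ℕ) < r then 1 else 0 := by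
        simp only [hE1, hE2, Pi.single_apply]
        split_ifs with h
        · rw [Finset.sum_eq_single (⟨a, h.2⟩ : Fin r)]
          · rw [if_pos (Fin.ext (hε1 _)), if_pos (Fin.ext (by rw [hε2]; exact h.1)), one_mul]
          · intro p _ hp
            rw [if_neg, zero_mul]
            rintro rfl
            exact hp (Fin.ext (hε1 _).symm)
          · simp
        · apply Finset.sum_eq_zero
          intro p _
          by_cases ha : ε1 (Sum.inl p) = a
          · rw [if_neg (c := ε2 (Sum.inl p) = b), mul_zero]
            rintro rfl
            subst ha
            apply h
            rw [hε1, hε2]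
            exact ⟨rfl, p.2⟩
          · rw [if_neg ha, zero_mul]
      rw [h3] at h2
      rw [h0]
      convert h2 using 1
      change _ = m12 _ _ (ε3 (Sum.inl 0)) - _ + (_ - _)
      simp only [Pi.sub_apply]
      have h4 : (if (a : ℕ) = (b : ℕ) ∧ (a : ℕ) < r then
          (Pi.single (ε3 (Sum.inl 0)) 1 : Fin n → R) else 0) (ε3 (Sum.inl 0)) =
          if (a : ℕ) = (b : ℕ) ∧ (a : ℕ) < r then 1 else 0 := by
        split_ifs <;> simp
      rw [h4]
      simp only [LinearMap.comp_apply, LinearEquiv.coe_coe]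
      ring
    · have h1 := w2 t
      have hne : ε3 (Sum.inr t) ≠ ⟨0, hn⟩ := by
        intro h
        have h0 : (⟨0, hn⟩ : Fin n) = ε3 (Sum.inl 0) := Fin.ext (by rw [hε3]; rfl)
        rw [h0] at h
        simpa using ε3.injective h
      have h4 : (if (a : ℕ) = (b : ℕ) ∧ (a : ℕ) < r then
          (Pi.single (⟨0, hn⟩ : Fin n) 1 : Fin n → R) else 0) (ε3 (Sum.inr t)) = 0 := by
        split_ifs <;> simp [hne]
      rw [Pi.sub_apply, h4, sub_zero]
      exact h1

theorem exists_sum_equiv (r : ℕ) (β : Type) [Fintype β] (m : ℕ) (h : r + Fintype.card β = m) :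
    ∃ ε : Fin r ⊕ β ≃ Fin m, ∀ p, (ε (Sum.inl p) : ℕ) = p := by
  subst h
  refine ⟨(Equiv.sumCongr (Equiv.refl _) (Fintype.equivFin β)).trans finSumFinEquiv, ?_⟩
  intro p
  simp

theorem final_of' (hx : RSP x) (s k : ℕ) (hk : 2 ≤ k) (e : I0 (Fin r) σ τ → ℤ) (he : Idx k e)
    (h1 : ∀ a : σ, s = 0 ∧ e (Sum.inr (Sum.inl a)) = k ∧ e (Sum.inl (Sum.inr a)) = -k)
    (h2 : ∀ a : τ, 1 ≤ s ∨ (e (Sum.inr (Sum.inr a))).natAbs ≠ k) (m n : ℕ)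
    (hm : r + 3 * Fintype.card σ + 3 * Fintype.card τ = m)
    (hn : 1 + Fintype.card σ + Fintype.card τ = n) :
    ∃ J : Ideal R, HasTorClassGWithRanks R J m n r := by
  choose q hq using fun t : σ ⊕ τ => triv (s := s) hk he hx (Sum.inr t)
  obtain ⟨ε1, hε1⟩ := exists_sum_equiv r (σ ⊕ ((σ × Fin 2) ⊕ (τ × Fin 3))) m (by simp; omega)
  obtain ⟨ε2, hε2⟩ := exists_sum_equiv r ((σ ⊕ τ) ⊕ ((σ ⊕ τ) × Fin 3)) _ rfl
  obtain ⟨ε3, hε3⟩ := exists_sum_equiv 1 (σ ⊕ τ) n (by simp; omega)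
  refine final_of hx (gor hk he hx) hq ?_ ?_ ε1 ε2 ε3 hε1 hε2 hε3 (by omega) (by omega) (by omega)
  · intro a v
    obtain ⟨rfl, hp, hm⟩ := h1 a
    exact Xi_2_eq hk he _ _ hp hm v
  · intro a v
    exact Xi_2_mem hx _ (h2 a) v

end

/-- an arbitrary enumeration of the integers of absolute value at most `k` -/
theorem exists_idx (ι : Type) [Fintype ι] (k : ℕ) (h : Fintype.card ι = 2 * k + 1) :
    ∃ e : ι → ℤ, Idx k e := by
  let ε : ι ≃ Fin (2 * k + 1) := Fintype.equivFinOfCardEq h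
  refine ⟨fun i => (ε i : ℤ) - k, ?_, ?_, ?_⟩
  · intro i j hij
    simp only [sub_left_inj, Nat.cast_inj] at hij
    exact ε.injective (Fin.ext hij)
  · intro i
    have := (ε i).2
    omega
  · intro c hc
    refine ⟨ε.symm ⟨(c + k).toNat, by omega⟩, ?_⟩
    simp only [Equiv.apply_symm_apply]
    omega

theorem Idx.comp {ι : Type} [Fintype ι] {k : ℕ} {e : ι → ℤ} (he : Idx k e) (f : ι ≃ ι) :
    Idx k (e ∘ f) where
  inj := he.inj.comp f.injective
  le i := he.le _
  surj c hc := by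
    obtain ⟨i, hi⟩ := he.surj c hc
    exact ⟨f.symm i, by simp [hi]⟩

theorem exists_idx' (ι : Type) [Fintype ι] (k : ℕ) (hk : 1 ≤ k) (h : Fintype.card ι = 2 * k + 1)
    (a b : ι) (hab : a ≠ b) : ∃ e : ι → ℤ, Idx k e ∧ e a = k ∧ e b = -k := by
  classical
  obtain ⟨e, he⟩ := exists_idx ι k h
  obtain ⟨a', ha'⟩ := he.surj k (by omega)
  have he1 := he.comp (Equiv.swap a a')
  have h1 : (e ∘ Equiv.swap a a') a = k := by simp [ha']
  generalize e ∘ Equiv.swap a a' = f at *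
  obtain ⟨b', hb'⟩ := he1.surj (-k) (by omega)
  refine ⟨_, he1.comp (Equiv.swap b b'), ?_, ?_⟩
  · have : a ≠ b' := by
      rintro rfl
      omega
    simp [Equiv.swap_apply_of_ne_of_ne hab this, h1]
  · simp [hb']

end TrimG

theorem realizability_classG_case1
    {R : Type} [CommRing R] [IsNoetherianRing R] [IsLocalRing R]
    -- regular local of dimension 3
    (x : Fin 3 → R)
    (hreg : RingTheory.Sequence.IsRegular R [x 0, x 1, x 2])
    (hx : Ideal.span {x 0, x 1, x 2} = maximalIdeal R)
    (m n r : ℕ)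
    (harith : r + 3 * (n - 1) = m) (hr : 2 ≤ r) (hn : 2 ≤ n)
    (hm : 2 * n + 3 ≤ m) (hm7 : 7 ≤ 2 * n + 3) :
    ∃ J : Ideal R, HasTorClassGWithRanks R J m n r := by
  have H := TrimG.rsp_of x hreg hx
  rcases Nat.even_or_odd' (m - 2 * n) with ⟨c, hc | hc⟩
  · obtain ⟨e, he, h1, h2⟩ := TrimG.exists_idx' (TrimG.I0 (Fin r) (Fin 1) (Fin (n - 2))) (c + 1)
      (by omega) (by simp; omega) (Sum.inr (Sum.inl 0)) (Sum.inl (Sum.inr 0)) (by simp)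
    refine TrimG.final_of' H 0 (c + 1) (by omega) e he ?_ ?_ m n (by simp; omega) (by simp; omega)
    · intro a
      obtain rfl : a = 0 := Subsingleton.elim _ _
      exact ⟨rfl, h1, h2⟩
    · intro a
      right
      intro h
      rcases (show e (Sum.inr (Sum.inr a)) = ((c + 1 : ℕ) : ℤ) ∨
        e (Sum.inr (Sum.inr a)) = -((c + 1 : ℕ) : ℤ) by omega) with h' | h'
      · rw [← h1] at h'
        simpa using he.inj h'
      · rw [← h2] at h'
        simpa using he.inj h'
  · obtain ⟨e, he⟩ := TrimG.exists_idx (TrimG.I0 (Fin r) (Fin 0) (Fin (n - 1))) (c + 1)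
      (by simp; omega)
    exact TrimG.final_of' H 1 (c + 1) (by omega) e he (fun a => a.elim0) (fun a => Or.inl le_rfl)
      m n (by simp; omega) (by simp; omega)
end
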